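/- arXiv:math/0609513 — 2 statements merged into one kernel-verified Lean document; each statement's English description precedes it below -/
import Mathlib

section
/- Let N > 4 and 0 < m ≤ (N-4)/(N-2). Let u be a solution of the fast diffusion equation on ℝ^N × (0,T) whose initial value u₀ satisfies (C*T/(k₁+|x|²))^{1/(1-m)} ≤ u₀(x) ≤ (C*T/(k₂+|x|²))^{1/(1-m)} for all x ∈ ℝ^N, for some constants k₁ > k₂ > 0, and suppose that B_{k₁}(x,t) ≤ u(x,t) ≤ B_{k₂}(x,t) for all (x,t) ∈ ℝ^N × (0,T). Assume in addition that u₀ = B_{k₀}(·,0) + f for some k₀ > 0 and some f ∈ L¹(ℝ^N). Then the rescaled solution ũ(·,τ) converges, as τ → ∞, uniformly on ℝ^N, to the rescaled Barenblatt profile B̃_{k₀}. -/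
open MeasureTheory Real Filter Topology RealInnerProductSpace

noncomputable section

abbrev Euc (N : ℕ) := EuclideanSpace ℝ (Fin N)

/-- Laplacian: trace of the second derivative. -/
def lapl {N : ℕ} (f : Euc N → ℝ) (x : Euc N) : ℝ :=
  ∑ i : Fin N, iteratedFDeriv ℝ 2 f x ![EuclideanSpace.single i 1, EuclideanSpace.single i 1]

/-- The constant C* = 2m(N-2-mN)/(1-m). -/
def Cst (N : ℕ) (m : ℝ) : ℝ := 2 * m * ((N : ℝ) - 2 - m * N) / (1 - m)

/-- β = N/(N-2-Nm). -/
def betaC (N : ℕ) (m : ℝ) : ℝ := (N : ℝ) / ((N : ℝ) - 2 - N * m)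

/-- γ = -β/N. -/
def gammaC (N : ℕ) (m : ℝ) : ℝ := -betaC N m / N

/-- Barenblatt solution with extinction time T. -/
def Bb (N : ℕ) (m T k : ℝ) (x : Euc N) (t : ℝ) : ℝ :=
  (Cst N m * (T - t) / (k * (T - t) ^ (2 * gammaC N m) + ‖x‖ ^ 2)) ^ (1 / (1 - m))

/-- Rescaled Barenblatt profile. -/
def BbTil (N : ℕ) (m k : ℝ) (x : Euc N) : ℝ :=
  (Cst N m / (k + ‖x‖ ^ 2)) ^ (1 / (1 - m))

/-- u is a solution of the fast diffusion equation on ℝ^N × (0,T) with initial value u₀. -/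
def IsFDESol (N : ℕ) (m T : ℝ) (u : Euc N → ℝ → ℝ) (u₀ : Euc N → ℝ) : Prop :=
  (∀ x : Euc N, ∀ t ∈ Set.Ioo (0:ℝ) T, 0 < u x t) ∧
  ContDiffOn ℝ (⊤ : ℕ∞) (fun p : Euc N × ℝ => u p.1 p.2) (Set.univ ×ˢ Set.Ioo (0:ℝ) T) ∧
  ContinuousOn (fun p : Euc N × ℝ => u p.1 p.2) (Set.univ ×ˢ Set.Ico (0:ℝ) T) ∧
  (∀ x, u x 0 = u₀ x) ∧
  (∀ x : Euc N, ∀ t ∈ Set.Ioo (0:ℝ) T,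
    deriv (fun s => u x s) t = lapl (fun y => u y t ^ m) x)

/-- Rescaled solution ũ(x,τ) = (T-t)^(-β) u(x (T-t)^γ, t), τ = -log(T-t). -/
def rescaleSol (N : ℕ) (m T : ℝ) (u : Euc N → ℝ → ℝ) (x : Euc N) (τ : ℝ) : ℝ :=
  Real.exp (betaC N m * τ) * u (Real.exp (-gammaC N m * τ) • x) (T - Real.exp (-τ))

/-- f is radially symmetric. -/
def IsRadial {N : ℕ} (f : Euc N → ℝ) : Prop := ∀ x y : Euc N, ‖x‖ = ‖y‖ → f x = f y

/-!
Write `n = 1/(1-m)`, `b = -γ = 1/(N-2-Nm)`, `θ = (1-m)/2` and `s = T - t`.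

**Decay in `L¹`.** The difference `w = u - B_{k₀}` satisfies `∂ₜw = Δ(a w)` with
`a = bθ(κ s^{-2b} + |x|²)/s`, where `κ = κ(x,t)` lies between `min k₂ k₀` and `max k₁ k₀`
(`Trapped.diff_pow`). By Kato's inequality `‖w(t)‖₁` does not increase, but this alone gives no
decay. Decay comes from a weight. In the variables `G = log(M + |x|² s^{2b})` and
`S = 1 + log(s/s₁)` the function `S^{-α} exp(-G²/(BS))` is, for suitable `M`, `B`, `α > 0`, a
supersolution of the adjoint equation: `∂ₜψ + aΔψ ≤ 0`. The drift in `G` has the right sign exactly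
because `1/θ ≤ N - 2`, that is `m ≤ (N-4)/(N-2)` (`weight_main`, `wt_super`). Truncating the weight
at `G ≈ R` costs `O(1/R)`, so `∫|w|ψ` is nonincreasing in the limit `R → ∞`
(`kato_integral`, `kato_step`, `growth_of_touching`, `Trapped.decay_trunc`). The weight is bounded
below at time `T - s₁` (where `S = 1`) on balls of the self-similar size, and is at most
`(1 + log(T/s₁))^{-α}` at time `0`; hence the `L¹` norm of `w(T - s₁)` on such balls is at most
`C (1 + log(T/s₁))^{-α} ‖f‖₁` (`Trapped.decay`).

**From `L¹` to pointwise.** The self-similar scaling `scl` turns the limit `s → 0` into the limit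
`T → ∞` at the fixed remaining time `s = 1`. The difference between `u^m` at a point and its average
over a small ball is the time derivative of a weighted average of `u`, which is bounded; so it is
small at some time in any given time interval, provided the ball is small
(`mean_value`, `exists_time_mean`, `exists_time_close`). The monotonicity of `t^{-n} u(x,t)` in `t`,
proved by comparing `u` with its time dilations at a first contact (`Trapped.mono`), carries the
estimate over to the prescribed time when `T` is large. This gives uniform closeness on balls
(`close_on_ball`). Outside a large ball both functions lie below a small Barenblatt tail
(`BbTil_tail`), and `Trapped.tendsto` follows.
-/

/-! ### Partial derivatives and the Laplacian -/

/-- Standard basis vector. -/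
abbrev eb {N : ℕ} (i : Fin N) : Euc N := EuclideanSpace.single i (1 : ℝ)

/-- First partial derivative. -/
def pd {N : ℕ} (i : Fin N) (f : Euc N → ℝ) (x : Euc N) : ℝ := fderiv ℝ f x (eb i)

lemma pd_contDiff {N : ℕ} {n : ℕ∞} {f : Euc N → ℝ} (i : Fin N) (hf : ContDiff ℝ (n + 1) f) :
    ContDiff ℝ n (pd i f) :=
  (hf.fderiv_right le_rfl).clm_apply contDiff_const

lemma pd_contDiff1 {N : ℕ} {f : Euc N → ℝ} (i : Fin N) (hf : ContDiff ℝ 2 f) :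
    ContDiff ℝ 1 (pd i f) :=
  (hf.fderiv_right (m := 1) (by norm_num)).clm_apply contDiff_const

lemma pd_continuous {N : ℕ} {f : Euc N → ℝ} (i : Fin N) (hf : ContDiff ℝ 1 f) :
    Continuous (pd i f) :=
  (hf.continuous_fderiv (by norm_num)).clm_apply continuous_const

lemma lapl_eq {N : ℕ} {f : Euc N → ℝ} (hf : ContDiff ℝ 2 f) (x : Euc N) :
    lapl f x = ∑ i, pd i (pd i f) x := by
  unfold lapl
  refine Finset.sum_congr rfl fun i _ => ?_
  rw [iteratedFDeriv_two_apply]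
  have hd : DifferentiableAt ℝ (fderiv ℝ f) x :=
    ((hf.fderiv_right (m := 1) (by norm_num)).differentiable (by norm_num)) x
  unfold pd
  rw [fderiv_clm_apply hd (differentiableAt_const _)]
  simp

lemma lapl_continuous {N : ℕ} {f : Euc N → ℝ} (hf : ContDiff ℝ 2 f) : Continuous (lapl f) := by
  have : lapl f = fun x => ∑ i, pd i (pd i f) x := funext fun x => lapl_eq hf x
  rw [this]
  exact continuous_finsetSum _ fun i _ => pd_continuous i (pd_contDiff1 i hf)

lemma pd_comp_scalar {N : ℕ} (i : Fin N) {g : ℝ → ℝ} {f : Euc N → ℝ} {x : Euc N} {g' : ℝ}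
    (hg : HasDerivAt g g' (f x)) (hf : DifferentiableAt ℝ f x) :
    pd i (fun y => g (f y)) x = g' * pd i f x := by
  unfold pd
  have h := hg.comp_hasFDerivAt x hf.hasFDerivAt
  rw [show (fun y => g (f y)) = g ∘ f from rfl, h.fderiv]
  simp

lemma pd_mul {N : ℕ} (i : Fin N) {f g : Euc N → ℝ} {x : Euc N}
    (hf : DifferentiableAt ℝ f x) (hg : DifferentiableAt ℝ g x) :
    pd i (fun y => f y * g y) x = pd i f x * g x + f x * pd i g x := by
  unfold pd
  have h := (hf.hasFDerivAt.mul hg.hasFDerivAt)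
  rw [show (fun y => f y * g y) = f * g from rfl, h.fderiv]
  simp; ring

lemma pd_normsq {N : ℕ} (i : Fin N) (x : Euc N) : pd i (fun y => ‖y‖ ^ 2) x = 2 * x i := by
  unfold pd
  have h := (hasStrictFDerivAt_norm_sq x).hasFDerivAt
  rw [h.fderiv]
  simp [eb, EuclideanSpace.inner_single_right]

lemma normsq_diff {N : ℕ} (x : Euc N) : DifferentiableAt ℝ (fun y : Euc N => ‖y‖ ^ 2) x :=
  ((hasStrictFDerivAt_norm_sq x).hasFDerivAt).differentiableAt

lemma pd_coord {N : ℕ} (i : Fin N) (x : Euc N) : pd i (fun y => 2 * y i) x = 2 := by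
  unfold pd
  have h : HasFDerivAt (fun y : Euc N => 2 * y i)
      ((2 : ℝ) • (EuclideanSpace.proj i : Euc N →L[ℝ] ℝ)) x :=
    ((2 : ℝ) • (EuclideanSpace.proj i : Euc N →L[ℝ] ℝ)).hasFDerivAt
  rw [h.fderiv]
  simp [eb]

lemma coord_diff {N : ℕ} (i : Fin N) (x : Euc N) :
    DifferentiableAt ℝ (fun y : Euc N => 2 * y i) x :=
  (((2 : ℝ) • (EuclideanSpace.proj i : Euc N →L[ℝ] ℝ)).hasFDerivAt (x := x)).differentiableAt

/-- Laplacian of a radial function written as a function of `‖x‖²`. -/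
lemma lapl_radial {N : ℕ} {g g' g'' : ℝ → ℝ} (hg : ∀ ρ, 0 ≤ ρ → HasDerivAt g (g' ρ) ρ)
    (hg' : ∀ ρ, 0 ≤ ρ → HasDerivAt g' (g'' ρ) ρ)
    (hC : ContDiff ℝ 2 (fun x : Euc N => g (‖x‖ ^ 2))) (x : Euc N) :
    lapl (fun x : Euc N => g (‖x‖ ^ 2)) x
      = 2 * N * g' (‖x‖ ^ 2) + 4 * ‖x‖ ^ 2 * g'' (‖x‖ ^ 2) := by
  rw [lapl_eq hC]
  have h1 : ∀ i : Fin N, pd i (pd i (fun x : Euc N => g (‖x‖ ^ 2))) x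
      = 4 * g'' (‖x‖ ^ 2) * (x i) ^ 2 + 2 * g' (‖x‖ ^ 2) := by
    intro i
    have e : pd i (fun x : Euc N => g (‖x‖ ^ 2)) = fun y => g' (‖y‖ ^ 2) * (2 * y i) := by
      funext y
      rw [pd_comp_scalar i (hg _ (by positivity)) (normsq_diff y), pd_normsq]
    rw [e, pd_mul i (f := fun y : Euc N => g' (‖y‖ ^ 2)) (g := fun y : Euc N => 2 * y i) _
      (coord_diff i x), pd_comp_scalar i (hg' _ (by positivity)) (normsq_diff x), pd_normsq,
      pd_coord]
    · ring
    · exact (hg' _ (by positivity)).differentiableAt.comp x (normsq_diff x)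
  rw [Finset.sum_congr rfl fun i _ => h1 i, Finset.sum_add_distrib, ← Finset.mul_sum,
    ← EuclideanSpace.real_norm_sq_eq]
  simp
  ring

lemma pd_hasCompactSupport {N : ℕ} (i : Fin N) {f : Euc N → ℝ} (hf : HasCompactSupport f) :
    HasCompactSupport (pd i f) := hf.fderiv_apply (𝕜 := ℝ) (eb i)

lemma integral_mul_pd {N : ℕ} (i : Fin N) {f g : Euc N → ℝ} (hf : ContDiff ℝ 1 f)
    (hg : ContDiff ℝ 1 g) (hs : HasCompactSupport g) :
    ∫ x, f x * pd i g x = - ∫ x, pd i f x * g x := by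
  refine integral_mul_fderiv_eq_neg_fderiv_mul_of_integrable (f := f) (g := g) (v := eb i)
    ?_ ?_ ?_ ?_ ?_
  · exact ((pd_continuous i hf).mul hg.continuous).integrable_of_hasCompactSupport hs.mul_left
  · exact (hf.continuous.mul (pd_continuous i hg)).integrable_of_hasCompactSupport
      (pd_hasCompactSupport i hs).mul_left
  · exact (hf.continuous.mul hg.continuous).integrable_of_hasCompactSupport hs.mul_left
  · exact fun x _ => hf.differentiable (by norm_num) x
  · exact fun x _ => hg.differentiable (by norm_num) x

lemma lapl_hasCompactSupport {N : ℕ} {f : Euc N → ℝ} (hf : ContDiff ℝ 2 f)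
    (hs : HasCompactSupport f) : HasCompactSupport (lapl f) := by
  refine HasCompactSupport.intro hs fun x hx => ?_
  rw [lapl_eq hf]
  refine Finset.sum_eq_zero fun i _ => ?_
  by_contra h
  have h1 : x ∈ tsupport (pd i (pd i f)) := subset_tsupport _ h
  exact hx (tsupport_fderiv_apply_subset ℝ (eb i) (tsupport_fderiv_apply_subset ℝ (eb i) h1))

/-- Green's identity against a compactly supported test function. -/
lemma integral_lapl_mul {N : ℕ} {f g : Euc N → ℝ} (hf : ContDiff ℝ 2 f)
    (hg : ContDiff ℝ 2 g) (hs : HasCompactSupport g) :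
    ∫ x, lapl f x * g x = ∫ x, f x * lapl g x := by
  have hf1 : ContDiff ℝ 1 f := hf.of_le (by norm_num)
  have hg1 : ContDiff ℝ 1 g := hg.of_le (by norm_num)
  have e1 : (fun x => lapl f x * g x) = fun x => ∑ i, pd i (pd i f) x * g x := by
    funext x; rw [lapl_eq hf, Finset.sum_mul]
  have e2 : (fun x => f x * lapl g x) = fun x => ∑ i, f x * pd i (pd i g) x := by
    funext x; rw [lapl_eq hg, Finset.mul_sum]
  rw [e1, e2, integral_finsetSum, integral_finsetSum]
  · refine Finset.sum_congr rfl fun i _ => ?_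
    rw [integral_mul_pd i hf1 (pd_contDiff1 i hg) (pd_hasCompactSupport i hs),
      integral_mul_pd i (pd_contDiff1 i hf) hg1 hs, neg_neg]
  · intro i _
    exact (hf.continuous.mul (pd_continuous i (pd_contDiff1 i hg))).integrable_of_hasCompactSupport
      (pd_hasCompactSupport i (pd_hasCompactSupport i hs)).mul_left
  · intro i _
    exact ((pd_continuous i (pd_contDiff1 i hf)).mul hg.continuous).integrable_of_hasCompactSupport
      hs.mul_left

/-- At a local maximum of a `C²` function the Laplacian is nonpositive. -/
lemma lapl_nonpos_of_isLocalMax {N : ℕ} {f : Euc N → ℝ} (hf : ContDiff ℝ 2 f) {x : Euc N}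
    (hx : IsLocalMax f x) : lapl f x ≤ 0 := by
  rw [lapl_eq hf]
  refine Finset.sum_nonpos fun i _ => ?_
  by_contra! hpos
  set φ : ℝ → ℝ := fun r => f (x + r • eb i) with hφ
  have hline : ∀ r : ℝ, HasDerivAt (fun r : ℝ => x + r • eb i) (eb i) r := fun r => by
    simpa using ((hasDerivAt_id r).smul_const (eb i)).const_add x
  have hd1 : ∀ r, HasDerivAt φ (pd i f (x + r • eb i)) r := fun r =>
    ((hf.differentiable (by norm_num) _).hasFDerivAt.comp_hasDerivAt r (hline r))
  have hd2 : ∀ r, HasDerivAt (fun r => pd i f (x + r • eb i)) (pd i (pd i f) (x + r • eb i)) r :=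
    fun r => (((pd_contDiff1 i hf).differentiable (by norm_num) _).hasFDerivAt.comp_hasDerivAt r
      (hline r))
  have e1 : deriv φ = fun r => pd i f (x + r • eb i) := funext fun r => (hd1 r).deriv
  have hcont : Continuous (fun r : ℝ => x + r • eb i) := by fun_prop
  have hmax : IsLocalMax φ 0 := by
    have : Tendsto (fun r : ℝ => x + r • eb i) (𝓝 0) (𝓝 x) := by
      have := hcont.tendsto 0
      simpa using this
    have h := this.eventually hx
    filter_upwards [h] with r hr
    simpa [hφ] using hr
  have h2 : deriv (deriv φ) 0 = pd i (pd i f) x := by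
    rw [e1, (hd2 0).deriv]; simp
  have hmin : IsLocalMin φ 0 :=
    isLocalMin_of_deriv_deriv_pos (by rw [h2]; exact hpos) hmax.deriv_eq_zero
      (hd1 0).continuousAt
  have hconst : φ =ᶠ[𝓝 0] fun _ => φ 0 := by
    filter_upwards [hmax, hmin] with r h1 h2 using le_antisymm h1 h2
  have : deriv (deriv φ) 0 = 0 := by
    rw [hconst.deriv.deriv_eq]; simp
  linarith

lemma pd_comp_affine {N : ℕ} (i : Fin N) {f : Euc N → ℝ} (hf : Differentiable ℝ f)
    (x0 : Euc N) (c : ℝ) (x : Euc N) :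
    pd i (fun y => f (x0 + c • y)) x = c * pd i f (x0 + c • x) := by
  unfold pd
  have h1 : HasFDerivAt (fun y : Euc N => x0 + c • y) (c • ContinuousLinearMap.id ℝ (Euc N)) x :=
    ((hasFDerivAt_id x).const_smul c).const_add x0
  have h := (hf (x0 + c • x)).hasFDerivAt.comp x h1
  rw [show (fun y => f (x0 + c • y)) = f ∘ (fun y => x0 + c • y) from rfl, h.fderiv]
  simp

lemma pd_const_mul {N : ℕ} (i : Fin N) {f : Euc N → ℝ} (hf : Differentiable ℝ f)
    (c : ℝ) (x : Euc N) : pd i (fun y => c * f y) x = c * pd i f x := by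
  have := pd_mul i (f := fun _ => c) (g := f) (x := x) (differentiableAt_const _) (hf x)
  rw [this]; simp [pd]

lemma lapl_comp_affine {N : ℕ} {f : Euc N → ℝ} (hf : ContDiff ℝ 2 f)
    (x0 : Euc N) (c : ℝ) (x : Euc N) :
    lapl (fun y => f (x0 + c • y)) x = c ^ 2 * lapl f (x0 + c • x) := by
  have hc : ContDiff ℝ 2 (fun y => f (x0 + c • y)) := hf.comp (by fun_prop)
  rw [lapl_eq hc, lapl_eq hf, Finset.mul_sum]
  refine Finset.sum_congr rfl fun i _ => ?_
  have hd := (hf.differentiable (by norm_num))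
  have e : pd i (fun y => f (x0 + c • y)) = fun y => c * pd i f (x0 + c • y) :=
    funext fun y => pd_comp_affine i hd x0 c y
  have hd1 := (pd_contDiff1 i hf).differentiable (by norm_num)
  rw [e, pd_const_mul i (f := fun y => pd i f (x0 + c • y)) _ c x, pd_comp_affine i hd1]
  · ring
  · exact hd1.comp (by fun_prop)

lemma lapl_const_mul {N : ℕ} {f : Euc N → ℝ} (hf : ContDiff ℝ 2 f)
    (c : ℝ) (x : Euc N) : lapl (fun y => c * f y) x = c * lapl f x := by
  have hc : ContDiff ℝ 2 (fun y => c * f y) := contDiff_const.mul hf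
  rw [lapl_eq hc, lapl_eq hf, Finset.mul_sum]
  refine Finset.sum_congr rfl fun i _ => ?_
  have e : pd i (fun y => c * f y) = fun y => c * pd i f y :=
    funext fun y => pd_const_mul i (hf.differentiable (by norm_num)) c y
  rw [e, pd_const_mul i ((pd_contDiff1 i hf).differentiable (by norm_num)) c x]

lemma pd_sub {N : ℕ} (i : Fin N) {f g : Euc N → ℝ} {x : Euc N}
    (hf : DifferentiableAt ℝ f x) (hg : DifferentiableAt ℝ g x) :
    pd i (fun y => f y - g y) x = pd i f x - pd i g x := by
  unfold pd
  have h := (hf.hasFDerivAt.sub hg.hasFDerivAt)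
  rw [show (fun y => f y - g y) = f - g from rfl, h.fderiv]
  simp

lemma lapl_sub {N : ℕ} {f g : Euc N → ℝ} (hf : ContDiff ℝ 2 f) (hg : ContDiff ℝ 2 g)
    (x : Euc N) : lapl (fun y => f y - g y) x = lapl f x - lapl g x := by
  rw [lapl_eq (hf.sub hg), lapl_eq hf, lapl_eq hg, ← Finset.sum_sub_distrib]
  refine Finset.sum_congr rfl fun i _ => ?_
  have e : pd i (fun y => f y - g y) = fun y => pd i f y - pd i g y :=
    funext fun y => pd_sub i (hf.differentiable (by norm_num) y) (hg.differentiable (by norm_num) y)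
  rw [e, pd_sub i ((pd_contDiff1 i hf).differentiable (by norm_num) x)
    ((pd_contDiff1 i hg).differentiable (by norm_num) x)]

/-! ### Differentiation under the integral sign and Kato's inequality -/

/-- Differentiation under the integral sign over a compact set. -/
lemma hasDerivAt_setIntegral_compact {X : Type*} [TopologicalSpace X] [T2Space X]
    [SecondCountableTopology X] [MeasurableSpace X] [OpensMeasurableSpace X]
    (μ : Measure X) [IsFiniteMeasureOnCompacts μ] {K : Set X} (hK : IsCompact K)
    {g : X → ℝ} (hg : Measurable g) (hg1 : ∀ x, |g x| ≤ 1)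
    {F F' : ℝ → X → ℝ} {a b r0 : ℝ} (hr : r0 ∈ Set.Ioo a b)
    (hF : ContinuousOn (fun p : ℝ × X => F p.1 p.2) (Set.Icc a b ×ˢ K))
    (hF' : ContinuousOn (fun p : ℝ × X => F' p.1 p.2) (Set.Icc a b ×ˢ K))
    (hd : ∀ r ∈ Set.Ioo a b, ∀ x ∈ K, HasDerivAt (fun r => F r x) (F' r x) r) :
    HasDerivAt (fun r => ∫ x in K, g x * F r x ∂μ) (∫ x in K, g x * F' r0 x ∂μ) r0 := by
  obtain ⟨C, hC⟩ := (isCompact_Icc.prod hK).exists_bound_of_continuousOn hF'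
  have slice : ∀ r ∈ Set.Icc a b, ∀ G : ℝ → X → ℝ,
      ContinuousOn (fun p : ℝ × X => G p.1 p.2) (Set.Icc a b ×ˢ K) → ContinuousOn (G r) K := by
    intro r hr G hG
    exact hG.comp (f := fun x => (r, x)) (by fun_prop) (fun x hx => ⟨hr, hx⟩)
  have meas : ∀ r ∈ Set.Icc a b, ∀ G : ℝ → X → ℝ,
      ContinuousOn (fun p : ℝ × X => G p.1 p.2) (Set.Icc a b ×ˢ K) →
      AEStronglyMeasurable (fun x => g x * G r x) (μ.restrict K) := fun r hr G hG =>
    hg.aestronglyMeasurable.mul ((slice r hr G hG).aestronglyMeasurable hK.measurableSet)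
  have hr0 : r0 ∈ Set.Icc a b := Set.Ioo_subset_Icc_self hr
  refine (hasDerivAt_integral_of_dominated_loc_of_deriv_le (bound := fun _ => C)
    (F := fun r x => g x * F r x) (F' := fun r x => g x * F' r x)
    (isOpen_Ioo.mem_nhds hr) ?_ ?_ (meas r0 hr0 F' hF') ?_ ?_ ?_).2
  · filter_upwards [isOpen_Ioo.mem_nhds hr] with r hr'
    exact meas r (Set.Ioo_subset_Icc_self hr') F hF
  · obtain ⟨D, hD⟩ := hK.exists_bound_of_continuousOn (slice r0 hr0 F hF)
    refine Integrable.mono' (g := fun _ => D) (integrableOn_const hK.measure_lt_top.ne)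
      (meas r0 hr0 F hF) ?_
    filter_upwards [ae_restrict_mem hK.measurableSet] with x hx
    rw [norm_mul]
    calc ‖g x‖ * ‖F r0 x‖ ≤ 1 * D :=
          mul_le_mul (hg1 x) (hD x hx) (norm_nonneg _) (by norm_num)
      _ = D := one_mul _
  · filter_upwards [ae_restrict_mem hK.measurableSet] with x hx r hr'
    rw [norm_mul]
    calc ‖g x‖ * ‖F' r x‖ ≤ 1 * C :=
          mul_le_mul (hg1 x) (hC (r, x) ⟨Set.Ioo_subset_Icc_self hr', hx⟩) (norm_nonneg _)
            (by norm_num)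
      _ = C := one_mul _
  · exact integrableOn_const hK.measure_lt_top.ne
  · filter_upwards [ae_restrict_mem hK.measurableSet] with x hx r hr'
    exact (hd r hr' x hx).const_mul (g x)

/-- The sign function, as a real number; `sg 0 = 0` by the convention for division by zero. -/
def sg (z : ℝ) : ℝ := z / |z|

lemma sg_abs_le (z : ℝ) : |sg z| ≤ 1 := by
  unfold sg; rw [abs_div, abs_abs]; exact div_self_le_one _

lemma sg_mul_self (z : ℝ) : sg z * z = |z| := by
  unfold sg
  rcases eq_or_ne z 0 with rfl | h
  · simp
  · have : |z| ≠ 0 := abs_ne_zero.mpr h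
    rw [div_mul_eq_mul_div, div_eq_iff this, abs_mul_abs_self]

lemma sg_measurable : Measurable sg := measurable_id.div measurable_id.abs

lemma sg_mul_pos {a z : ℝ} (ha : 0 < a) : sg (a * z) = sg z := by
  unfold sg
  rw [abs_mul, abs_of_pos ha, mul_div_mul_left _ _ ha.ne']

/-- Smoothed Kato inequality: `j = √(z² + ε²)` is convex. -/
lemma kato_pointwise {N : ℕ} {P : Euc N → ℝ} (hP : ContDiff ℝ 2 P) {ε : ℝ} (hε : 0 < ε) :
    ContDiff ℝ 2 (fun x => √(P x ^ 2 + ε ^ 2)) ∧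
    ∀ x, P x / √(P x ^ 2 + ε ^ 2) * lapl P x ≤ lapl (fun x => √(P x ^ 2 + ε ^ 2)) x := by
  have hpos : ∀ z : ℝ, 0 < z ^ 2 + ε ^ 2 := fun z => by positivity
  have hC : ContDiff ℝ 2 (fun x => √(P x ^ 2 + ε ^ 2)) :=
    ((hP.pow 2).add contDiff_const).sqrt fun x => (hpos _).ne'
  refine ⟨hC, fun x => ?_⟩
  have hj : ∀ z : ℝ, HasDerivAt (fun z => √(z ^ 2 + ε ^ 2)) (z / √(z ^ 2 + ε ^ 2)) z := by
    intro z
    have h := (((hasDerivAt_id z).pow 2).add_const (ε ^ 2)).sqrt (hpos z).ne'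
    refine h.congr_deriv ?_
    simp; field_simp
  have hj2 : ∀ z : ℝ, ∃ c, 0 ≤ c ∧ HasDerivAt (fun z => z / √(z ^ 2 + ε ^ 2)) c z := by
    intro z
    have hs : 0 < √(z ^ 2 + ε ^ 2) := Real.sqrt_pos.mpr (hpos z)
    have h := (hasDerivAt_id z).div (hj z) hs.ne'
    refine ⟨_, ?_, h⟩
    simp only [id]
    have e : 1 * √(z ^ 2 + ε ^ 2) - z * (z / √(z ^ 2 + ε ^ 2)) = ε ^ 2 / √(z ^ 2 + ε ^ 2) := by
      field_simp
      rw [Real.sq_sqrt (hpos z).le]; ring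
    rw [e]; positivity
  rw [lapl_eq hP, lapl_eq hC, Finset.mul_sum]
  refine Finset.sum_le_sum fun i _ => ?_
  have hdP := hP.differentiable (by norm_num)
  have e : pd i (fun x => √(P x ^ 2 + ε ^ 2)) = fun y => P y / √(P y ^ 2 + ε ^ 2) * pd i P y :=
    funext fun y => pd_comp_scalar i (hj (P y)) (hdP y)
  obtain ⟨c, hc0, hc⟩ := hj2 (P x)
  rw [e, pd_mul i (f := fun y => P y / √(P y ^ 2 + ε ^ 2)) (g := pd i P)
    (hc.differentiableAt.comp x (hdP x)) ((pd_contDiff1 i hP).differentiable (by norm_num) x),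
    pd_comp_scalar i hc (hdP x)]
  nlinarith [mul_nonneg hc0 (mul_self_nonneg (pd i P x))]

/-- Kato's inequality `sgn(P) ΔP ≤ Δ|P|`, tested against a nonnegative `C²` function of compact
support. -/
lemma kato_integral {N : ℕ} {P ψ : Euc N → ℝ} (hP : ContDiff ℝ 2 P) (hψ : ContDiff ℝ 2 ψ)
    (hs : HasCompactSupport ψ) (h0 : ∀ x, 0 ≤ ψ x) :
    ∫ x, sg (P x) * (lapl P x * ψ x) ≤ ∫ x, |P x| * lapl ψ x := by
  have hlP := lapl_continuous hP
  have hlψ := lapl_continuous hψ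
  have hsl := lapl_hasCompactSupport hψ hs
  set ε : ℕ → ℝ := fun n => 1 / ((n : ℝ) + 1) with hεdef
  have hε0 : ∀ n, 0 < ε n := fun n => by positivity
  have hε1 : ∀ n, ε n ≤ 1 := fun n => by
    rw [hεdef]; simp only; rw [div_le_one (by positivity)]; linarith [n.cast_nonneg (α := ℝ)]
  have hεt : Tendsto ε atTop (𝓝 0) := tendsto_one_div_add_atTop_nhds_zero_nat
  have hsq : ∀ z : ℝ, Tendsto (fun n => √(z ^ 2 + ε n ^ 2)) atTop (𝓝 |z|) := by
    intro z
    have h : Tendsto (fun n => z ^ 2 + ε n ^ 2) atTop (𝓝 (z ^ 2 + 0 ^ 2)) :=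
      tendsto_const_nhds.add (hεt.pow 2)
    have := h.sqrt
    simpa [Real.sqrt_sq_eq_abs] using this
  have hpos : ∀ n (z : ℝ), 0 < z ^ 2 + ε n ^ 2 := fun n z => by have := hε0 n; positivity
  have hL : Tendsto (fun n => ∫ x, P x / √(P x ^ 2 + ε n ^ 2) * (lapl P x * ψ x)) atTop
      (𝓝 (∫ x, sg (P x) * (lapl P x * ψ x))) := by
    refine tendsto_integral_of_dominated_convergence (fun x => |lapl P x * ψ x|) ?_ ?_ ?_ ?_
    · intro n
      refine Continuous.aestronglyMeasurable ?_
      refine (hP.continuous.div ?_ ?_).mul (hlP.mul hψ.continuous)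
      · exact (((hP.continuous.pow 2).add continuous_const)).sqrt
      · exact fun x => (Real.sqrt_pos.mpr (hpos n _)).ne'
    · exact ((hlP.mul hψ.continuous).integrable_of_hasCompactSupport hs.mul_left).abs
    · intro n
      refine Eventually.of_forall fun x => ?_
      rw [norm_mul, Real.norm_eq_abs, Real.norm_eq_abs]
      refine mul_le_of_le_one_left (abs_nonneg _) ?_
      rw [abs_div, abs_of_pos (Real.sqrt_pos.mpr (hpos n _)), div_le_one
        (Real.sqrt_pos.mpr (hpos n _))]
      exact Real.abs_le_sqrt (by nlinarith [hε0 n])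
    · refine Eventually.of_forall fun x => ?_
      refine Tendsto.mul_const _ ?_
      rcases eq_or_ne (P x) 0 with h | h
      · simp [h, sg]
      · exact tendsto_const_nhds.div (hsq _) (abs_ne_zero.mpr h)
  have hR : Tendsto (fun n => ∫ x, √(P x ^ 2 + ε n ^ 2) * lapl ψ x) atTop
      (𝓝 (∫ x, |P x| * lapl ψ x)) := by
    refine tendsto_integral_of_dominated_convergence (fun x => |(|P x| + 1) * lapl ψ x|) ?_ ?_ ?_ ?_
    · intro n
      refine Continuous.aestronglyMeasurable ?_
      exact ((((hP.continuous.pow 2).add continuous_const)).sqrt).mul hlψ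
    · exact (((hP.continuous.abs.add continuous_const).mul hlψ).integrable_of_hasCompactSupport
        hsl.mul_left).abs
    · intro n
      refine Eventually.of_forall fun x => ?_
      rw [norm_mul, Real.norm_eq_abs, Real.norm_eq_abs, abs_mul]
      refine mul_le_mul_of_nonneg_right ?_ (abs_nonneg _)
      rw [abs_of_nonneg (Real.sqrt_nonneg _), abs_of_nonneg (by positivity)]
      refine Real.sqrt_le_iff.mpr ⟨by positivity, ?_⟩
      have h1 := hε1 n
      have h2 := hε0 n
      nlinarith [abs_nonneg (P x), sq_abs (P x)]
    · exact Eventually.of_forall fun x => (hsq _).mul_const _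
  refine le_of_tendsto_of_tendsto' hL hR fun n => ?_
  obtain ⟨hC, hk⟩ := kato_pointwise hP (hε0 n)
  rw [← integral_lapl_mul hC hψ hs]
  refine integral_mono ?_ ?_ fun x => ?_
  · refine Continuous.integrable_of_hasCompactSupport ?_ hs.mul_left.mul_left
    refine (hP.continuous.div ?_ ?_).mul (hlP.mul hψ.continuous)
    · exact (((hP.continuous.pow 2).add continuous_const)).sqrt
    · exact fun x => (Real.sqrt_pos.mpr (hpos n _)).ne'
  · exact ((lapl_continuous hC).mul hψ.continuous).integrable_of_hasCompactSupport hs.mul_left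
  · simp only
    rw [← mul_assoc]
    exact mul_le_mul_of_nonneg_right (hk x) (h0 x)

/-! ### Averages over balls -/

/-- A smooth radial bump supported in the closed unit ball. -/
def zt {N : ℕ} (y : Euc N) : ℝ := smoothTransition (1 - ‖y‖ ^ 2)

/-- The averaging kernel `η ≥ 0` with `∇ζ = -η(y) y`. -/
def et {N : ℕ} (y : Euc N) : ℝ := 2 * deriv smoothTransition (1 - ‖y‖ ^ 2)

lemma zt_contDiff {N : ℕ} : ContDiff ℝ 2 (zt (N := N)) := by
  have h : ContDiff ℝ 2 smoothTransition := by exact_mod_cast Real.smoothTransition.contDiff (n := 2)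
  exact h.comp (contDiff_const.sub (contDiff_norm_sq ℝ))

lemma et_continuous {N : ℕ} : Continuous (et (N := N)) := by
  have h : ContDiff ℝ 1 smoothTransition := by exact_mod_cast Real.smoothTransition.contDiff (n := 1)
  have h1 := h.continuous_deriv (by norm_num)
  unfold et
  exact continuous_const.mul (h1.comp (by fun_prop))

lemma zt_nonneg {N : ℕ} (y : Euc N) : 0 ≤ zt y := Real.smoothTransition.nonneg _
lemma et_nonneg {N : ℕ} (y : Euc N) : 0 ≤ et y :=
  mul_nonneg (by norm_num) (Real.smoothTransition.monotone.deriv_nonneg)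

lemma zt_zero {N : ℕ} {y : Euc N} (hy : 1 ≤ ‖y‖) : zt y = 0 :=
  Real.smoothTransition.zero_of_nonpos (by nlinarith)

lemma et_zero {N : ℕ} {y : Euc N} (hy : 1 < ‖y‖) : et y = 0 := by
  unfold et
  have : smoothTransition =ᶠ[𝓝 (1 - ‖y‖ ^ 2)] fun _ => 0 := by
    filter_upwards [Iio_mem_nhds (show 1 - ‖y‖ ^ 2 < 0 by nlinarith)] with z hz
    exact Real.smoothTransition.zero_of_nonpos (le_of_lt hz)
  rw [this.deriv_eq]; simp

/-- The closed unit ball. -/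
abbrev UB (N : ℕ) : Set (Euc N) := Metric.closedBall 0 1

lemma zt_support {N : ℕ} : HasCompactSupport (zt (N := N)) :=
  HasCompactSupport.intro (isCompact_closedBall 0 1) fun y hy =>
    zt_zero (by simp at hy; exact hy.le)

lemma et_support {N : ℕ} : HasCompactSupport (et (N := N)) :=
  HasCompactSupport.intro (isCompact_closedBall 0 1) fun y hy =>
    et_zero (by simpa using hy)

lemma zt_pd {N : ℕ} (i : Fin N) (y : Euc N) : pd i zt y = - (et y * y i) := by
  have h : ContDiff ℝ 1 smoothTransition := by exact_mod_cast Real.smoothTransition.contDiff (n := 1)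
  have h1 : HasDerivAt (fun ρ : ℝ => smoothTransition (1 - ρ))
      (- deriv smoothTransition (1 - ‖y‖ ^ 2)) (‖y‖ ^ 2) := by
    have := (h.differentiable (by norm_num) (1 - ‖y‖ ^ 2)).hasDerivAt.comp (‖y‖ ^ 2)
      ((hasDerivAt_id _).const_sub 1)
    simpa [Function.comp_def] using this
  have := pd_comp_scalar i h1 (normsq_diff y)
  rw [pd_normsq] at this
  unfold zt
  rw [this]; unfold et; ring

/-- Total mass of the averaging kernel. -/
def cE (N : ℕ) : ℝ := ∫ y : Euc N, et y

lemma cE_pos {N : ℕ} (hN : 0 < N) : 0 < cE N := by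
  -- some point of the segment has positive derivative, otherwise `smoothTransition` is constant
  obtain ⟨c, ⟨hc0, hc1⟩, hc⟩ : ∃ c ∈ Set.Ioo (0:ℝ) 1, deriv smoothTransition c = (1 - 0) / (1 - 0) := by
    have h : ContDiff ℝ 1 smoothTransition := by exact_mod_cast Real.smoothTransition.contDiff (n := 1)
    have := exists_deriv_eq_slope smoothTransition (zero_lt_one (α := ℝ))
      h.continuous.continuousOn (h.differentiable (by norm_num)).differentiableOn
    simpa using this
  refine Continuous.integral_pos_of_hasCompactSupport_nonneg_nonzero
    (x := (√(1 - c)) • eb ⟨0, hN⟩) et_continuous et_support et_nonneg ?_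
  have : ‖(√(1 - c)) • (eb ⟨0, hN⟩ : Euc N)‖ ^ 2 = 1 - c := by
    rw [norm_smul]; simp [abs_of_nonneg (Real.sqrt_nonneg _)]
    rw [Real.sq_sqrt (by linarith)]
  unfold et
  rw [this, sub_sub_cancel, hc]; norm_num

lemma setInt_et {N : ℕ} (h : Euc N → ℝ) : ∫ y in UB N, et y * h y = ∫ y, et y * h y := by
  refine setIntegral_eq_integral_of_forall_compl_eq_zero fun y hy => ?_
  rw [et_zero (by simpa using hy), zero_mul]

lemma setInt_zt {N : ℕ} (h : Euc N → ℝ) : ∫ y in UB N, zt y * h y = ∫ y, zt y * h y := by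
  refine setIntegral_eq_integral_of_forall_compl_eq_zero fun y hy => ?_
  rw [zt_zero (by simp at hy; exact hy.le), zero_mul]

/-- Derivative in `r` of the weighted average over the ball of radius `r`. -/
lemma hasDerivAt_avg {N : ℕ} {p : Euc N → ℝ} (hp : ContDiff ℝ 2 p) (x0 : Euc N) (r : ℝ) :
    HasDerivAt (fun r : ℝ => ∫ y, et y * p (x0 + r • y))
      (r * ∫ y in UB N, zt y * lapl p (x0 + r • y)) r := by
  have hp1 := hp.continuous_fderiv (by norm_num)
  have hm : Continuous (fun q : ℝ × Euc N => x0 + q.1 • q.2) := by fun_prop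
  have h := hasDerivAt_setIntegral_compact (μ := volume) (K := UB N) (isCompact_closedBall 0 1)
    (g := fun _ => 1) measurable_const (by simp)
    (F := fun r y => et y * p (x0 + r • y))
    (F' := fun r y => et y * fderiv ℝ p (x0 + r • y) y) (a := r - 1) (b := r + 1) (r0 := r)
    ⟨by linarith, by linarith⟩
    ((et_continuous.comp continuous_snd).mul (hp.continuous.comp hm)).continuousOn
    ((et_continuous.comp continuous_snd).mul
      ((hp1.comp hm).clm_apply continuous_snd)).continuousOn
    (by
      intro s _ y _
      have hl : HasDerivAt (fun s : ℝ => x0 + s • y) y s := by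
        simpa using ((hasDerivAt_id s).smul_const y).const_add x0
      exact (((hp.differentiable (by norm_num) _).hasFDerivAt.comp_hasDerivAt s hl)).const_mul _)
  simp only [one_mul] at h
  have e0 : (fun r : ℝ => ∫ y, et y * p (x0 + r • y)) = fun r : ℝ => ∫ y in UB N, et y * p (x0 + r • y) :=
    funext fun r => (setInt_et _).symm
  rw [e0]
  refine h.congr_deriv ?_
  rw [setInt_et (fun y => fderiv ℝ p (x0 + r • y) y), setInt_zt]
  -- `η y = -∇ζ`, then integrate by parts in each coordinate
  have hpr : ContDiff ℝ 2 (fun y => p (x0 + r • y)) := hp.comp (by fun_prop)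
  have e1 : ∀ y : Euc N, et y * fderiv ℝ p (x0 + r • y) y
      = ∑ i, - (pd i p (x0 + r • y) * pd i zt y) := by
    intro y
    have hy : y = ∑ i, y i • (eb i : Euc N) := by
      have := (EuclideanSpace.basisFun (Fin N) ℝ).sum_repr y
      simpa using this.symm
    have : fderiv ℝ p (x0 + r • y) y = ∑ i, y i * pd i p (x0 + r • y) := by
      conv_lhs => rw [hy]
      rw [map_sum]
      refine Finset.sum_congr rfl fun i _ => ?_
      rw [map_smul, ← hy]; rfl
    rw [this, Finset.mul_sum]
    refine Finset.sum_congr rfl fun i _ => ?_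
    rw [zt_pd]; ring
  have hc : ∀ i : Fin N, ContDiff ℝ 1 (fun y => pd i p (x0 + r • y)) := fun i =>
    (pd_contDiff1 i hp).comp (by fun_prop)
  have hz1 : ContDiff ℝ 1 (zt (N := N)) := zt_contDiff.of_le (by norm_num)
  simp_rw [e1]
  rw [integral_finsetSum, ← integral_const_mul]
  · have e2 : (fun y : Euc N => r * (zt y * lapl p (x0 + r • y)))
        = fun y => ∑ i, pd i (fun y => pd i p (x0 + r • y)) y * zt y := by
      funext y
      rw [lapl_eq hp, Finset.mul_sum, Finset.mul_sum]
      refine Finset.sum_congr rfl fun i _ => ?_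
      rw [pd_comp_affine i ((pd_contDiff1 i hp).differentiable (by norm_num))]; ring
    rw [e2, integral_finsetSum]
    · refine Finset.sum_congr rfl fun i _ => ?_
      rw [integral_neg, integral_mul_pd i (hc i) hz1 zt_support, neg_neg]
    · intro i _
      exact ((pd_continuous i (hc i)).mul hz1.continuous).integrable_of_hasCompactSupport
        zt_support.mul_left
  · intro i _
    exact (((hc i).continuous.mul (pd_continuous i hz1)).integrable_of_hasCompactSupport
        (pd_hasCompactSupport i zt_support).mul_left).neg

/-- Mean value formula: ball averages minus the centre value, as an integral of the Laplacian. -/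
lemma mean_value {N : ℕ} {p : Euc N → ℝ} (hp : ContDiff ℝ 2 p) (x0 : Euc N) (r : ℝ) :
    (∫ y, et y * p (x0 + r • y)) - cE N * p x0
      = ∫ ρ in (0:ℝ)..r, ρ * ∫ y in UB N, zt y * lapl p (x0 + ρ • y) := by
  have hcont : Continuous (fun ρ : ℝ => ρ * ∫ y in UB N, zt y * lapl p (x0 + ρ • y)) := by
    refine continuous_id.mul ?_
    refine continuous_parametric_integral_of_continuous
      (f := fun (ρ : ℝ) (y : Euc N) => zt y * lapl p (x0 + ρ • y)) ?_ (isCompact_closedBall 0 1)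
    exact (zt_contDiff.continuous.comp continuous_snd).mul
      ((lapl_continuous hp).comp (by fun_prop))
  have := intervalIntegral.integral_eq_sub_of_hasDerivAt (a := 0) (b := r)
    (fun ρ _ => hasDerivAt_avg hp x0 ρ) (hcont.intervalIntegrable _ _)
  rw [this]
  simp [cE, integral_mul_const]

/-! ### Space-time smoothness and the Barenblatt solutions -/

/-- The non-integrable parameter range. -/
structure Par (N : ℕ) (m : ℝ) : Prop where
  hN : 4 < N
  hm0 : 0 < m
  hmu : m ≤ ((N : ℝ) - 4) / ((N : ℝ) - 2)

/-- The scaling exponent `b = -γ = 1/(N-2-Nm)`. -/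
def bC (N : ℕ) (m : ℝ) : ℝ := 1 / ((N : ℝ) - 2 - N * m)

namespace Par
variable {N : ℕ} {m : ℝ}

lemma N4 (h : Par N m) : (4 : ℝ) < N := by exact_mod_cast h.hN
lemma range (h : Par N m) : m * ((N : ℝ) - 2) ≤ (N : ℝ) - 4 := by
  have h1 := h.hmu
  have h2 := h.N4
  rwa [le_div_iff₀ (by linarith)] at h1
lemma m1 (h : Par N m) : m < 1 := by
  have h1 := h.range
  have h2 := h.N4
  by_contra! hc
  nlinarith
lemma D (h : Par N m) : 0 < (N : ℝ) - 2 - N * m := by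
  have h1 := h.range
  have h2 := h.N4
  have h3 := h.m1
  nlinarith [h.hm0]
lemma b0 (h : Par N m) : 0 < bC N m := one_div_pos.mpr h.D
lemma n0 (h : Par N m) : 0 < 1 / (1 - m) := one_div_pos.mpr (by linarith [h.m1])
lemma gamma (h : Par N m) : gammaC N m = - bC N m := by
  have := h.D
  have h2 := h.N4
  unfold gammaC betaC bC
  field_simp
lemma beta (_h : Par N m) : betaC N m = N * bC N m := by
  unfold betaC bC; ring
lemma C0 (h : Par N m) : 0 < Cst N m := by
  have h1 := h.D
  have h2 := h.m1
  have h3 := h.hm0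
  unfold Cst
  refine div_pos (mul_pos (by linarith) (by linarith)) (by linarith)
lemma C_b (h : Par N m) : Cst N m * bC N m * (1 - m) = 2 * m := by
  have h1 : (N : ℝ) - 2 - m * N ≠ 0 := by have := h.D; intro h3; nlinarith
  have h2 : (1 - m) ≠ 0 := by linarith [h.m1]
  unfold Cst bC
  rw [show (N : ℝ) - 2 - N * m = (N : ℝ) - 2 - m * N by ring]
  field_simp
lemma b_D (h : Par N m) : bC N m * ((N : ℝ) - 2 - N * m) = 1 := by
  have h1 := h.D
  unfold bC; field_simp
lemma mn (h : Par N m) : m * (1 / (1 - m)) = 1 / (1 - m) - 1 := by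
  have h2 : (1 - m) ≠ 0 := by linarith [h.m1]
  field_simp; ring
end Par

section spacetime
variable {N : ℕ} {v : Euc N → ℝ → ℝ} {I : Set ℝ}

/-- Joint smoothness of a function of `(x,t)` for `t` in an open set of times. -/
def STSmooth {N : ℕ} (v : Euc N → ℝ → ℝ) (I : Set ℝ) : Prop :=
  ContDiffOn ℝ 2 (fun p : Euc N × ℝ => v p.1 p.2) (Set.univ ×ˢ I)

lemma STSmooth.at (h : STSmooth v I) (hI : IsOpen I) (x : Euc N) {t : ℝ} (ht : t ∈ I) :
    ContDiffAt ℝ 2 (fun p : Euc N × ℝ => v p.1 p.2) (x, t) :=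
  h.contDiffAt ((isOpen_univ.prod hI).mem_nhds ⟨trivial, ht⟩)

lemma STSmooth.slice (h : STSmooth v I) (hI : IsOpen I) {t : ℝ} (ht : t ∈ I) :
    ContDiff ℝ 2 (fun x => v x t) := by
  rw [contDiff_iff_contDiffAt]
  intro x
  exact (h.at hI x ht).comp (f := fun x : Euc N => (x, t)) x
    (contDiffAt_id.prodMk contDiffAt_const)

lemma STSmooth.contOn (h : STSmooth v I) :
    ContinuousOn (fun p : Euc N × ℝ => v p.1 p.2) (Set.univ ×ˢ I) := h.continuousOn

lemma STSmooth.hasDeriv' (h : STSmooth v I) (hI : IsOpen I) (x : Euc N) {t : ℝ} (ht : t ∈ I) :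
    HasDerivAt (fun s => v x s)
      (fderiv ℝ (fun p : Euc N × ℝ => v p.1 p.2) (x, t) (0, 1)) t := by
  have h1 := ((h.at hI x ht).differentiableAt (by norm_num)).hasFDerivAt
  have h2 : HasDerivAt (fun s : ℝ => (x, s)) ((0 : Euc N), (1 : ℝ)) t :=
    (hasDerivAt_const t x).prodMk (hasDerivAt_id t)
  exact h1.comp_hasDerivAt (f := fun s : ℝ => (x, s)) t h2

lemma STSmooth.hasDeriv (h : STSmooth v I) (hI : IsOpen I) (x : Euc N) {t : ℝ} (ht : t ∈ I) :
    HasDerivAt (fun s => v x s) (deriv (fun s => v x s) t) t :=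
  (h.hasDeriv' hI x ht).differentiableAt.hasDerivAt

lemma STSmooth.deriv_contOn (h : STSmooth v I) (hI : IsOpen I) :
    ContinuousOn (fun p : Euc N × ℝ => deriv (fun s => v p.1 s) p.2) (Set.univ ×ˢ I) := by
  have h1 : ContinuousOn (fderiv ℝ (fun p : Euc N × ℝ => v p.1 p.2)) (Set.univ ×ˢ I) :=
    ContDiffOn.continuousOn_fderiv_of_isOpen h (isOpen_univ.prod hI) (by norm_num)
  have h2 : ContinuousOn (fun p : Euc N × ℝ =>
      fderiv ℝ (fun p : Euc N × ℝ => v p.1 p.2) p (0, 1)) (Set.univ ×ˢ I) :=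
    h1.clm_apply continuousOn_const
  refine h2.congr fun p hp => ?_
  exact (h.hasDeriv' hI p.1 hp.2).deriv

lemma STSmooth.pow_slice (h : STSmooth v I) (hI : IsOpen I) (m : ℝ) {t : ℝ} (ht : t ∈ I)
    (hpos : ∀ x, 0 < v x t) : ContDiff ℝ 2 (fun x => v x t ^ m) :=
  (h.slice hI ht).rpow_const_of_ne fun x => (hpos x).ne'

end spacetime

section barenblatt
variable {N : ℕ} {m : ℝ}

lemma Bb_base_pos (h : Par N m) {T k t : ℝ} (hk : 0 < k) (ht : t < T) (x : Euc N) :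
    0 < Cst N m * (T - t) / (k * (T - t) ^ (2 * gammaC N m) + ‖x‖ ^ 2) := by
  have h1 : 0 < T - t := by linarith
  have h2 := Real.rpow_pos_of_pos h1 (2 * gammaC N m)
  have := h.C0
  positivity

lemma Bb_pos (h : Par N m) {T k t : ℝ} (hk : 0 < k) (ht : t < T) (x : Euc N) :
    0 < Bb N m T k x t := Real.rpow_pos_of_pos (Bb_base_pos h hk ht x) _

lemma Bb_smooth (h : Par N m) {T k : ℝ} (hk : 0 < k) : STSmooth (Bb N m T k) (Set.Iio T) := by
  unfold STSmooth Bb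
  have h1 : ∀ p ∈ (Set.univ ×ˢ Set.Iio T : Set (Euc N × ℝ)), 0 < T - p.2 := fun p hp => by
    have : p.2 < T := hp.2
    linarith
  refine ContDiffOn.rpow_const_of_ne ?_ fun p hp => (Bb_base_pos h hk hp.2 p.1).ne'
  refine ContDiffOn.div ?_ ?_ ?_
  · exact (contDiff_const.mul (contDiff_const.sub contDiff_snd)).contDiffOn
  · refine ContDiffOn.add ?_ ((contDiff_norm_sq ℝ).comp contDiff_fst).contDiffOn
    refine contDiffOn_const.mul ?_
    exact ContDiffOn.rpow_const_of_ne (contDiff_const.sub contDiff_snd).contDiffOn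
      fun p hp => (h1 p hp).ne'
  · intro p hp
    have h2 := Real.rpow_pos_of_pos (h1 p hp) (2 * gammaC N m)
    positivity

lemma Bb_pde_algebra {C b n m κ Q A Qp s Nr : ℝ} (hs : s ≠ 0) (hQ : Q ≠ 0)
    (hCb : C * b = 2 * (n * m)) (hCN : C * (1 + 2 * b) = 2 * m * Nr) (hn1 : n * m + 1 = n) :
    (C * -1 * Q - C * s * (2 * b * κ / s)) / Q ^ 2 * n * (A * Qp)
      = 2 * Nr * (A * (-(n * m) * (Qp / Q)))
        + 4 * (Q - κ) * (A * (-(n * m) * ((-(n * m) - 1) * (Qp / Q / Q)))) := by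
  have key : C * Q + 2 * b * C * κ = 2 * Nr * m * Q - 4 * (Q - κ) * (m * n) := by
    linear_combination Q * hCN - 2 * (Q - κ) * hCb
  have e : -(n * m) - 1 = -n := by linarith
  rw [e]
  field_simp
  linear_combination (-n * A * Qp) * key

/-- The Barenblatt functions solve the equation. -/
lemma Bb_pde (h : Par N m) {T k : ℝ} (hk : 0 < k) (x : Euc N) {t : ℝ} (ht : t < T) :
    HasDerivAt (fun s => Bb N m T k x s) (lapl (fun y => Bb N m T k y t ^ m) x) t := by
  set n := 1 / (1 - m) with hn
  set C := Cst N m with hC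
  set b := bC N m with hb
  have hn0 : 0 < n := h.n0
  have hC0 : 0 < C := h.C0
  have hb0 : 0 < b := h.b0
  have hs : 0 < T - t := by linarith
  have hγ : 2 * gammaC N m = - (2 * b) := by rw [h.gamma]; ring
  have hmn : n * m = n - 1 := by rw [mul_comm]; exact h.mn
  set κ := k * (T - t) ^ (-(2 * b)) with hκ
  have hκ0 : 0 < κ := mul_pos hk (Real.rpow_pos_of_pos hs _)
  set s := T - t with hsdef
  -- the Laplacian of `B^m`
  have hsl : ContDiff ℝ 2 (fun y => Bb N m T k y t ^ m) :=
    (Bb_smooth h hk).pow_slice isOpen_Iio m ht (Bb_pos h hk ht)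
  set A : ℝ := (C * s) ^ (n * m) with hA
  have eB : (fun y : Euc N => Bb N m T k y t ^ m)
      = fun y => (fun ρ : ℝ => A * (κ + ρ) ^ (-(n * m))) (‖y‖ ^ 2) := by
    funext y
    have h2 : 0 < κ + ‖y‖ ^ 2 := by positivity
    simp only [Bb]
    rw [hγ, ← Real.rpow_mul (by positivity), Real.div_rpow (by positivity) (by positivity),
      Real.rpow_neg h2.le]
    rfl
  have hlap : lapl (fun y => Bb N m T k y t ^ m) x
      = 2 * N * (A * (-(n * m) * (κ + ‖x‖ ^ 2) ^ (-(n * m) - 1)))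
        + 4 * ‖x‖ ^ 2 * (A * (-(n * m) * ((-(n * m) - 1) * (κ + ‖x‖ ^ 2) ^ (-(n * m) - 1 - 1)))) := by
    rw [eB] at hsl ⊢
    have hd : ∀ q : ℝ, ∀ ρ : ℝ, 0 ≤ ρ →
        HasDerivAt (fun ρ : ℝ => (κ + ρ) ^ q) (q * (κ + ρ) ^ (q - 1)) ρ := by
      intro q ρ hρ
      have := ((hasDerivAt_id ρ).const_add κ).rpow_const (p := q) (Or.inl (by simp; positivity))
      simpa using this
    exact lapl_radial (g := fun ρ : ℝ => A * (κ + ρ) ^ (-(n * m)))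
      (g' := fun ρ => A * (-(n * m) * (κ + ρ) ^ (-(n * m) - 1)))
      (g'' := fun ρ => A * (-(n * m) * ((-(n * m) - 1) * (κ + ρ) ^ (-(n * m) - 1 - 1))))
      (fun ρ hρ => (hd _ ρ hρ).const_mul A)
      (fun ρ hρ => (((hd _ ρ hρ).const_mul _).const_mul A)) hsl x
  rw [hlap]
  -- the time derivative
  have hQ : 0 < κ + ‖x‖ ^ 2 := by positivity
  have hs1 : HasDerivAt (fun t => T - t) (-1) t := by
    simpa using (hasDerivAt_id t).const_sub T
  have hnum : HasDerivAt (fun t => C * (T - t)) (C * -1) t := hs1.const_mul C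
  have hden : HasDerivAt (fun t => k * (T - t) ^ (2 * gammaC N m) + ‖x‖ ^ 2)
      (k * (-1 * (-(2 * b)) * s ^ (-(2 * b) - 1))) t := by
    rw [hγ]
    exact ((hs1.rpow_const (p := -(2 * b)) (Or.inl hs.ne')).const_mul k).add_const _
  have hden0 : k * (T - t) ^ (2 * gammaC N m) + ‖x‖ ^ 2 = κ + ‖x‖ ^ 2 := by rw [hγ]
  have hq := (hnum.div hden (by rw [hden0]; exact hQ.ne')).rpow_const (p := n)
    (Or.inl (by
      show C * (T - t) / (k * (T - t) ^ (2 * gammaC N m) + ‖x‖ ^ 2) ≠ 0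
      rw [hden0]; positivity))
  refine hq.congr_deriv ?_
  simp only [Pi.div_apply]
  rw [hden0]
  set Q := κ + ‖x‖ ^ 2 with hQdef
  have e1 : (C * (T - t) / Q) ^ (n - 1) = A * Q ^ (-(n * m)) := by
    rw [hA, hmn, Real.div_rpow (by positivity) hQ.le, Real.rpow_neg hQ.le]; rfl
  have e2 : s ^ (-(2 * b) - 1) = s ^ (-(2 * b)) / s := by
    rw [Real.rpow_sub hs, Real.rpow_one]
  have e3 : Q ^ (-(n * m) - 1) = Q ^ (-(n * m)) / Q := by
    rw [Real.rpow_sub hQ, Real.rpow_one]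
  have e4 : Q ^ (-(n * m) - 1 - 1) = Q ^ (-(n * m)) / Q / Q := by
    rw [Real.rpow_sub hQ, Real.rpow_one, e3]
  rw [e1, e2, e3, e4]
  have eκ : k * (-1 * (-(2 * b)) * (s ^ (-(2 * b)) / s)) = 2 * b * κ / s := by
    rw [hκ]; field_simp
  rw [eκ]
  have hx : ‖x‖ ^ 2 = Q - κ := by rw [hQdef]; ring
  rw [hx]
  -- algebraic identities among the constants
  have hCb : C * b = 2 * (n * m) := by
    have := h.C_b
    have h1m : (1 - m) ≠ 0 := by linarith [h.m1]
    rw [hn]; field_simp; linarith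
  have hCN : C * (1 + 2 * b) = 2 * m * N := by
    have h3 := h.b_D
    have h1m : (1 - m) ≠ 0 := by linarith [h.m1]
    have h4 : C * (1 - m) * (b * ((N:ℝ) - 2 - N * m)) = 2 * m * ((N:ℝ) - 2 - N * m) := by
      have := h.C_b; linear_combination ((N:ℝ) - 2 - N * m) * this
    rw [h3] at h4
    have h5 := h.C_b
    apply mul_right_cancel₀ h1m
    linear_combination h4 + 2 * h5
  exact Bb_pde_algebra hs.ne' hQ.ne' hCb hCN (by rw [hmn]; ring)
end barenblatt

/-! ### Trapped solutions and monotonicity in time -/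

/-- A positive classical solution trapped between two Barenblatt solutions up to time `0`. -/
structure Trapped (N : ℕ) (m T k₁ k₂ : ℝ) (u : Euc N → ℝ → ℝ) : Prop where
  par : Par N m
  T0 : 0 < T
  k1 : 0 < k₁
  k2 : 0 < k₂
  smooth : STSmooth u (Set.Ioo 0 T)
  cont : ContinuousOn (fun p : Euc N × ℝ => u p.1 p.2) (Set.univ ×ˢ Set.Ico 0 T)
  pde : ∀ x : Euc N, ∀ t ∈ Set.Ioo (0 : ℝ) T,
    HasDerivAt (fun s => u x s) (lapl (fun y => u y t ^ m) x) t
  lo : ∀ x : Euc N, ∀ t ∈ Set.Ico (0 : ℝ) T, Bb N m T k₁ x t ≤ u x t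
  hi : ∀ x : Euc N, ∀ t ∈ Set.Ico (0 : ℝ) T, u x t ≤ Bb N m T k₂ x t

namespace Trapped
variable {N : ℕ} {m T k₁ k₂ : ℝ} {u : Euc N → ℝ → ℝ}

lemma pos (S : Trapped N m T k₁ k₂ u) (x : Euc N) {t : ℝ} (ht : t ∈ Set.Ico 0 T) : 0 < u x t :=
  (Bb_pos S.par S.k1 ht.2 x).trans_le (S.lo x t ht)

lemma cont_time (S : Trapped N m T k₁ k₂ u) (x : Euc N) :
    ContinuousOn (fun s => u x s) (Set.Ico 0 T) :=
  S.cont.comp (f := fun s : ℝ => (x, s)) (by fun_prop) fun s hs => ⟨trivial, hs⟩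

end Trapped

lemma left_deriv_nonneg {φ : ℝ → ℝ} {φ' a t : ℝ} (hat : a < t) (h : HasDerivAt φ φ' t)
    (hle : ∀ s ∈ Set.Ioo a t, φ s ≤ φ t) : 0 ≤ φ' := by
  have h1 := (hasDerivWithinAt_iff_tendsto_slope' (s := Set.Iio t) (by simp)).1
    (h.hasDerivWithinAt (s := Set.Iio t))
  refine ge_of_tendsto h1 ?_
  filter_upwards [Ioo_mem_nhdsLT hat] with s hs
  rw [slope_def_field]
  exact div_nonneg_of_nonpos (by linarith [hle s hs]) (by linarith [hs.2])

lemma rpow_le_rpow_iff_base {n a b : ℝ} (hn : 0 < n) (ha : 0 ≤ a) (hb : 0 ≤ b)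
    (h : a ^ n ≤ b ^ n) : a ≤ b := (Real.rpow_le_rpow_iff ha hb hn).1 h

section mono
variable {N : ℕ} {m T k₁ k₂ : ℝ} {u : Euc N → ℝ → ℝ}

/-- Comparison of `u` with the time-reparametrized solution `d^{-n} u(x, λτ + ετ²)`, a strict
subsolution whose data lie below `u` both at time zero and at spatial infinity. -/
lemma mono_aux (S : Trapped N m T k₁ k₂ u) {l ε t : ℝ} (hl : 1 < l) (hε : 0 < ε) (ht : 0 < t)
    (hT : l * t + ε * t ^ 2 < T) (x : Euc N) {τ : ℝ} (hτ : τ ∈ Set.Icc 0 t) :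
    (l + 2 * ε * τ) ^ (-(1 / (1 - m))) * u x (l * τ + ε * τ ^ 2) < u x τ := by
  set n := 1 / (1 - m) with hn
  have hn0 : 0 < n := S.par.n0
  have hmn : m * n = n - 1 := S.par.mn
  set v : Euc N → ℝ → ℝ := fun x τ => (l + 2 * ε * τ) ^ (-n) * u x (l * τ + ε * τ ^ 2) with hv
  have htT : t < T := by nlinarith [sq_nonneg t]
  have hd : ∀ s ∈ Set.Icc 0 t, 0 < l + 2 * ε * s := fun s hs => by nlinarith [hs.1]
  have hg : ∀ s ∈ Set.Icc 0 t, l * s + ε * s ^ 2 ∈ Set.Ico 0 T := fun s hs => by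
    have h0 := hs.1
    have h1 := hs.2
    refine ⟨by positivity, lt_of_le_of_lt ?_ hT⟩
    gcongr
  have hIT : ∀ s ∈ Set.Icc 0 t, s ∈ Set.Ico 0 T := fun s hs => ⟨hs.1, hs.2.trans_lt htT⟩
  have hvc : ContinuousOn (fun p : Euc N × ℝ => v p.1 p.2) (Set.univ ×ˢ Set.Icc 0 t) := by
    refine ContinuousOn.mul ?_ ?_
    · exact ContinuousOn.rpow_const (by fun_prop) fun p hp => Or.inl (hd p.2 hp.2).ne'
    · exact S.cont.comp (f := fun p : Euc N × ℝ => (p.1, l * p.2 + ε * p.2 ^ 2)) (by fun_prop)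
        fun p hp => ⟨trivial, hg p.2 hp.2⟩
  have huc : ContinuousOn (fun p : Euc N × ℝ => u p.1 p.2) (Set.univ ×ˢ Set.Icc 0 t) :=
    S.cont.mono (Set.prod_mono le_rfl hIT)
  -- strict inequality at time zero
  have hzero : ∀ y, v y 0 < u y 0 := fun y => by
    have h0 := S.pos y (t := 0) ⟨le_rfl, S.T0⟩
    have h1 : l ^ (-n) < 1 := Real.rpow_lt_one_of_one_lt_of_neg hl (by linarith)
    simp only [hv, mul_zero, add_zero, ne_eq, OfNat.ofNat_ne_zero, not_false_eq_true, zero_pow]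
    nlinarith
  -- contact can only happen in a fixed ball
  set R := Real.sqrt (k₁ * (T - t) ^ (2 * gammaC N m) / (l - 1)) with hR
  have hfar : ∀ y, ∀ s ∈ Set.Icc 0 t, u y s ≤ v y s → ‖y‖ ≤ R := by
    intro y s hs huv
    have hy : (0:ℝ) ≤ ‖y‖ ^ 2 := by positivity
    set g := l * s + ε * s ^ 2 with hgdef
    set d := l + 2 * ε * s with hddef
    have hd0 : 0 < d := hd s hs
    have hgT : 0 < T - g := by have := (hg s hs).2; linarith
    have hsT : 0 < T - s := by have := (hIT s hs).2; linarith
    by_cases hy0 : ‖y‖ = 0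
    · rw [hy0]; exact Real.sqrt_nonneg _
    have hy1 : 0 < ‖y‖ ^ 2 := by positivity
    have hC := S.par.C0
    have hp1 := Real.rpow_pos_of_pos hgT (2 * gammaC N m)
    have hp2 := Real.rpow_pos_of_pos hsT (2 * gammaC N m)
    have hk1 := S.k1
    have hk2 := S.k2
    have h1 : v y s ≤ (Cst N m * (T - g) / (d * ‖y‖ ^ 2)) ^ n := by
      calc v y s ≤ d ^ (-n) * (Cst N m * (T - g) / (‖y‖ ^ 2)) ^ n := by
            refine mul_le_mul_of_nonneg_left ((S.hi y g (hg s hs)).trans ?_) (by positivity)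
            unfold Bb
            refine Real.rpow_le_rpow (by positivity) ?_ hn0.le
            gcongr
            nlinarith
        _ = _ := by
            rw [Real.rpow_neg hd0.le, ← Real.inv_rpow hd0.le,
              ← Real.mul_rpow (by positivity) (by positivity)]
            congr 1; field_simp
    have h2 : (Cst N m * (T - s) / (k₁ * (T - s) ^ (2 * gammaC N m) + ‖y‖ ^ 2)) ^ n
        ≤ (Cst N m * (T - g) / (d * ‖y‖ ^ 2)) ^ n := (S.lo y s (hIT s hs)).trans (huv.trans h1)
    have h3 := rpow_le_rpow_iff_base hn0 (by positivity) (by positivity) h2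
    rw [div_le_div_iff₀ (by positivity) (by positivity)] at h3
    have h4 : (T - s) * (d * ‖y‖ ^ 2) ≤ (T - g) * (k₁ * (T - s) ^ (2 * gammaC N m) + ‖y‖ ^ 2) := by
      have : Cst N m * ((T - s) * (d * ‖y‖ ^ 2))
        ≤ Cst N m * ((T - g) * (k₁ * (T - s) ^ (2 * gammaC N m) + ‖y‖ ^ 2)) := by linarith
      exact le_of_mul_le_mul_left this hC
    have h5 : (T - s) ^ (2 * gammaC N m) ≤ (T - t) ^ (2 * gammaC N m) :=
      Real.rpow_le_rpow_of_nonpos (by linarith) (by linarith [hs.2])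
        (by rw [S.par.gamma]; linarith [S.par.b0])
    have h6 : (l - 1) * T ≤ (T - s) * d - (T - g) := by
      have : 0 ≤ ε * s * (2 * (T - s) + s) :=
        mul_nonneg (mul_nonneg hε.le hs.1) (by linarith [hs.1])
      rw [hgdef, hddef]; nlinarith
    have h7 : (T - g) * (k₁ * (T - s) ^ (2 * gammaC N m)) ≤ T * (k₁ * (T - t) ^ (2 * gammaC N m)) := by
      have := (hg s hs).1
      have := S.T0
      gcongr
      linarith
    have h8 : ‖y‖ ^ 2 * ((l - 1) * T) ≤ T * (k₁ * (T - t) ^ (2 * gammaC N m)) := by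
      have := mul_le_mul_of_nonneg_left h6 hy
      linarith
    refine Real.le_sqrt_of_sq_le ?_
    rw [le_div_iff₀ (by linarith)]
    have : T * (‖y‖ ^ 2 * (l - 1)) ≤ T * (k₁ * (T - t) ^ (2 * gammaC N m)) := by linarith
    exact le_of_mul_le_mul_left this S.T0
  by_contra! hcon
  -- the first contact time
  set K : Set (Euc N × ℝ) := Metric.closedBall 0 R ×ˢ Set.Icc 0 t with hK
  have hKc : IsCompact K := (isCompact_closedBall _ _).prod isCompact_Icc
  set Z : Set (Euc N × ℝ) := {p ∈ K | u p.1 p.2 ≤ v p.1 p.2} with hZ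
  have hZc : IsCompact Z := by
    have hKs : K ⊆ Set.univ ×ˢ Set.Icc 0 t := Set.prod_mono (Set.subset_univ _) le_rfl
    refine hKc.of_isClosed_subset ?_ (Set.sep_subset _ _)
    exact hKc.isClosed.isClosed_le (huc.mono hKs) (hvc.mono hKs)
  have hZne : Z.Nonempty := ⟨(x, τ), ⟨by simpa using hfar x τ hτ hcon, hτ⟩, hcon⟩
  obtain ⟨⟨y, s⟩, hyZ, hmin⟩ := hZc.exists_isMinOn hZne (f := Prod.snd) continuous_snd.continuousOn
  have hs : s ∈ Set.Icc 0 t := hyZ.1.2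
  have hys : u y s ≤ v y s := hyZ.2
  have hbefore : ∀ z, ∀ r ∈ Set.Ico 0 s, v z r < u z r := by
    intro z r hr
    by_contra! hc
    have hrt : r ∈ Set.Icc 0 t := ⟨hr.1, hr.2.le.trans hs.2⟩
    have : s ≤ r := hmin (a := (z, r)) ⟨⟨by simpa using hfar z r hrt hc, hrt⟩, hc⟩
    exact absurd hr.2 (not_lt.2 this)
  have hs0 : 0 < s := by
    rcases hs.1.lt_or_eq with h | h
    · exact h
    · rw [← h] at hys; exact absurd (hzero y) (not_lt.2 hys)
  have hat : ∀ z, v z s ≤ u z s := by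
    intro z
    have hvz : ContinuousWithinAt (fun r => v z r) (Set.Icc 0 t) s :=
      (hvc.comp (f := fun r : ℝ => (z, r)) (by fun_prop) fun r hr => ⟨trivial, hr⟩) s hs
    have huz : ContinuousWithinAt (fun r => u z r) (Set.Icc 0 t) s :=
      (huc.comp (f := fun r : ℝ => (z, r)) (by fun_prop) fun r hr => ⟨trivial, hr⟩) s hs
    have hne : (𝓝[Set.Ico 0 s] s).NeBot := by
      rw [nhdsWithin_Ico_eq_nhdsLT hs0]; infer_instance
    have hsub : Set.Ico 0 s ⊆ Set.Icc 0 t := fun r hr => ⟨hr.1, hr.2.le.trans hs.2⟩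
    exact le_of_tendsto_of_tendsto (hvz.mono hsub) (huz.mono hsub)
      (by filter_upwards [self_mem_nhdsWithin] with r hr using (hbefore z r hr).le)
  have heq : v y s = u y s := le_antisymm (hat y) hys
  -- derivatives at the contact point
  have hsT : s ∈ Set.Ioo 0 T := ⟨hs0, (hIT s hs).2⟩
  set g := l * s + ε * s ^ 2 with hgdef
  set d := l + 2 * ε * s with hddef
  have hd0 : 0 < d := hd s hs
  have hgT : g ∈ Set.Ioo 0 T := ⟨by positivity, (hg s hs).2⟩
  have hgd : HasDerivAt (fun r => l * r + ε * r ^ 2) d s := by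
    have := ((hasDerivAt_id s).const_mul l).add (((hasDerivAt_id s).pow 2).const_mul ε)
    refine this.congr_deriv ?_
    simp [hddef]; ring
  have hdd : HasDerivAt (fun r => l + 2 * ε * r) (2 * ε) s := by
    simpa using ((hasDerivAt_id s).const_mul (2 * ε)).const_add l
  have hud : HasDerivAt (fun r => u y (l * r + ε * r ^ 2))
      (lapl (fun z => u z g ^ m) y * d) s := (S.pde y g hgT).comp s hgd
  have hvd := (hdd.rpow_const (p := -n) (Or.inl hd0.ne')).mul hud
  have hvm : (fun z => v z s ^ m) = fun z => d ^ (-n * m) * u z g ^ m := by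
    funext z
    simp only [hv]
    rw [Real.mul_rpow (by positivity) (S.pos z (hg s hs)).le, ← Real.rpow_mul hd0.le]
  have hug : ContDiff ℝ 2 (fun z => u z g ^ m) :=
    S.smooth.pow_slice isOpen_Ioo m hgT fun z => S.pos z (hg s hs)
  have hus : ContDiff ℝ 2 (fun z => u z s ^ m) :=
    S.smooth.pow_slice isOpen_Ioo m hsT fun z => S.pos z (hIT s hs)
  have hvs : ContDiff ℝ 2 (fun z => v z s ^ m) := by
    rw [hvm]; exact contDiff_const.mul hug
  have hmax : IsLocalMax (fun z => v z s ^ m - u z s ^ m) y := by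
    refine Filter.Eventually.of_forall fun z => ?_
    have h1 : 0 ≤ v z s := mul_nonneg (by positivity) (S.pos z (hg s hs)).le
    have h2 := Real.rpow_le_rpow h1 (hat z) S.par.hm0.le
    show v z s ^ m - u z s ^ m ≤ v y s ^ m - u y s ^ m
    rw [heq]; linarith
  have hL := lapl_nonpos_of_isLocalMax (hvs.sub hus) hmax
  rw [lapl_sub hvs hus, hvm, lapl_const_mul hug] at hL
  have hder := hvd.sub (S.pde y s hsT)
  have hnn := left_deriv_nonneg (a := 0) hs0 hder fun r hr => by
    have h1 := hbefore y r ⟨hr.1.le, hr.2⟩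
    show v y r - u y r ≤ v y s - u y s
    rw [heq]; linarith
  have e1 : d ^ (-n) * d = d ^ (-n * m) := by
    conv_lhs => rw [← Real.rpow_one d, ← Real.rpow_mul (by positivity), ← Real.rpow_add hd0]
    congr 1; linarith
  have hneg : 2 * ε * (-n) * d ^ (-n - 1) * u y g < 0 := by
    have h1 := Real.rpow_pos_of_pos hd0 (-n - 1)
    have h2 := S.pos y (hg s hs)
    have : 0 < 2 * ε * n * d ^ (-n - 1) * u y g := by positivity
    linarith
  have e2 : d ^ (-n) * (lapl (fun z => u z g ^ m) y * d)
      = d ^ (-n * m) * lapl (fun z => u z g ^ m) y := by rw [← e1]; ring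
  rw [e2] at hnn
  linarith

/-- The Bénilan–Crandall type bound: `t ↦ t^{-n} u(x,t)` is nonincreasing. -/
lemma Trapped.mono (S : Trapped N m T k₁ k₂ u) {t t' : ℝ} (ht : 0 < t) (htt : t ≤ t')
    (hT : t' < T) (x : Euc N) : u x t' ≤ (t' / t) ^ (1 / (1 - m)) * u x t := by
  rcases htt.eq_or_lt with rfl | hlt
  · rw [div_self ht.ne', Real.one_rpow, one_mul]
  set n := 1 / (1 - m) with hn
  set l := t' / t with hl
  have hl1 : 1 < l := (one_lt_div ht).2 hlt
  have hlt' : l * t = t' := by rw [hl]; field_simp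
  have key : ∀ ε > 0, ε < (T - t') / t ^ 2 →
      u x (l * t + ε * t ^ 2) ≤ (l + 2 * ε * t) ^ n * u x t := by
    intro ε hε hε2
    rw [lt_div_iff₀ (by positivity)] at hε2
    have h1 := (mono_aux S hl1 hε ht (by linarith) x (τ := t) ⟨ht.le, le_rfl⟩).le
    have hd : 0 < l + 2 * ε * t := by positivity
    rw [Real.rpow_neg hd.le, inv_mul_le_iff₀ (Real.rpow_pos_of_pos hd _)] at h1
    exact h1
  have hev : ∀ᶠ ε in 𝓝[>] (0:ℝ), u x (l * t + ε * t ^ 2) ≤ (l + 2 * ε * t) ^ n * u x t := by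
    filter_upwards [Ioo_mem_nhdsGT (show (0:ℝ) < (T - t') / t ^ 2 by
      have : 0 < T - t' := by linarith
      positivity)] with ε hε using key ε hε.1 hε.2
  have hcu : ContinuousAt (fun s => u x s) t' :=
    (S.cont_time x).continuousAt (Ico_mem_nhds (ht.trans hlt) hT)
  have ht1 : Tendsto (fun ε : ℝ => u x (l * t + ε * t ^ 2)) (𝓝[>] 0) (𝓝 (u x t')) := by
    refine hcu.tendsto.comp (tendsto_nhdsWithin_of_tendsto_nhds ?_)
    have : Continuous fun ε : ℝ => l * t + ε * t ^ 2 := by fun_prop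
    simpa [hlt'] using this.tendsto 0
  have ht2 : Tendsto (fun ε : ℝ => (l + 2 * ε * t) ^ n * u x t) (𝓝[>] 0) (𝓝 (l ^ n * u x t)) := by
    refine tendsto_nhdsWithin_of_tendsto_nhds ?_
    have h1 : ContinuousAt (fun ε : ℝ => (l + 2 * ε * t) ^ n) 0 :=
      ContinuousAt.rpow_const (by fun_prop) (Or.inl (by simp; positivity))
    simpa using h1.tendsto.mul_const (u x t)
  exact le_of_tendsto_of_tendsto ht1 ht2 hev

end mono

/-! ### Cutoffs and weights -/

section cutoff

/-- A smooth cutoff on the line: `1` on `(-∞,1]`, `0` on `[2,∞)`. -/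
def cut (z : ℝ) : ℝ := smoothTransition (2 - z)

lemma cut_contDiff : ContDiff ℝ 3 cut :=
  smoothTransition.contDiff.comp (contDiff_const.sub contDiff_id)
lemma cut_nonneg (z : ℝ) : 0 ≤ cut z := smoothTransition.nonneg _
lemma cut_le_one (z : ℝ) : cut z ≤ 1 := smoothTransition.le_one _
lemma cut_one {z : ℝ} (hz : z ≤ 1) : cut z = 1 := smoothTransition.one_of_one_le (by linarith)
lemma cut_zero {z : ℝ} (hz : 2 ≤ z) : cut z = 0 := smoothTransition.zero_of_nonpos (by linarith)

lemma cut_d1 : ContDiff ℝ 2 (deriv cut) := by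
  have h : ContDiff ℝ (2 + 1) cut := cut_contDiff
  exact h.deriv'

lemma cut_d2 : ContDiff ℝ 1 (deriv (deriv cut)) := by
  have h : ContDiff ℝ (1 + 1) (deriv cut) := cut_d1
  exact h.deriv'

lemma cut_hasDeriv (z : ℝ) : HasDerivAt cut (deriv cut z) z :=
  (cut_contDiff.differentiable (by norm_num) z).hasDerivAt
lemma cut_hasDeriv1 (z : ℝ) : HasDerivAt (deriv cut) (deriv (deriv cut) z) z :=
  (cut_d1.differentiable (by norm_num) z).hasDerivAt

lemma cut_d1_zero {z : ℝ} (hz : z ∉ Set.Icc (1 : ℝ) 2) : deriv cut z = 0 := by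
  rw [Set.mem_Icc, not_and_or, not_le, not_le] at hz
  rcases hz with hz | hz
  · have : cut =ᶠ[𝓝 z] fun _ => 1 := by
      filter_upwards [Iio_mem_nhds hz] with y hy using cut_one (le_of_lt hy)
    rw [this.deriv_eq]; simp
  · have : cut =ᶠ[𝓝 z] fun _ => 0 := by
      filter_upwards [Ioi_mem_nhds hz] with y hy using cut_zero (le_of_lt hy)
    rw [this.deriv_eq]; simp

lemma cut_bound : ∃ K : ℝ, 0 ≤ K ∧ ∀ z, |deriv cut z| ≤ K ∧ |deriv (deriv cut) z| ≤ K := by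
  have hs : HasCompactSupport (deriv cut) :=
    HasCompactSupport.intro (isCompact_Icc (a := (1:ℝ)) (b := 2)) fun z hz => cut_d1_zero hz
  obtain ⟨K1, h1⟩ := hs.exists_bound_of_continuous cut_d1.continuous
  obtain ⟨K2, h2⟩ := hs.deriv.exists_bound_of_continuous cut_d2.continuous
  exact ⟨max K1 K2, le_max_of_le_left ((norm_nonneg _).trans (h1 0)),
    fun z => ⟨(h1 z).trans (le_max_left _ _), (h2 z).trans (le_max_right _ _)⟩⟩

end cutoff

section weight

/-- The logarithmic time `1 + log((T-t)/s₁)`. -/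
def wS (T s₁ t : ℝ) : ℝ := 1 + Real.log ((T - t) / s₁)

/-- The logarithm `log(M + |x|²(T-t)^{2b})` of the similarity variable. -/
def wG {N : ℕ} (b M T : ℝ) (x : Euc N) (t : ℝ) : ℝ := Real.log (M + ‖x‖ ^ 2 * (T - t) ^ (2 * b))

/-- The Gaussian in `(G, S)`. -/
def wh (B α S G : ℝ) : ℝ := S ^ (-α) * Real.exp (-(G ^ 2 / (B * S)))

/-- The truncated weight, a supersolution of the adjoint problem up to an error `O(1/R)`. -/
def wt {N : ℕ} (b M B α R T s₁ : ℝ) (x : Euc N) (t : ℝ) : ℝ :=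
  wh B α (wS T s₁ t) (wG b M T x t) * cut (wG b M T x t / R)

lemma wh_pos {B α S G : ℝ} (hS : 0 < S) : 0 < wh B α S G :=
  mul_pos (Real.rpow_pos_of_pos hS _) (Real.exp_pos _)

/-- First `G`-derivative of the truncated Gaussian. -/
def wH1 (B α R S G : ℝ) : ℝ :=
  wh B α S G * (-(2 * G / (B * S)) * cut (G / R) + deriv cut (G / R) / R)

/-- Second `G`-derivative of the truncated Gaussian. -/
def wH2 (B α R S G : ℝ) : ℝ :=
  wh B α S G * ((4 * G ^ 2 / (B * S) ^ 2 - 2 / (B * S)) * cut (G / R)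
    - 2 * (2 * G / (B * S)) * (deriv cut (G / R) / R) + deriv (deriv cut) (G / R) / R ^ 2)

/-- The `S`-derivative of the truncated Gaussian. -/
def wHS (B α R S G : ℝ) : ℝ :=
  wh B α S G * ((-(α / S) + G ^ 2 / (B * S ^ 2)) * cut (G / R))

lemma wh_hasDeriv {B α : ℝ} (hB : 0 < B) {S G : ℝ → ℝ} {S' G' r : ℝ} (hS0 : 0 < S r)
    (hS : HasDerivAt S S' r) (hG : HasDerivAt G G' r) :
    HasDerivAt (fun r => wh B α (S r) (G r))
      (wh B α (S r) (G r) * ((-(α / S r) + G r ^ 2 / (B * S r ^ 2)) * S'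
        - 2 * G r / (B * S r) * G')) r := by
  have h1 := hS.rpow_const (p := -α) (Or.inl hS0.ne')
  have h2 := ((hG.pow 2).div (hS.const_mul B) (mul_pos hB hS0).ne').neg.exp
  refine (h1.mul h2).congr_deriv ?_
  simp only [wh, Pi.div_apply, Pi.neg_apply, Pi.pow_apply]
  have e : S r ^ (-α - 1) = S r ^ (-α) / S r := by rw [Real.rpow_sub hS0, Real.rpow_one]
  rw [e]
  have := hB.ne'
  have := hS0.ne'
  field_simp
  push_cast
  ring

lemma wH_hasDeriv {B α R : ℝ} (hB : 0 < B) {S G : ℝ → ℝ} {S' G' r : ℝ} (hS0 : 0 < S r)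
    (hS : HasDerivAt S S' r) (hG : HasDerivAt G G' r) :
    HasDerivAt (fun r => wh B α (S r) (G r) * cut (G r / R))
      (wHS B α R (S r) (G r) * S' + wH1 B α R (S r) (G r) * G') r := by
  have h1 := wh_hasDeriv (α := α) hB hS0 hS hG
  have h2 := (cut_hasDeriv (G r / R)).comp r (hG.div_const R)
  refine (h1.mul h2).congr_deriv ?_
  simp only [wHS, wH1, Function.comp]
  ring

lemma wH1_hasDeriv {B α R S : ℝ} (hB : 0 < B) {G : ℝ → ℝ} {G' r : ℝ} (hS0 : 0 < S)
    (hG : HasDerivAt G G' r) :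
    HasDerivAt (fun r => wH1 B α R S (G r)) (wH2 B α R S (G r) * G') r := by
  have h1 := wh_hasDeriv (α := α) (S := fun _ => S) hB hS0 (hasDerivAt_const r S) hG
  have h2 := (cut_hasDeriv (G r / R)).comp r (hG.div_const R)
  have h3 := (cut_hasDeriv1 (G r / R)).comp r (hG.div_const R)
  have h4 := ((((hG.const_mul 2).div_const (B * S)).neg.mul h2).add (h3.div_const R))
  refine (h1.mul h4).congr_deriv ?_
  simp only [wH2, Function.comp, Pi.add_apply, Pi.mul_apply, Pi.neg_apply]
  ring

variable {N : ℕ} {b M B α R T s₁ : ℝ}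

lemma wt_smooth (hM : 0 < M) (hB : 0 < B) (hs₁ : 0 < s₁) :
    STSmooth (N := N) (wt b M B α R T s₁) (Set.Iio (T - s₁ * Real.exp (-1))) := by
  have hp : ∀ p ∈ (Set.univ ×ˢ Set.Iio (T - s₁ * Real.exp (-1)) : Set (Euc N × ℝ)),
      s₁ * Real.exp (-1) < T - p.2 := fun p hp => by
    have : p.2 < T - s₁ * Real.exp (-1) := hp.2
    linarith
  have he : 0 < s₁ * Real.exp (-1) := by positivity
  have hT : ContDiffOn ℝ 2 (fun p : Euc N × ℝ => T - p.2)
      (Set.univ ×ˢ Set.Iio (T - s₁ * Real.exp (-1))) :=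
    (contDiff_const.sub contDiff_snd).contDiffOn
  have hS : ContDiffOn ℝ 2 (fun p : Euc N × ℝ => wS T s₁ p.2)
      (Set.univ ×ˢ Set.Iio (T - s₁ * Real.exp (-1))) := by
    refine contDiffOn_const.add (ContDiffOn.log (hT.div_const _) fun p h => ?_)
    have := hp p h
    exact (div_pos (by linarith) hs₁).ne'
  have hS0 : ∀ p ∈ (Set.univ ×ˢ Set.Iio (T - s₁ * Real.exp (-1)) : Set (Euc N × ℝ)),
      0 < wS T s₁ p.2 := fun p h => by
    have h1 := hp p h
    have h2 : Real.exp (-1) < (T - p.2) / s₁ := by rw [lt_div_iff₀ hs₁]; linarith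
    have h3 := Real.log_lt_log (Real.exp_pos _) h2
    rw [Real.log_exp] at h3
    unfold wS; linarith
  have hG : ContDiffOn ℝ 2 (fun p : Euc N × ℝ => wG b M T p.1 p.2)
      (Set.univ ×ˢ Set.Iio (T - s₁ * Real.exp (-1))) := by
    refine ContDiffOn.log (contDiffOn_const.add (ContDiffOn.mul
      ((contDiff_norm_sq ℝ).comp contDiff_fst).contDiffOn
      (hT.rpow_const_of_ne fun p h => ?_))) fun p h => ?_
    · have := hp p h; linarith
    · have := hp p h
      have h2 : 0 < T - p.2 := by linarith
      have := Real.rpow_pos_of_pos h2 (2 * b)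
      positivity
  unfold STSmooth wt wh
  refine ((hS.rpow_const_of_ne fun p h => (hS0 p h).ne').mul
    (ContDiffOn.exp (ContDiffOn.neg (ContDiffOn.div (hG.pow 2) (contDiffOn_const.mul hS)
      fun p h => (mul_pos hB (hS0 p h)).ne')))).mul ?_
  exact (cut_contDiff.of_le (by norm_num)).comp_contDiffOn (hG.div_const R)

/-- Time derivative of the weight. -/
lemma wt_time (hM : 0 < M) (hB : 0 < B) (hs₁ : 0 < s₁) (x : Euc N) {t : ℝ} (ht : s₁ ≤ T - t) :
    HasDerivAt (fun r => wt b M B α R T s₁ x r)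
      (wHS B α R (wS T s₁ t) (wG b M T x t) * (-(1 / (T - t)))
        + wH1 B α R (wS T s₁ t) (wG b M T x t)
          * (-(2 * b * (‖x‖ ^ 2 * (T - t) ^ (2 * b) / (M + ‖x‖ ^ 2 * (T - t) ^ (2 * b)))
            / (T - t)))) t := by
  have hs : 0 < T - t := by linarith
  have hp := Real.rpow_pos_of_pos hs (2 * b)
  have hT : HasDerivAt (fun t => T - t) (-1) t := by simpa using (hasDerivAt_id t).const_sub T
  have hS0 : 0 < wS T s₁ t := by
    have : 0 ≤ Real.log ((T - t) / s₁) := Real.log_nonneg ((one_le_div hs₁).2 ht)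
    unfold wS; linarith
  have hS : HasDerivAt (wS T s₁) (-(1 / (T - t))) t := by
    have := ((hT.div_const s₁).log (div_pos hs hs₁).ne').const_add 1
    refine this.congr_deriv ?_
    field_simp
  have hG : HasDerivAt (wG b M T x)
      (-(2 * b * (‖x‖ ^ 2 * (T - t) ^ (2 * b) / (M + ‖x‖ ^ 2 * (T - t) ^ (2 * b))) / (T - t))) t := by
    have h1 := ((hT.rpow_const (p := 2 * b) (Or.inl hs.ne')).const_mul (‖x‖ ^ 2)).const_add M
    refine (h1.log (by positivity)).congr_deriv ?_
    rw [Real.rpow_sub hs, Real.rpow_one]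
    field_simp
  exact wH_hasDeriv hB hS0 hS hG

/-- Laplacian of the weight. -/
lemma wt_lapl (hM : 0 < M) (hB : 0 < B) (hs₁ : 0 < s₁) (x : Euc N) {t : ℝ} (ht : s₁ ≤ T - t) :
    lapl (fun y => wt b M B α R T s₁ y t) x
      = 2 * N * (wH1 B α R (wS T s₁ t) (wG b M T x t)
          * ((T - t) ^ (2 * b) / (M + ‖x‖ ^ 2 * (T - t) ^ (2 * b))))
        + 4 * ‖x‖ ^ 2 * (wH2 B α R (wS T s₁ t) (wG b M T x t)
            * ((T - t) ^ (2 * b) / (M + ‖x‖ ^ 2 * (T - t) ^ (2 * b)))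
            * ((T - t) ^ (2 * b) / (M + ‖x‖ ^ 2 * (T - t) ^ (2 * b)))
          + wH1 B α R (wS T s₁ t) (wG b M T x t)
            * (-((T - t) ^ (2 * b) / (M + ‖x‖ ^ 2 * (T - t) ^ (2 * b)) ) ^ 2 )) := by
  have hs : 0 < T - t := by linarith
  have hp := Real.rpow_pos_of_pos hs (2 * b)
  set e := (T - t) ^ (2 * b) with he
  have hS0 : 0 < wS T s₁ t := by
    have : 0 ≤ Real.log ((T - t) / s₁) := Real.log_nonneg ((one_le_div hs₁).2 ht)
    unfold wS; linarith
  set S := wS T s₁ t with hS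
  have hsl : ContDiff ℝ 2 (fun y : Euc N => wt b M B α R T s₁ y t) := by
    refine (wt_smooth hM hB hs₁).slice isOpen_Iio (show t < T - s₁ * Real.exp (-1) from ?_)
    have : Real.exp (-1) < 1 := by rw [Real.exp_lt_one_iff]; norm_num
    nlinarith
  have hGd : ∀ ρ : ℝ, 0 ≤ ρ → HasDerivAt (fun ρ => Real.log (M + ρ * e)) (e / (M + ρ * e)) ρ := by
    intro ρ hρ
    have h1 := (((hasDerivAt_id ρ).mul_const e).const_add M).log (by simp; positivity)
    simpa using h1
  have hGd2 : ∀ ρ : ℝ, 0 ≤ ρ →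
      HasDerivAt (fun ρ => e / (M + ρ * e)) (-(e / (M + ρ * e)) ^ 2) ρ := by
    intro ρ hρ
    have h1 := (hasDerivAt_const ρ e).div (((hasDerivAt_id ρ).mul_const e).const_add M)
      (by simp; positivity)
    refine h1.congr_deriv ?_
    have : 0 < M + ρ * e := by positivity
    simp only [id]
    field_simp
    ring
  exact lapl_radial (g := fun ρ => wh B α S (Real.log (M + ρ * e)) * cut (Real.log (M + ρ * e) / R))
    (g' := fun ρ => wH1 B α R S (Real.log (M + ρ * e)) * (e / (M + ρ * e)))
    (g'' := fun ρ => wH2 B α R S (Real.log (M + ρ * e)) * (e / (M + ρ * e)) * (e / (M + ρ * e))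
      + wH1 B α R S (Real.log (M + ρ * e)) * (-(e / (M + ρ * e)) ^ 2))
    (fun ρ hρ => by
      have := wH_hasDeriv (α := α) (R := R) (S := fun _ => S) hB hS0 (hasDerivAt_const ρ S) (hGd ρ hρ)
      simpa using this)
    (fun ρ hρ => (wH1_hasDeriv hB hS0 (hGd ρ hρ)).mul (hGd2 ρ hρ)) hsl x

end weight

/-! ### The weight is a supersolution -/

/-- The dispersion inequality behind the weighted contraction. With `q = |x|² s^{2b}`, the variables
stand for `z = q/(M+q)` and `p = κ/(M+q)`. The drift `X = (z+p)(2N-4z) - 2z/θ` and the diffusion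
`Y = 4(z+p)z` in the variable `G` satisfy `G X + Y ≥ 8α` and `Y ≤ 4`. -/
lemma weight_main {N b θ B α S G z p ν : ℝ} (hb : 0 < b) (hθ : 0 < θ) (hθN : 1 / θ ≤ N - 2)
    (hB : B = 16 * b * θ) (hS : 1 ≤ S) (hG : 1 ≤ G) (hz : 0 ≤ z) (hz1 : z ≤ 1) (hp : 0 ≤ p)
    (hzp : z + p ≤ 1) (hν : ν * (1 - z) ≤ p * (2 * N - 4)) (hν0 : 0 ≤ ν) (hα : 8 * α ≤ 4)
    (hα' : 8 * α ≤ ν) :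
    -(-(α / S) + G ^ 2 / (B * S ^ 2)) + b * θ * (-(2 * G / (B * S)) * ((z + p) * (2 * N - 4 * z) - 2 * z / θ)
      + (4 * G ^ 2 / (B * S) ^ 2 - 2 / (B * S)) * (4 * (z + p) * z)) ≤ 0 := by
  set X := (z + p) * (2 * N - 4 * z) - 2 * z / θ with hX
  have hB0 : 0 < B := by rw [hB]; positivity
  have hS0 : 0 < S := by linarith
  have e1 : 2 * z / θ ≤ 2 * z * (N - 2) := by
    have := mul_le_mul_of_nonneg_left hθN (show 0 ≤ 2 * z by linarith)
    calc 2 * z / θ = 2 * z * (1 / θ) := by ring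
      _ ≤ _ := this
  have hX1 : 4 * z * (1 - z) + ν * (1 - z) ≤ X := by
    have : p * (2 * N - 4) ≤ p * (2 * N - 4 * z) := mul_le_mul_of_nonneg_left (by linarith) hp
    rw [hX]; nlinarith
  have hX0 : 0 ≤ X := by
    refine le_trans ?_ hX1
    have : 0 ≤ 1 - z := by linarith
    positivity
  have hXY : 8 * α ≤ G * X + 4 * (z + p) * z := by
    have h1 : X ≤ G * X := by nlinarith
    have h2 : 0 ≤ p * z := mul_nonneg hp hz
    have h3 : 8 * α * z ≤ 4 * z := by nlinarith
    have h4 : 8 * α * (1 - z) ≤ ν * (1 - z) := mul_le_mul_of_nonneg_right hα' (by linarith)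
    nlinarith
  have hY : 4 * (z + p) * z ≤ 4 := by nlinarith
  have e : -(-(α / S) + G ^ 2 / (B * S ^ 2)) + b * θ * (-(2 * G / (B * S)) * X
      + (4 * G ^ 2 / (B * S) ^ 2 - 2 / (B * S)) * (4 * (z + p) * z))
      = (1 / S) * (α - (1 / 8) * (G * X + 4 * (z + p) * z))
        + G ^ 2 / (B * S ^ 2) * ((4 * (z + p) * z) / 4 - 1) := by
    have : b * θ = B / 16 := by rw [hB]; ring
    rw [this]
    have := hB0.ne'
    field_simp
    ring
  rw [e]
  have f1 : (1 / S) * (α - (1 / 8) * (G * X + 4 * (z + p) * z)) ≤ 0 :=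
    mul_nonpos_of_nonneg_of_nonpos (by positivity) (by linarith)
  have f2 : G ^ 2 / (B * S ^ 2) * ((4 * (z + p) * z) / 4 - 1) ≤ 0 :=
    mul_nonpos_of_nonneg_of_nonpos (by positivity) (by linarith)
  linarith

/-- The terms created by the cutoff, whose first two derivatives are `c1` and `c2`, are
`O((1+G)/R)`. -/
lemma weight_extra {N b θ B R S G z p c1 c2 K : ℝ} (hb : 0 < b) (hθ : 0 < θ)
    (hB : B = 16 * b * θ) (hS : 1 ≤ S) (hG : 1 ≤ G) (hR : 1 ≤ R) (hz : 0 ≤ z) (hz1 : z ≤ 1)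
    (hp : 0 ≤ p) (hzp : z + p ≤ 1) (hN : 4 ≤ N) (hK : 0 ≤ K) (hc1 : |c1| ≤ K) (hc2 : |c2| ≤ K) :
    b * θ * ((c1 / R) * ((z + p) * (2 * N - 4 * z) - 2 * z / θ)
      + (- 2 * (2 * G / (B * S)) * (c1 / R) + c2 / R ^ 2) * (4 * (z + p) * z))
      ≤ b * θ * K * (2 * N + 2 / θ + 4 + 16 / B) / R * (1 + G) := by
  set X := (z + p) * (2 * N - 4 * z) - 2 * z / θ with hX
  have hB0 : 0 < B := by rw [hB]; positivity
  have hS0 : 0 < S := by linarith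
  have hR0 : 0 < R := by linarith
  have h0 : 0 ≤ z / θ := by positivity
  have h1 : z / θ ≤ 1 / θ := by gcongr
  have hXa : |X| ≤ 2 * N + 2 / θ := by
    have e1 : 2 * z / θ = 2 * (z / θ) := by ring
    have e2 : 2 / θ = 2 * (1 / θ) := by ring
    have h2 : 0 ≤ (z + p) * (2 * N - 4 * z) := mul_nonneg (by linarith) (by linarith)
    have h3 : (z + p) * (2 * N - 4 * z) ≤ 1 * (2 * N) :=
      mul_le_mul hzp (by linarith) (by linarith) (by linarith)
    rw [abs_le]
    constructor <;> linarith
  set Y := 4 * (z + p) * z with hYd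
  have hY0 : 0 ≤ Y := by positivity
  have hY : Y ≤ 4 := by rw [hYd]; nlinarith
  have a1 : (c1 / R) * X ≤ K / R * (2 * N + 2 / θ) := by
    refine (le_abs_self _).trans ?_
    rw [abs_mul, abs_div, abs_of_pos hR0]
    gcongr
  have a2 : - 2 * (2 * G / (B * S)) * (c1 / R) * Y ≤ 4 * G / B * (K / R) * 4 := by
    refine (le_abs_self _).trans ?_
    have e : |-2 * (2 * G / (B * S)) * (c1 / R) * Y| = 4 * G / (B * S) * (|c1| / R) * Y := by
      rw [abs_mul, abs_mul, abs_mul, abs_div c1, abs_of_pos hR0, abs_of_nonneg hY0,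
        abs_of_nonneg (show 0 ≤ 2 * G / (B * S) by positivity)]
      norm_num
      left; left; ring
    rw [e]
    have : B ≤ B * S := le_mul_of_one_le_right hB0.le hS
    gcongr
  have a3 : c2 / R ^ 2 * Y ≤ K / R * 4 := by
    refine (le_abs_self _).trans ?_
    rw [abs_mul, abs_div, abs_of_nonneg hY0, abs_of_nonneg (show 0 ≤ R ^ 2 by positivity)]
    have : R ≤ R ^ 2 := by nlinarith
    gcongr
  have hsum : (c1 / R) * X + (- 2 * (2 * G / (B * S)) * (c1 / R) + c2 / R ^ 2) * Y
      ≤ K / R * (2 * N + 2 / θ) + 4 * G / B * (K / R) * 4 + K / R * 4 := by linarith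
  have hkr : 0 ≤ K / R := by positivity
  have e5 : K / R * (2 * N + 2 / θ) + 4 * G / B * (K / R) * 4 + K / R * 4
      ≤ K / R * (2 * N + 2 / θ + 4 + 16 / B) * (1 + G) := by
    have t1 : 0 ≤ K / R * (2 * N + 2 / θ + 4) * G := by positivity
    have t2 : 0 ≤ K / R * (16 / B) := by positivity
    have : 4 * G / B * (K / R) * 4 = K / R * (16 / B) * G := by ring
    rw [this]; nlinarith
  have := mul_le_mul_of_nonneg_left (hsum.trans e5) (show 0 ≤ b * θ by positivity)
  refine this.trans (le_of_eq ?_)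
  ring

/-- The error constant in the supersolution inequality for the truncated weight. -/
def wK (N b θ B K : ℝ) : ℝ := b * θ * K * (2 * N + 2 / θ + 4 + 16 / B)

/-- The truncated weight is a supersolution of the adjoint problem up to an error `O(1/R)`. -/
lemma wt_super {N : ℕ} {b θ M B α R T s₁ κ ka K : ℝ} (hb : 0 < b) (hθ : 0 < θ)
    (hθN : 1 / θ ≤ (N : ℝ) - 2) (hN : 4 ≤ (N : ℝ)) (hB : B = 16 * b * θ) (hM : 3 ≤ M) (hs₁ : 0 < s₁)
    (hR : 1 ≤ R) (hka : 0 < ka) (hκ : ka ≤ κ) (hκM : κ ≤ M)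
    (hα : 8 * α ≤ 4) (hα' : 8 * α ≤ ka * (2 * N - 4) / M)
    (hK : 0 ≤ K) (hcut : ∀ z, |deriv cut z| ≤ K ∧ |deriv (deriv cut) z| ≤ K)
    (x : Euc N) {t : ℝ} (ht : s₁ ≤ T - t) :
    deriv (fun r => wt b M B α R T s₁ x r) t
      + b * θ * (κ * (T - t) ^ (-(2 * b)) + ‖x‖ ^ 2) / (T - t) * lapl (fun y => wt b M B α R T s₁ y t) x
      ≤ wK N b θ B K / (R * s₁) * (wh B α (wS T s₁ t) (wG b M T x t) * (1 + wG b M T x t)) := by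
  have hM0 : 0 < M := by linarith
  have hB0 : 0 < B := by rw [hB]; positivity
  have hs : 0 < T - t := by linarith
  rw [(wt_time hM0 hB0 hs₁ x ht).deriv, wt_lapl hM0 hB0 hs₁ x ht]
  have hp := Real.rpow_pos_of_pos hs (2 * b)
  rw [Real.rpow_neg hs.le]
  set e := (T - t) ^ (2 * b) with he
  set S := wS T s₁ t with hSd
  have hS : 1 ≤ S := by
    have : 0 ≤ Real.log ((T - t) / s₁) := Real.log_nonneg ((one_le_div hs₁).2 ht)
    rw [hSd]; unfold wS; linarith
  set G := wG b M T x t with hGd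
  have hq : 0 ≤ ‖x‖ ^ 2 * e := by positivity
  have hG : 1 ≤ G := by
    rw [hGd]; unfold wG
    rw [Real.le_log_iff_exp_le (by positivity)]
    have := Real.exp_one_lt_d9
    linarith
  set q := ‖x‖ ^ 2 * e with hqd
  have hMq : 0 < M + q := by positivity
  have hz : 0 ≤ q / (M + q) := by positivity
  have hz1 : q / (M + q) ≤ 1 := by rw [div_le_one hMq]; linarith
  have hκ0 : 0 < κ := by linarith
  have hpp : 0 ≤ κ / (M + q) := by positivity
  have hzp : q / (M + q) + κ / (M + q) ≤ 1 := by
    rw [← add_div, div_le_one hMq]; linarith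
  have h1z : 1 - q / (M + q) = M / (M + q) := by field_simp; ring
  have hν : ka * (2 * N - 4) / M * (1 - q / (M + q)) ≤ κ / (M + q) * (2 * N - 4) := by
    rw [h1z]
    have e1 : ka * (2 * (N:ℝ) - 4) / M * (M / (M + q)) = ka / (M + q) * (2 * N - 4) := by
      field_simp
    rw [e1]
    have : 0 ≤ 2 * (N:ℝ) - 4 := by linarith
    gcongr
  have hν0 : 0 ≤ ka * (2 * (N:ℝ) - 4) / M := by
    have : 0 ≤ 2 * (N:ℝ) - 4 := by linarith
    positivity
  have m1 := weight_main (S := S) (G := G) hb hθ hθN hB hS hG hz hz1 hpp hzp hν hν0 hα hα'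
  have m2 := weight_extra (S := S) (G := G) (c1 := deriv cut (G / R)) (c2 := deriv (deriv cut) (G / R))
    hb hθ hB hS hG hR hz hz1 hpp hzp hN hK (hcut _).1 (hcut _).2
  set z := q / (M + q) with hzd
  set p := κ / (M + q) with hpd
  have hh : 0 < wh B α S G := wh_pos (by linarith)
  have hc0 := cut_nonneg (G / R)
  have hid : wHS B α R S G * (-(1 / (T - t))) + wH1 B α R S G * (-(2 * b * z / (T - t)))
      + b * θ * (κ * e⁻¹ + ‖x‖ ^ 2) / (T - t) * (2 * N * (wH1 B α R S G * (e / (M + q)))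
        + 4 * ‖x‖ ^ 2 * (wH2 B α R S G * (e / (M + q)) * (e / (M + q))
          + wH1 B α R S G * (-(e / (M + q)) ^ 2)))
      = wh B α S G / (T - t) * (cut (G / R) * (-(-(α / S) + G ^ 2 / (B * S ^ 2))
          + b * θ * (-(2 * G / (B * S)) * ((z + p) * (2 * N - 4 * z) - 2 * z / θ)
            + (4 * G ^ 2 / (B * S) ^ 2 - 2 / (B * S)) * (4 * (z + p) * z)))
        + b * θ * ((deriv cut (G / R) / R) * ((z + p) * (2 * N - 4 * z) - 2 * z / θ)
          + (- 2 * (2 * G / (B * S)) * (deriv cut (G / R) / R)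
            + deriv (deriv cut) (G / R) / R ^ 2) * (4 * (z + p) * z))) := by
    have hx : ‖x‖ ^ 2 = z * (M + q) / e := by rw [hzd, hqd]; field_simp
    have hk : κ = p * (M + q) := by rw [hpd]; field_simp
    rw [hx, hk]
    unfold wHS wH1 wH2
    generalize wh B α S G = h
    generalize cut (G / R) = c
    generalize deriv cut (G / R) / R = c1
    generalize deriv (deriv cut) (G / R) / R ^ 2 = c2
    generalize G ^ 2 / (B * S ^ 2) = g1
    generalize 2 * G / (B * S) = g2
    generalize (4 * G ^ 2 / (B * S) ^ 2 - 2 / (B * S)) = g3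
    generalize α / S = g4
    have hs' := hs.ne'
    have hMq' := hMq.ne'
    have he' := hp.ne'
    clear_value z p e q S G
    generalize M + q = Q at *
    generalize T - t = s at *
    field_simp
    ring
  rw [hid]
  have hcm := mul_nonpos_of_nonneg_of_nonpos hc0 m1
  calc _ ≤ wh B α S G / (T - t) * (wK N b θ B K / R * (1 + G)) := by
        refine mul_le_mul_of_nonneg_left ?_ (by positivity)
        unfold wK
        linarith
    _ ≤ wh B α S G / s₁ * (wK N b θ B K / R * (1 + G)) := by
        have : 0 ≤ wK N b θ B K := by unfold wK; positivity
        gcongr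
    _ = _ := by field_simp

/-! ### The weighted L¹ contraction step -/

lemma lapl_zero_off {N : ℕ} {ψ : Euc N → ℝ} (hψ : ContDiff ℝ 2 ψ) {K : Set (Euc N)}
    (hK : IsCompact K) (h0 : ∀ x ∉ K, ψ x = 0) {x : Euc N} (hx : x ∉ K) : lapl ψ x = 0 := by
  have hts : tsupport ψ ⊆ K :=
    closure_minimal (fun y hy => by by_contra h; exact hy (h0 y h)) hK.isClosed
  rw [lapl_eq hψ]
  refine Finset.sum_eq_zero fun i _ => ?_
  by_contra h
  have h1 : x ∈ tsupport (pd i (pd i ψ)) := subset_tsupport _ h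
  exact hx (hts (tsupport_fderiv_apply_subset ℝ (eb i) (tsupport_fderiv_apply_subset ℝ (eb i) h1)))

lemma sg_mul_integrableOn {N : ℕ} {v g : Euc N → ℝ} (hv : Continuous v) (hg : Continuous g)
    {K : Set (Euc N)} (hK : IsCompact K) : IntegrableOn (fun x => sg (v x) * g x) K := by
  have h1 : IntegrableOn g K := hg.continuousOn.integrableOn_compact hK
  refine Integrable.bdd_mul (c := 1) h1 ?_ ?_
  · exact (sg_measurable.comp hv.measurable).aestronglyMeasurable
  · exact Filter.Eventually.of_forall fun x => by rw [Real.norm_eq_abs]; exact sg_abs_le _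

/-- The linear functional `∫ sgn(w(t)) w ψ`, which touches `∫ |w| ψ` from below at time `t`, has
derivative controlled by the adjoint operator applied to `ψ`. -/
lemma kato_step {N : ℕ} {w ψ : Euc N → ℝ → ℝ} {I J : Set ℝ} (hI : IsOpen I) (hJ : IsOpen J)
    (hw : STSmooth w I) (hψ : STSmooth ψ J) {t : ℝ} (htI : t ∈ I) (htJ : t ∈ J)
    {P a g : Euc N → ℝ} (hP : ContDiff ℝ 2 P) (ha : ∀ x, 0 < a x) (hPa : ∀ x, P x = a x * w x t)
    (hpde : ∀ x, HasDerivAt (fun s => w x s) (lapl P x) t)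
    {K : Set (Euc N)} (hK : IsCompact K) (hψK : ∀ x ∉ K, ψ x t = 0) (hψ0 : ∀ x, 0 ≤ ψ x t)
    (hg : Continuous g)
    (hsup : ∀ x, deriv (fun s => ψ x s) t + a x * lapl (fun y => ψ y t) x ≤ g x) :
    ∃ F', HasDerivAt (fun r => ∫ x in K, sg (w x t) * (w x r * ψ x r)) F' t ∧
      F' ≤ ∫ x in K, |w x t| * g x := by
  have hwc : Continuous fun x => w x t := (hw.slice hI htI).continuous
  have hψ2 : ContDiff ℝ 2 fun x => ψ x t := hψ.slice hJ htJ
  have hψc := hψ2.continuous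
  have hlP := lapl_continuous hP
  have hlψ := lapl_continuous hψ2
  have hψt : Continuous fun x => deriv (fun s => ψ x s) t := by
    have := (hψ.deriv_contOn hJ).comp (f := fun x : Euc N => (x, t)) (s := Set.univ)
      (by fun_prop) fun x _ => ⟨trivial, htJ⟩
    exact continuousOn_univ.1 this
  obtain ⟨ε, hε, hball⟩ := Metric.isOpen_iff.1 (hI.inter hJ) t ⟨htI, htJ⟩
  have hsub : Set.Icc (t - ε / 2) (t + ε / 2) ⊆ I ∩ J := fun r hr => hball (by
    rw [Metric.mem_ball, Real.dist_eq, abs_lt]; constructor <;> linarith [hr.1, hr.2])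
  have swap : ∀ {v : Euc N → ℝ → ℝ} {L : Set ℝ}, Set.Icc (t - ε / 2) (t + ε / 2) ⊆ L →
      ContinuousOn (fun p : Euc N × ℝ => v p.1 p.2) (Set.univ ×ˢ L) →
      ContinuousOn (fun p : ℝ × Euc N => v p.2 p.1) (Set.Icc (t - ε / 2) (t + ε / 2) ×ˢ K) := by
    intro v L hL hv
    exact hv.comp (f := fun p : ℝ × Euc N => (p.2, p.1)) (by fun_prop)
      fun p hp => ⟨trivial, hL hp.1⟩
  have hsI : Set.Icc (t - ε / 2) (t + ε / 2) ⊆ I := fun r hr => (hsub hr).1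
  have hsJ : Set.Icc (t - ε / 2) (t + ε / 2) ⊆ J := fun r hr => (hsub hr).2
  have hder := hasDerivAt_setIntegral_compact (volume : Measure (Euc N)) hK
    (g := fun x => sg (w x t)) (sg_measurable.comp hwc.measurable) (fun x => sg_abs_le _)
    (F := fun r x => w x r * ψ x r)
    (F' := fun r x => deriv (fun s => w x s) r * ψ x r + w x r * deriv (fun s => ψ x s) r)
    (a := t - ε / 2) (b := t + ε / 2) (r0 := t) ⟨by linarith, by linarith⟩
    ((swap hsI hw.contOn).mul (swap hsJ hψ.contOn))
    (((swap (v := fun x r => deriv (fun s => w x s) r) hsI (hw.deriv_contOn hI)).mul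
      (swap hsJ hψ.contOn)).add ((swap hsI hw.contOn).mul
      (swap (v := fun x r => deriv (fun s => ψ x s) r) hsJ (hψ.deriv_contOn hJ))))
    (fun r hr x _ => by
      have hr' := Set.Ioo_subset_Icc_self hr
      exact (hw.hasDeriv hI x (hsI hr')).mul (hψ.hasDeriv hJ x (hsJ hr')))
  refine ⟨_, hder, ?_⟩
  have hsgn : ∀ x, sg (P x) = sg (w x t) := fun x => by rw [hPa x, sg_mul_pos (ha x)]
  have i1 : IntegrableOn (fun x => sg (w x t) * (lapl P x * ψ x t)) K := sg_mul_integrableOn hwc (hlP.mul hψc) hK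
  have i2 : IntegrableOn (fun x => sg (w x t) * (w x t * deriv (fun s => ψ x s) t)) K :=
    sg_mul_integrableOn hwc (hwc.mul hψt) hK
  have e1 : ∫ x in K, sg (w x t) * (deriv (fun s => w x s) t * ψ x t
        + w x t * deriv (fun s => ψ x s) t)
      = (∫ x in K, sg (w x t) * (lapl P x * ψ x t))
        + ∫ x in K, sg (w x t) * (w x t * deriv (fun s => ψ x s) t) := by
    rw [← integral_add i1 i2]
    refine integral_congr_ae (Filter.Eventually.of_forall fun x => ?_)
    simp only [(hpde x).deriv]; ring
  have e2 : ∫ x in K, sg (w x t) * (lapl P x * ψ x t) = ∫ x, sg (P x) * (lapl P x * ψ x t) := by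
    rw [setIntegral_eq_integral_of_forall_compl_eq_zero]
    · simp only [hsgn]
    · intro x hx; rw [hψK x hx]; ring
  have hcs : HasCompactSupport fun x => ψ x t := HasCompactSupport.intro hK hψK
  have e3 := kato_integral hP hψ2 hcs hψ0
  have e4 : ∫ x, |P x| * lapl (fun y => ψ y t) x = ∫ x in K, |P x| * lapl (fun y => ψ y t) x := by
    rw [setIntegral_eq_integral_of_forall_compl_eq_zero]
    intro x hx; rw [lapl_zero_off hψ2 hK hψK hx]; ring
  have i3 : IntegrableOn (fun x => |P x| * lapl (fun y => ψ y t) x) K :=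
    (hP.continuous.abs.mul hlψ).continuousOn.integrableOn_compact hK
  have i4 : IntegrableOn (fun x => |w x t| * g x) K :=
    (hwc.abs.mul hg).continuousOn.integrableOn_compact hK
  rw [e1, e2]
  calc _ ≤ (∫ x in K, |P x| * lapl (fun y => ψ y t) x)
        + ∫ x in K, sg (w x t) * (w x t * deriv (fun s => ψ x s) t) := by
        rw [← e4]; gcongr
    _ = ∫ x in K, (|P x| * lapl (fun y => ψ y t) x
        + sg (w x t) * (w x t * deriv (fun s => ψ x s) t)) := (integral_add i3 i2).symm
    _ ≤ _ := by
        refine setIntegral_mono_on (i3.add i2) i4 hK.measurableSet fun x _ => ?_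
        have : |P x| = a x * |w x t| := by rw [hPa x, abs_mul, abs_of_pos (ha x)]
        rw [← mul_assoc, sg_mul_self, this]
        have := mul_le_mul_of_nonneg_left (hsup x) (abs_nonneg (w x t))
        linarith

/-- A function touched from below by functions of derivative at most `c` grows at rate at most
`c`. -/
lemma growth_of_touching {E : ℝ → ℝ} {c t₁ : ℝ} (ht : 0 ≤ t₁) (hE : ContinuousOn E (Set.Icc 0 t₁))
    (h : ∀ t ∈ Set.Ioc 0 t₁, ∃ (F : ℝ → ℝ) (F' : ℝ), HasDerivAt F F' t ∧ F t = E t ∧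
      (∀ r ∈ Set.Ioo 0 t, F r ≤ E r) ∧ F' ≤ c) : E t₁ ≤ E 0 + c * t₁ := by
  have hmap : Set.MapsTo (fun τ => t₁ - τ) (Set.Icc 0 t₁) (Set.Icc 0 t₁) := fun τ hτ =>
    ⟨by linarith [hτ.2], by linarith [hτ.1]⟩
  have key := image_le_of_liminf_slope_right_le_deriv_boundary (f := fun τ => -E (t₁ - τ))
    (a := 0) (b := t₁) (B := fun τ => -E t₁ + c * τ) (B' := fun _ => c)
    ((hE.comp (by fun_prop) hmap).neg) (by simp) (by fun_prop)
    (fun x _ => by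
      have := (((hasDerivAt_id x).const_mul c).const_add (-E t₁)).hasDerivWithinAt (s := Set.Ici x)
      simpa using this)
    (fun τ hτ r hr => by
      obtain ⟨F, F', hF, hFt, hFE, hFc⟩ := h (t₁ - τ) ⟨by linarith [hτ.2], by linarith [hτ.1]⟩
      have hG : HasDerivAt (fun z => -F (t₁ - z)) F' τ := by
        have h1 : HasDerivAt (fun z => t₁ - z) (-1) τ := by
          simpa using (hasDerivAt_id τ).const_sub t₁
        exact ((hF.comp τ h1).neg).congr_deriv (by ring)
      have hsl := (hasDerivWithinAt_iff_tendsto_slope' (s := Set.Ioi τ) (by simp)).1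
        (hG.hasDerivWithinAt (s := Set.Ioi τ))
      have hev := hsl.eventually (gt_mem_nhds (lt_of_le_of_lt hFc hr))
      refine Filter.Eventually.frequently ?_
      filter_upwards [hev, Ioo_mem_nhdsGT hτ.2] with z hz hzτ
      refine lt_of_le_of_lt ?_ hz
      rw [slope_def_field, slope_def_field]
      have h2 := hFE (t₁ - z) ⟨by linarith [hzτ.2], by linarith [hzτ.1]⟩
      have h3 : 0 < z - τ := by linarith [hzτ.1]
      rw [hFt]
      gcongr)
  have := key (x := t₁) ⟨ht, le_rfl⟩
  simp only [sub_self] at this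
  linarith

/-! ### Comparison of powers and integrability of the weight -/

lemma contOn_setIntegral_compact {X : Type*} [TopologicalSpace X] [T2Space X]
    [SecondCountableTopology X] [MeasurableSpace X] [OpensMeasurableSpace X]
    (μ : Measure X) [IsFiniteMeasureOnCompacts μ] {K : Set X} (hK : IsCompact K)
    {F : X → ℝ → ℝ} {I : Set ℝ} (hI : IsCompact I)
    (hF : ContinuousOn (fun p : X × ℝ => F p.1 p.2) (K ×ˢ I)) :
    ContinuousOn (fun r => ∫ x in K, F x r ∂μ) I := by
  obtain ⟨C, hC⟩ := (hK.prod hI).exists_bound_of_continuousOn hF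
  refine continuousOn_of_dominated (bound := fun _ => C) (fun r hr => ?_) (fun r hr => ?_) ?_ ?_
  · exact (hF.comp (f := fun x => (x, r)) (by fun_prop)
      (fun x hx => ⟨hx, hr⟩)).aestronglyMeasurable hK.measurableSet
  · exact (ae_restrict_iff' hK.measurableSet).2
      (Filter.Eventually.of_forall fun x hx => hC (x, r) ⟨hx, hr⟩)
  · exact integrableOn_const hK.measure_lt_top.ne
  · exact (ae_restrict_iff' hK.measurableSet).2 (Filter.Eventually.of_forall fun x hx =>
      hF.comp (f := fun r => (x, r)) (by fun_prop) (fun r hr => ⟨hx, hr⟩))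

/-- The mean value theorem for `x ↦ x^m`, in a form that also covers `p = q`. -/
lemma rpow_mvt {m p q : ℝ} (hp : 0 < p) (hq : 0 < q) :
    ∃ ξ, min p q ≤ ξ ∧ ξ ≤ max p q ∧ p ^ m - q ^ m = m * ξ ^ (m - 1) * (p - q) := by
  have key : ∀ a b : ℝ, 0 < a → a < b →
      ∃ ξ, a ≤ ξ ∧ ξ ≤ b ∧ b ^ m - a ^ m = m * ξ ^ (m - 1) * (b - a) := by
    intro a b ha hab
    obtain ⟨c, hc, he⟩ := exists_hasDerivAt_eq_slope (fun x => x ^ m) (fun x => m * x ^ (m - 1)) hab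
      (ContinuousOn.rpow_const continuousOn_id fun x hx => Or.inl (ha.trans_le hx.1).ne')
      (fun x hx => Real.hasDerivAt_rpow_const (Or.inl (ha.trans hx.1).ne'))
    refine ⟨c, hc.1.le, hc.2.le, ?_⟩
    rw [he, div_mul_cancel₀]
    linarith
  rcases lt_trichotomy p q with h | h | h
  · obtain ⟨ξ, h1, h2, h3⟩ := key p q hp h
    exact ⟨ξ, by simpa [h.le] using h1, by simpa [h.le] using h2, by linarith⟩
  · exact ⟨p, by simp, by simp, by rw [h]; ring⟩
  · obtain ⟨ξ, h1, h2, h3⟩ := key q p hq h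
    exact ⟨ξ, by simpa [h.le] using h1, by simpa [h.le] using h2, by linarith⟩

section
variable {N : ℕ} {m T k : ℝ}

lemma Bb_pow_sub_one (h : Par N m) (hk : 0 < k) {t : ℝ} (ht : t < T) (x : Euc N) :
    Bb N m T k x t ^ (m - 1) = (k * (T - t) ^ (-(2 * bC N m)) + ‖x‖ ^ 2) / (Cst N m * (T - t)) := by
  have hb := Bb_base_pos h hk ht x
  have h1 : (1 - m) ≠ 0 := by linarith [h.m1]
  unfold Bb
  rw [← Real.rpow_mul hb.le, show 1 / (1 - m) * (m - 1) = -1 by field_simp; ring,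
    Real.rpow_neg_one, inv_div, h.gamma]
  ring_nf

lemma Bb_anti (h : Par N m) {k' : ℝ} (hk : 0 < k) (hkk : k ≤ k') {t : ℝ} (ht : t < T) (x : Euc N) :
    Bb N m T k' x t ≤ Bb N m T k x t := by
  have h1 : 0 < T - t := by linarith
  have h2 := Real.rpow_pos_of_pos h1 (2 * gammaC N m)
  have := h.C0
  have hk' : 0 < k' := by linarith
  unfold Bb
  refine Real.rpow_le_rpow (by positivity) ?_ h.n0.le
  gcongr

lemma Bb_le (h : Par N m) (hk : 0 < k) {t : ℝ} (ht0 : 0 ≤ t) (ht : t < T) (x : Euc N) :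
    Bb N m T k x t ≤ (Cst N m * T * T ^ (2 * bC N m) / k) ^ (1 / (1 - m)) := by
  have h1 : 0 < T - t := by linarith
  have hC := h.C0
  have hb := h.b0
  have h2 := Real.rpow_pos_of_pos h1 (2 * bC N m)
  refine Real.rpow_le_rpow (Bb_base_pos h hk ht x).le ?_ h.n0.le
  rw [h.gamma, show 2 * -bC N m = -(2 * bC N m) by ring, Real.rpow_neg h1.le]
  have h3 : (T - t) ^ (2 * bC N m) ≤ T ^ (2 * bC N m) :=
    Real.rpow_le_rpow h1.le (by linarith) (by linarith)
  calc _ ≤ Cst N m * (T - t) / (k * ((T - t) ^ (2 * bC N m))⁻¹) := by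
        gcongr
        nlinarith [sq_nonneg ‖x‖]
    _ = Cst N m * (T - t) * (T - t) ^ (2 * bC N m) / k := by field_simp
    _ ≤ _ := by
        have hT : 0 < T := by linarith
        gcongr
        linarith
end

/-- Base point of the logarithmic variable in the weight. -/
def qM (k₁ k₀ : ℝ) : ℝ := max k₁ k₀ + 3
/-- Width of the Gaussian weight. -/
def qB (N : ℕ) (m : ℝ) : ℝ := 16 * bC N m * ((1 - m) / 2)
/-- Decay exponent of the weighted `L¹` norm in the logarithmic time. -/
def qα (N : ℕ) (k₁ k₂ k₀ : ℝ) : ℝ := min 4 (min k₂ k₀ * (2 * N - 4) / qM k₁ k₀) / 8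

lemma qB_pos {N : ℕ} {m : ℝ} (h : Par N m) : 0 < qB N m := by
  have := h.b0
  have : 0 < (1 - m) := by linarith [h.m1]
  unfold qB; positivity

section decay
variable {N : ℕ} {m T k₁ k₂ k₀ : ℝ} {u : Euc N → ℝ → ℝ}

lemma Trapped.qM_ge (S : Trapped N m T k₁ k₂ u) : 3 ≤ qM k₁ k₀ := by
  have := le_max_left k₁ k₀
  have := S.k1
  unfold qM; linarith

lemma Trapped.qα_pos (S : Trapped N m T k₁ k₂ u) (hk0 : 0 < k₀) : 0 < qα N k₁ k₂ k₀ := by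
  have h1 := S.qM_ge (k₀ := k₀)
  have h2 : 0 < min k₂ k₀ := lt_min S.k2 hk0
  have h3 := S.par.N4
  have : 0 < min k₂ k₀ * (2 * N - 4) / qM k₁ k₀ := div_pos (mul_pos h2 (by linarith)) (by linarith)
  unfold qα
  have := lt_min (show (0:ℝ) < 4 by norm_num) this
  positivity

/-- The difference `u^m - B^m` is the difference `u - B` times the diffusion coefficient of some
Barenblatt function with parameter between the extreme ones. -/
lemma Trapped.diff_pow (S : Trapped N m T k₁ k₂ u) (hk0 : 0 < k₀) (x : Euc N) {t : ℝ}
    (ht : t ∈ Set.Ico 0 T) : ∃ κ, min k₂ k₀ ≤ κ ∧ κ ≤ max k₁ k₀ ∧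
      u x t ^ m - Bb N m T k₀ x t ^ m
        = bC N m * ((1 - m) / 2) * (κ * (T - t) ^ (-(2 * bC N m)) + ‖x‖ ^ 2) / (T - t)
          * (u x t - Bb N m T k₀ x t) := by
  have h := S.par
  have hC := h.C0
  have hs : 0 < T - t := by linarith [ht.2]
  have hka : 0 < min k₂ k₀ := lt_min S.k2 hk0
  have hkb : 0 < max k₁ k₀ := lt_max_of_lt_right hk0
  obtain ⟨ξ, h1, h2, h3⟩ := rpow_mvt (m := m) (S.pos x ht) (Bb_pos h hk0 ht.2 x)
  have hlo : Bb N m T (max k₁ k₀) x t ≤ ξ := by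
    refine le_trans (le_min ?_ ?_) h1
    · exact (Bb_anti h S.k1 (le_max_left _ _) ht.2 x).trans (S.lo x t ht)
    · exact Bb_anti h hk0 (le_max_right _ _) ht.2 x
  have hhi : ξ ≤ Bb N m T (min k₂ k₀) x t := by
    refine h2.trans (max_le ?_ ?_)
    · exact (S.hi x t ht).trans (Bb_anti h hka (min_le_left _ _) ht.2 x)
    · exact Bb_anti h hka (min_le_right _ _) ht.2 x
  have hξ : 0 < ξ := (Bb_pos h hkb ht.2 x).trans_le hlo
  have hm1 : m - 1 ≤ 0 := by linarith [h.m1]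
  have g1 := Real.rpow_le_rpow_of_nonpos (Bb_pos h hkb ht.2 x) hlo hm1
  have g2 := Real.rpow_le_rpow_of_nonpos hξ hhi hm1
  rw [Bb_pow_sub_one h hkb ht.2 x, le_div_iff₀ (by positivity)] at g1
  rw [Bb_pow_sub_one h hka ht.2 x, div_le_iff₀ (by positivity)] at g2
  have he := Real.rpow_pos_of_pos hs (-(2 * bC N m))
  refine ⟨(ξ ^ (m - 1) * (Cst N m * (T - t)) - ‖x‖ ^ 2) / (T - t) ^ (-(2 * bC N m)), ?_, ?_, ?_⟩
  · rw [le_div_iff₀ he]; linarith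
  · rw [div_le_iff₀ he]; linarith
  · rw [h3, div_mul_cancel₀ _ he.ne']
    have := h.C_b
    have e : bC N m * ((1 - m) / 2) * (ξ ^ (m - 1) * (Cst N m * (T - t)) - ‖x‖ ^ 2 + ‖x‖ ^ 2) / (T - t)
        = (Cst N m * bC N m * (1 - m)) / 2 * ξ ^ (m - 1) := by field_simp; ring
    rw [e, this]; ring

/-- The Gaussian weight decays faster than any power, uniformly in time. -/
lemma wh_major {b M B α T s₁ : ℝ} (hM : 3 ≤ M) (hB : 0 < B) (hα : 0 ≤ α) (hb : 0 < b)
    (hs₁ : 0 < s₁) : ∃ Cc, 0 ≤ Cc ∧ ∀ (x : Euc N) (t : ℝ), s₁ ≤ T - t → 0 ≤ t →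
      wh B α (wS T s₁ t) (wG b M T x t) * (1 + wG b M T x t) ≤ Cc * (1 + ‖x‖ ^ 2) ^ (-(N : ℝ)) := by
  set D := B * wS T s₁ 0 with hD
  set c := min 1 (s₁ ^ (2 * b)) with hc
  have hc0 : 0 < c := lt_min one_pos (Real.rpow_pos_of_pos hs₁ _)
  refine ⟨Real.exp (D * (N + 1) ^ 2 / 4) * c ^ (-(N : ℝ)), by positivity, fun x t ht ht0 => ?_⟩
  have hs : 0 < T - t := by linarith
  have hS1 : 1 ≤ wS T s₁ t := by
    have : 0 ≤ Real.log ((T - t) / s₁) := Real.log_nonneg ((one_le_div hs₁).2 ht)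
    unfold wS; linarith
  have hSS : wS T s₁ t ≤ wS T s₁ 0 := by
    have : Real.log ((T - t) / s₁) ≤ Real.log ((T - 0) / s₁) :=
      Real.log_le_log (by positivity) (by gcongr)
    unfold wS; linarith
  have hD0 : 0 < D := mul_pos hB (by linarith)
  have hp := Real.rpow_pos_of_pos hs (2 * b)
  have hpp : s₁ ^ (2 * b) ≤ (T - t) ^ (2 * b) := Real.rpow_le_rpow hs₁.le ht (by linarith)
  have hMq : 0 < M + ‖x‖ ^ 2 * (T - t) ^ (2 * b) := by positivity
  have hlow : c * (1 + ‖x‖ ^ 2) ≤ M + ‖x‖ ^ 2 * (T - t) ^ (2 * b) := by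
    have h1 : c ≤ 1 := min_le_left _ _
    have h2 : c ≤ (T - t) ^ (2 * b) := (min_le_right _ _).trans hpp
    nlinarith [mul_le_mul_of_nonneg_left h2 (sq_nonneg ‖x‖)]
  set G := wG b M T x t with hG
  have hG0 : 0 ≤ G := by
    rw [hG]; unfold wG
    exact Real.log_nonneg (by nlinarith [mul_nonneg (sq_nonneg ‖x‖) hp.le])
  have e1 : (wS T s₁ t) ^ (-α) ≤ 1 := Real.rpow_le_one_of_one_le_of_nonpos hS1 (by linarith)
  have e2 : Real.exp (-(G ^ 2 / (B * wS T s₁ t))) ≤ Real.exp (-(G ^ 2 / D)) := by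
    rw [Real.exp_le_exp, neg_le_neg_iff]
    exact div_le_div_of_nonneg_left (sq_nonneg G) (mul_pos hB (by linarith))
      (mul_le_mul_of_nonneg_left hSS hB.le)
  have e3 : 1 + G ≤ Real.exp G := by linarith [Real.add_one_le_exp G]
  have e4 : Real.exp (-(N * G)) ≤ c ^ (-(N : ℝ)) * (1 + ‖x‖ ^ 2) ^ (-(N : ℝ)) := by
    rw [← Real.mul_rpow hc0.le (by positivity)]
    have : Real.exp (-(N * G)) = (M + ‖x‖ ^ 2 * (T - t) ^ (2 * b)) ^ (-(N : ℝ)) := by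
      rw [Real.rpow_def_of_pos hMq, hG]; unfold wG; ring_nf
    rw [this]
    exact Real.rpow_le_rpow_of_nonpos (by positivity) hlow (by simp)
  have e5 : -(G ^ 2 / D) + G ≤ D * (N + 1) ^ 2 / 4 + -(N * G) := by
    have : D * (N + 1) ^ 2 / 4 + -(N * G) - (-(G ^ 2 / D) + G) = (G - D * (N + 1) / 2) ^ 2 / D := by
      field_simp; ring
    have h2 : 0 ≤ (G - D * (N + 1) / 2) ^ 2 / D := by positivity
    linarith
  calc wh B α (wS T s₁ t) G * (1 + G)
      ≤ (1 * Real.exp (-(G ^ 2 / D))) * Real.exp G := by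
        unfold wh
        gcongr
    _ = Real.exp (-(G ^ 2 / D) + G) := by rw [one_mul, Real.exp_add]
    _ ≤ Real.exp (D * (N + 1) ^ 2 / 4 + -(N * G)) := Real.exp_le_exp.2 e5
    _ = Real.exp (D * (N + 1) ^ 2 / 4) * Real.exp (-(N * G)) := Real.exp_add _ _
    _ ≤ Real.exp (D * (N + 1) ^ 2 / 4) * (c ^ (-(N : ℝ)) * (1 + ‖x‖ ^ 2) ^ (-(N : ℝ))) := by gcongr
    _ = _ := by ring

lemma integrable_tail (hN : 0 < N) :
    Integrable (fun x : Euc N => (1 + ‖x‖ ^ 2) ^ (-(N : ℝ))) := by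
  have h : ((Module.finrank ℝ (Euc N) : ℕ) : ℝ) < 2 * N := by
    rw [finrank_euclideanSpace, Fintype.card_fin]
    have : (0:ℝ) < N := by exact_mod_cast hN
    linarith
  have := integrable_rpow_neg_one_add_norm_sq (μ := (volume : Measure (Euc N))) h
  convert this using 3
  ring

lemma wt_zero_off {b M B α R s₁ : ℝ} (hb : 0 < b) (hM : 0 ≤ M) (hR : 0 < R) (hs₁ : 0 < s₁) {t : ℝ}
    (ht : s₁ ≤ T - t) {x : Euc N} (hx : x ∉ Metric.closedBall (0 : Euc N) (Real.exp R * s₁ ^ (-b))) :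
    wt b M B α R T s₁ x t = 0 := by
  rw [mem_closedBall_zero_iff, not_le] at hx
  have hs : 0 < T - t := by linarith
  have h0 : 0 < Real.exp R * s₁ ^ (-b) := by positivity
  have h1 : Real.exp (2 * R) < ‖x‖ ^ 2 * s₁ ^ (2 * b) := by
    have h2 : (Real.exp R * s₁ ^ (-b)) ^ 2 < ‖x‖ ^ 2 := pow_lt_pow_left₀ hx h0.le (by norm_num)
    have h3 : (Real.exp R * s₁ ^ (-b)) ^ 2 * s₁ ^ (2 * b) = Real.exp (2 * R) := by
      have e1 : (s₁ ^ (-b)) ^ 2 * s₁ ^ (2 * b) = 1 := by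
        rw [← Real.rpow_natCast, ← Real.rpow_mul hs₁.le, ← Real.rpow_add hs₁]
        norm_num
        rw [show -(b * 2) + 2 * b = 0 by ring, Real.rpow_zero]
      rw [mul_pow, mul_assoc, e1, ← Real.exp_nat_mul]; norm_num
    rw [← h3]
    exact mul_lt_mul_of_pos_right h2 (by positivity)
  have h2 : s₁ ^ (2 * b) ≤ (T - t) ^ (2 * b) := Real.rpow_le_rpow hs₁.le ht (by linarith)
  have h3 : Real.exp (2 * R) ≤ M + ‖x‖ ^ 2 * (T - t) ^ (2 * b) := by
    nlinarith [mul_le_mul_of_nonneg_left h2 (sq_nonneg ‖x‖)]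
  have h4 : 2 * R ≤ wG b M T x t := by
    unfold wG
    rw [Real.le_log_iff_exp_le (lt_of_lt_of_le (Real.exp_pos _) h3)]
    exact h3
  unfold wt
  rw [cut_zero (by rw [le_div_iff₀ hR]; exact h4), mul_zero]

end decay

/-! ### Local L¹ convergence to the Barenblatt solution -/

section decay
variable {N : ℕ} {m T k₁ k₂ k₀ : ℝ} {u : Euc N → ℝ → ℝ}

lemma wt_nonneg {b M B α R s₁ : ℝ} (hs₁ : 0 < s₁) {t : ℝ} (ht : s₁ ≤ T - t) (x : Euc N) :
    0 ≤ wt b M B α R T s₁ x t := by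
  have : 0 ≤ Real.log ((T - t) / s₁) := Real.log_nonneg ((one_le_div hs₁).2 ht)
  exact mul_nonneg (wh_pos (by unfold wS; linarith)).le (cut_nonneg _)

/-- Weighted `L¹` contraction, up to an error vanishing as the truncation radius grows. -/
lemma Trapped.decay_trunc (S : Trapped N m T k₁ k₂ u) (hk0 : 0 < k₀) {t₁ : ℝ} (ht₁ : 0 < t₁)
    (htT : t₁ < T) : ∃ Λ : ℝ, ∀ R : ℝ, 1 ≤ R →
      ∫ x in Metric.closedBall (0 : Euc N) (Real.exp R * (T - t₁) ^ (-bC N m)),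
          |u x t₁ - Bb N m T k₀ x t₁|
            * wt (bC N m) (qM k₁ k₀) (qB N m) (qα N k₁ k₂ k₀) R T (T - t₁) x t₁
        ≤ (∫ x in Metric.closedBall (0 : Euc N) (Real.exp R * (T - t₁) ^ (-bC N m)),
          |u x 0 - Bb N m T k₀ x 0|
            * wt (bC N m) (qM k₁ k₀) (qB N m) (qα N k₁ k₂ k₀) R T (T - t₁) x 0) + Λ / R := by
  have h := S.par
  have hb := h.b0
  have hM := S.qM_ge (k₀ := k₀)
  have hB := qB_pos h
  have hα := S.qα_pos hk0
  have hN4 := h.N4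
  set s₁ := T - t₁ with hs₁d
  have hs₁ : 0 < s₁ := by linarith
  set b := bC N m
  set M := qM k₁ k₀ with hMd
  set B := qB N m with hBd
  set α := qα N k₁ k₂ k₀ with hαd
  obtain ⟨Kc, hKc0, hKc⟩ := cut_bound
  obtain ⟨Cc, hCc0, hCc⟩ := wh_major (N := N) (T := T) hM hB hα.le hb hs₁
  set θ := (1 - m) / 2 with hθd
  have hθ : 0 < θ := by have := h.m1; rw [hθd]; linarith
  have hθN : 1 / θ ≤ (N : ℝ) - 2 := by
    rw [div_le_iff₀ hθ, hθd]
    have := h.range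
    nlinarith
  set K1 := wK N b θ B Kc with hK1
  have hK10 : 0 ≤ K1 := by rw [hK1]; unfold wK; positivity
  set W := (Cst N m * T * T ^ (2 * b) / k₂) ^ (1 / (1 - m))
    + (Cst N m * T * T ^ (2 * b) / k₀) ^ (1 / (1 - m)) with hW
  set J := ∫ x : Euc N, (1 + ‖x‖ ^ 2) ^ (-(N : ℝ)) with hJ
  set w : Euc N → ℝ → ℝ := fun x t => u x t - Bb N m T k₀ x t with hw
  have hwW : ∀ x, ∀ t ∈ Set.Ico 0 T, |w x t| ≤ W := by
    intro x t ht
    have h1 := S.pos x ht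
    have h2 := Bb_pos h hk0 ht.2 x
    have h3 := (S.hi x t ht).trans (Bb_le h S.k2 ht.1 ht.2 x)
    have h4 := Bb_le h hk0 ht.1 ht.2 x
    rw [abs_le]
    constructor <;> simp only [hw] <;> linarith
  have hwS : STSmooth w (Set.Ioo 0 T) :=
    ContDiffOn.sub S.smooth ((Bb_smooth h hk0).mono (Set.prod_mono le_rfl Set.Ioo_subset_Iio_self))
  have hwC : ContinuousOn (fun p : Euc N × ℝ => w p.1 p.2) (Set.univ ×ˢ Set.Ico 0 T) :=
    S.cont.sub ((Bb_smooth h hk0).contOn.mono (Set.prod_mono le_rfl fun t ht => ht.2))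
  have hlt : t₁ < T - s₁ * Real.exp (-1) := by
    have : Real.exp (-1) < 1 := by rw [Real.exp_lt_one_iff]; norm_num
    nlinarith
  refine ⟨W * (K1 / s₁ * Cc * J) * t₁, fun R hR => ?_⟩
  have hR0 : 0 < R := by linarith
  set K := Metric.closedBall (0 : Euc N) (Real.exp R * s₁ ^ (-b)) with hK
  have hKcpt : IsCompact K := isCompact_closedBall _ _
  set ψ : Euc N → ℝ → ℝ := wt b M B α R T s₁ with hψ
  have hψS : STSmooth ψ (Set.Iio (T - s₁ * Real.exp (-1))) := wt_smooth (by linarith) hB hs₁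
  have hcont : ContinuousOn (fun t => ∫ x in K, |w x t| * ψ x t) (Set.Icc 0 t₁) := by
    refine contOn_setIntegral_compact volume hKcpt isCompact_Icc ?_
    refine ContinuousOn.mul (hwC.mono ?_).abs (hψS.contOn.mono ?_)
    · exact Set.prod_mono (Set.subset_univ _) fun t ht => ⟨ht.1, ht.2.trans_lt htT⟩
    · exact Set.prod_mono (Set.subset_univ _) fun t ht => ht.2.trans_lt hlt
  have key := growth_of_touching (c := W * (K1 / s₁ * Cc * J) / R) ht₁.le hcont ?_
  · refine key.trans (le_of_eq ?_)
    ring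
  intro t ht
  have htI : t ∈ Set.Ioo 0 T := ⟨ht.1, ht.2.trans_lt htT⟩
  have htI' : t ∈ Set.Ico 0 T := ⟨ht.1.le, ht.2.trans_lt htT⟩
  have htJ : t ∈ Set.Iio (T - s₁ * Real.exp (-1)) := ht.2.trans_lt hlt
  have hst : s₁ ≤ T - t := by linarith [ht.2]
  have hs : 0 < T - t := by linarith
  choose κ hκ1 hκ2 hκ3 using fun x => S.diff_pow hk0 x htI'
  have hka : 0 < min k₂ k₀ := lt_min S.k2 hk0
  have hum : ContDiff ℝ 2 fun x => u x t ^ m :=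
    S.smooth.pow_slice isOpen_Ioo m htI fun x => S.pos x htI'
  have hBm : ContDiff ℝ 2 fun x => Bb N m T k₀ x t ^ m :=
    (Bb_smooth h hk0).pow_slice isOpen_Iio m htI.2 (Bb_pos h hk0 htI.2)
  set g : Euc N → ℝ := fun x => K1 / (R * s₁) * (Cc * (1 + ‖x‖ ^ 2) ^ (-(N : ℝ))) with hg
  have hgc : Continuous g := by
    refine continuous_const.mul (continuous_const.mul (Continuous.rpow_const (by fun_prop) ?_))
    intro x; left; positivity
  obtain ⟨F', hF', hF'le⟩ := kato_step isOpen_Ioo isOpen_Iio hwS hψS htI htJ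
    (P := fun x => u x t ^ m - Bb N m T k₀ x t ^ m)
    (a := fun x => b * θ * (κ x * (T - t) ^ (-(2 * b)) + ‖x‖ ^ 2) / (T - t)) (g := g)
    (hum.sub hBm)
    (fun x => by
      have := hka.trans_le (hκ1 x)
      have := Real.rpow_pos_of_pos hs (-(2 * b))
      positivity)
    hκ3
    (fun x => by
      rw [lapl_sub hum hBm]
      exact (S.pde x t htI).sub (Bb_pde h hk0 x htI.2))
    hKcpt (fun x hx => wt_zero_off hb (by linarith) hR0 hs₁ hst hx)
    (fun x => wt_nonneg hs₁ hst x) hgc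
    (fun x => by
      have h1 := wt_super (N := N) (α := α) (M := M) (B := B) (R := R) (T := T) (κ := κ x)
        (ka := min k₂ k₀) (K := Kc) hb hθ hθN (by linarith) rfl hM hs₁ hR hka (hκ1 x)
        ((hκ2 x).trans (by rw [hMd]; unfold qM; linarith))
        (by rw [hαd]; unfold qα; linarith [min_le_left 4 (min k₂ k₀ * (2 * (N:ℝ) - 4) / qM k₁ k₀)])
        (by rw [hαd]; unfold qα; linarith [min_le_right 4 (min k₂ k₀ * (2 * (N:ℝ) - 4) / qM k₁ k₀)])
        hKc0 hKc x hst
      refine h1.trans ?_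
      have h2 := hCc x t hst ht.1.le
      have : 0 ≤ K1 / (R * s₁) := by positivity
      exact mul_le_mul_of_nonneg_left h2 this)
  refine ⟨_, F', hF', ?_, ?_, ?_⟩
  · refine integral_congr_ae (Filter.Eventually.of_forall fun x => ?_)
    show sg (w x t) * (w x t * ψ x t) = |w x t| * ψ x t
    rw [← mul_assoc, sg_mul_self]
  · intro r hr
    have hrI : r ∈ Set.Ioo 0 T := ⟨hr.1, hr.2.trans htI.2⟩
    have hrJ : r ∈ Set.Iio (T - s₁ * Real.exp (-1)) := lt_trans hr.2 htJ
    have c1 : Continuous fun x => w x r := (hwS.slice isOpen_Ioo hrI).continuous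
    have c2 : Continuous fun x => ψ x r := (hψS.slice isOpen_Iio hrJ).continuous
    have c3 : Continuous fun x => w x t := (hwS.slice isOpen_Ioo htI).continuous
    refine setIntegral_mono_on (sg_mul_integrableOn c3 (c1.mul c2) hKcpt)
      ((c1.abs.mul c2).continuousOn.integrableOn_compact hKcpt) hKcpt.measurableSet fun x _ => ?_
    have hψ0 : 0 ≤ ψ x r := wt_nonneg hs₁ (by linarith [ht.2, hr.2]) x
    show sg (w x t) * (w x r * ψ x r) ≤ |w x r| * ψ x r
    rw [← mul_assoc]
    refine mul_le_mul_of_nonneg_right ?_ hψ0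
    refine (le_abs_self _).trans ?_
    rw [abs_mul]
    have := sg_abs_le (w x t)
    nlinarith [abs_nonneg (w x r)]
  · refine hF'le.trans ?_
    have hN0 : 0 < N := by have := h.hN; omega
    have hint : Integrable fun x : Euc N => (1 + ‖x‖ ^ 2) ^ (-(N : ℝ)) := integrable_tail hN0
    have hgi : Integrable g := (hint.const_mul Cc).const_mul _
    have hg0 : ∀ x, 0 ≤ g x := fun x => by
      simp only [hg]; positivity
    have c3 : Continuous fun x => w x t := (hwS.slice isOpen_Ioo htI).continuous
    have hW0 : 0 ≤ W := (abs_nonneg _).trans (hwW 0 t htI')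
    calc ∫ x in K, |w x t| * g x ≤ ∫ x in K, W * g x := by
          refine setIntegral_mono_on ((c3.abs.mul hgc).continuousOn.integrableOn_compact hKcpt)
            (hgi.const_mul W).integrableOn hKcpt.measurableSet fun x _ => ?_
          exact mul_le_mul_of_nonneg_right (hwW x t htI') (hg0 x)
      _ ≤ ∫ x, W * g x := setIntegral_le_integral (hgi.const_mul W)
            (Filter.Eventually.of_forall fun x => mul_nonneg hW0 (hg0 x))
      _ = _ := by
          simp only [hg]
          rw [integral_const_mul, integral_const_mul, integral_const_mul, ← hJ]
          field_simp

/-- Local `L¹` convergence to the Barenblatt solution, on balls of the self-similar size. -/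
lemma Trapped.decay (S : Trapped N m T k₁ k₂ u) (hk0 : 0 < k₀) {f : Euc N → ℝ}
    (hf : Integrable f) (hdec : ∀ x, u x 0 = Bb N m T k₀ x 0 + f x) {t₁ : ℝ} (ht₁ : 0 < t₁)
    (htT : t₁ < T) (ρ : ℝ) :
    ∫ x in Metric.closedBall (0 : Euc N) (ρ * (T - t₁) ^ (-bC N m)),
        |u x t₁ - Bb N m T k₀ x t₁|
      ≤ Real.exp (Real.log (qM k₁ k₀ + ρ ^ 2) ^ 2 / qB N m)
        * ((1 + Real.log (T / (T - t₁))) ^ (-qα N k₁ k₂ k₀) * ∫ x, |f x|) := by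
  have h := S.par
  obtain ⟨Λ, hΛ⟩ := S.decay_trunc hk0 ht₁ htT
  have hM := S.qM_ge (k₀ := k₀)
  have hB := qB_pos h
  have hb := h.b0
  set s₁ := T - t₁ with hs₁d
  have hs₁ : 0 < s₁ := by linarith
  set b := bC N m
  set M := qM k₁ k₀ with hMd
  set B := qB N m with hBd
  set α := qα N k₁ k₂ k₀ with hαd
  set L := Real.log (M + ρ ^ 2) with hL
  have hMρ : 0 < M + ρ ^ 2 := by positivity
  have hlt : t₁ < T - s₁ * Real.exp (-1) := by
    have : Real.exp (-1) < 1 := by rw [Real.exp_lt_one_iff]; norm_num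
    nlinarith
  set A := ∫ x in Metric.closedBall (0 : Euc N) (ρ * s₁ ^ (-b)), |u x t₁ - Bb N m T k₀ x t₁| with hA
  have hS0 : 1 ≤ wS T s₁ 0 := by
    have : 0 ≤ Real.log ((T - 0) / s₁) := Real.log_nonneg ((one_le_div hs₁).2 (by linarith))
    unfold wS; linarith
  have main : ∀ R : ℝ, max 1 L ≤ R →
      Real.exp (-(L ^ 2 / B)) * A ≤ (1 + Real.log (T / s₁)) ^ (-α) * (∫ x, |f x|) + Λ / R := by
    intro R hR
    have hR1 : 1 ≤ R := (le_max_left _ _).trans hR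
    have hRL : L ≤ R := (le_max_right _ _).trans hR
    have hR0 : 0 < R := by linarith
    set K := Metric.closedBall (0 : Euc N) (Real.exp R * s₁ ^ (-b)) with hK
    have hKcpt : IsCompact K := isCompact_closedBall _ _
    have hsub : Metric.closedBall (0 : Euc N) (ρ * s₁ ^ (-b)) ⊆ K := by
      refine Metric.closedBall_subset_closedBall ?_
      have h1 : M + ρ ^ 2 ≤ Real.exp R := by
        rw [← Real.log_le_iff_le_exp hMρ]; exact hRL
      have : ρ ≤ Real.exp R := by nlinarith [sq_nonneg (ρ - 1)]
      gcongr
    have hψS : STSmooth (N := N) (wt b M B α R T s₁) (Set.Iio (T - s₁ * Real.exp (-1))) :=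
      wt_smooth (by linarith) hB hs₁
    have hc1 : Continuous fun x => wt (N := N) b M B α R T s₁ x t₁ :=
      (hψS.slice isOpen_Iio hlt).continuous
    have hc0 : Continuous fun x => wt (N := N) b M B α R T s₁ x 0 :=
      (hψS.slice isOpen_Iio (show (0:ℝ) < _ from ht₁.trans hlt)).continuous
    have hwc : Continuous fun x => u x t₁ - Bb N m T k₀ x t₁ :=
      (S.smooth.slice isOpen_Ioo ⟨ht₁, htT⟩).continuous.sub
        ((Bb_smooth h hk0).slice isOpen_Iio htT).continuous
    have hwψ : IntegrableOn (fun x => |u x t₁ - Bb N m T k₀ x t₁| * wt b M B α R T s₁ x t₁) K :=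
      (hwc.abs.mul hc1).continuousOn.integrableOn_compact hKcpt
    have lower : Real.exp (-(L ^ 2 / B)) * A
        ≤ ∫ x in K, |u x t₁ - Bb N m T k₀ x t₁| * wt b M B α R T s₁ x t₁ := by
      rw [hA, ← integral_const_mul]
      refine le_trans (setIntegral_mono_on ?_ (hwψ.mono_set hsub) measurableSet_closedBall
        fun x hx => ?_) (setIntegral_mono_set hwψ ?_ (Filter.Eventually.of_forall hsub))
      · exact (continuous_const.mul hwc.abs).continuousOn.integrableOn_compact
          (isCompact_closedBall _ _)
      · rw [mul_comm]
        refine mul_le_mul_of_nonneg_left ?_ (abs_nonneg _)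
        rw [mem_closedBall_zero_iff] at hx
        have hq : ‖x‖ ^ 2 * s₁ ^ (2 * b) ≤ ρ ^ 2 := by
          have h2 : ‖x‖ ^ 2 ≤ (ρ * s₁ ^ (-b)) ^ 2 := by gcongr
          have e1 : (s₁ ^ (-b)) ^ 2 * s₁ ^ (2 * b) = 1 := by
            rw [← Real.rpow_natCast, ← Real.rpow_mul hs₁.le, ← Real.rpow_add hs₁]
            norm_num
            rw [show -(b * 2) + 2 * b = 0 by ring, Real.rpow_zero]
          calc _ ≤ (ρ * s₁ ^ (-b)) ^ 2 * s₁ ^ (2 * b) := by gcongr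
            _ = ρ ^ 2 * ((s₁ ^ (-b)) ^ 2 * s₁ ^ (2 * b)) := by ring
            _ = ρ ^ 2 := by rw [e1, mul_one]
        have hp : 0 ≤ ‖x‖ ^ 2 * s₁ ^ (2 * b) := by positivity
        have hG : wG b M T x t₁ ≤ L := Real.log_le_log (by linarith) (by linarith)
        have hG0 : 0 ≤ wG b M T x t₁ := Real.log_nonneg (by linarith)
        unfold wt
        rw [cut_one (by rw [div_le_one hR0]; exact hG.trans hRL), mul_one]
        unfold wh
        have eS : wS T s₁ t₁ = 1 := by
          unfold wS; rw [← hs₁d, div_self hs₁.ne', Real.log_one, add_zero]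
        rw [eS, Real.one_rpow, one_mul, mul_one]
        gcongr
      · exact Filter.Eventually.of_forall fun x =>
          mul_nonneg (abs_nonneg _) (wt_nonneg hs₁ le_rfl x)
    have upper : ∫ x in K, |u x 0 - Bb N m T k₀ x 0| * wt b M B α R T s₁ x 0
        ≤ (1 + Real.log (T / s₁)) ^ (-α) * ∫ x, |f x| := by
      rw [← integral_const_mul]
      have hfi : Integrable fun x => (1 + Real.log (T / s₁)) ^ (-α) * |f x| := hf.abs.const_mul _
      have hS0' : 0 ≤ 1 + Real.log (T / s₁) := by
        have := hS0; unfold wS at this; rw [sub_zero] at this; linarith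
      refine le_trans (integral_mono_of_nonneg (Filter.Eventually.of_forall fun x =>
          mul_nonneg (abs_nonneg _) (wt_nonneg hs₁ (by linarith) x)) hfi.integrableOn
          (Filter.Eventually.of_forall fun x => ?_))
        (setIntegral_le_integral hfi (Filter.Eventually.of_forall fun x => by positivity))
      show |u x 0 - Bb N m T k₀ x 0| * wt b M B α R T s₁ x 0 ≤ _ * |f x|
      rw [hdec x, add_sub_cancel_left, mul_comm]
      refine mul_le_mul_of_nonneg_right ?_ (abs_nonneg _)
      have e0 : wS T s₁ 0 = 1 + Real.log (T / s₁) := by unfold wS; rw [sub_zero]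
      unfold wt wh
      rw [e0]
      have hx1 : Real.exp (-(wG b M T x 0 ^ 2 / (B * (1 + Real.log (T / s₁))))) ≤ 1 :=
        Real.exp_le_one_iff.2 (by rw [neg_nonpos]; positivity)
      have hx2 := cut_le_one (wG b M T x 0 / R)
      have hx3 := cut_nonneg (wG b M T x 0 / R)
      have hx4 : 0 ≤ (1 + Real.log (T / s₁)) ^ (-α) := by positivity
      calc _ ≤ (1 + Real.log (T / s₁)) ^ (-α) * 1 * 1 := by gcongr
        _ = _ := by ring
    have := hΛ R hR1
    linarith
  have hlim : Tendsto (fun R : ℝ => (1 + Real.log (T / s₁)) ^ (-α) * (∫ x, |f x|) + Λ / R) atTop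
      (𝓝 ((1 + Real.log (T / s₁)) ^ (-α) * (∫ x, |f x|) + 0)) :=
    tendsto_const_nhds.add (tendsto_const_nhds.div_atTop tendsto_id)
  rw [add_zero] at hlim
  have hfin := ge_of_tendsto hlim (by
    filter_upwards [eventually_ge_atTop (max 1 L)] with R hR using main R hR)
  rw [Real.exp_neg, inv_mul_le_iff₀ (Real.exp_pos _)] at hfin
  exact hfin
end decay

/-! ### From averages to point values -/

lemma zt_abs_le {N : ℕ} (y : Euc N) : |zt y| ≤ 1 := by
  rw [abs_of_nonneg (zt_nonneg y)]
  exact Real.smoothTransition.le_one _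

/-- Between two times there is one at which the average of `v^m` over a ball of radius `r` is close
to its value at the centre: the defect is the time derivative of a weighted average of `v`. -/
lemma exists_time_mean {N : ℕ} {m M a b t₁ t₂ : ℝ} {v : Euc N → ℝ → ℝ}
    (hs : STSmooth v (Set.Ioo a b)) (hpos : ∀ x, ∀ t ∈ Set.Ioo a b, 0 < v x t)
    (hM : ∀ x, ∀ t ∈ Set.Ioo a b, v x t ≤ M)
    (hp : ∀ x, ∀ t ∈ Set.Ioo a b, HasDerivAt (fun s => v x s) (lapl (fun y => v y t ^ m) x) t)
    (h1 : a < t₁) (h12 : t₁ < t₂) (h2 : t₂ < b) (x0 : Euc N) {r : ℝ} (hr : 0 < r) (hr1 : r ≤ 1) :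
    ∃ t ∈ Set.Ioo t₁ t₂, |(∫ y, et y * v (x0 + r • y) t ^ m) - cE N * v x0 t ^ m|
      ≤ 2 * M * (volume.real (UB N)) * r / (t₂ - t₁) := by
  set K : Set (ℝ × Euc N) := Set.Icc 0 r ×ˢ UB N with hK
  have hKc : IsCompact K := isCompact_Icc.prod (isCompact_closedBall 0 1)
  set F : ℝ → ℝ × Euc N → ℝ := fun t q => q.1 * v (x0 + q.1 • q.2) t with hF
  set F' : ℝ → ℝ × Euc N → ℝ :=
    fun t q => q.1 * lapl (fun y => v y t ^ m) (x0 + q.1 • q.2) with hF'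
  set Q : ℝ → ℝ := fun t => ∫ q in K, zt q.2 * F t q with hQ
  have hFc : ∀ c d, a < c → d < b →
      ContinuousOn (fun p : ℝ × ℝ × Euc N => F p.1 p.2) (Set.Icc c d ×ˢ K) := by
    intro c d hc hd
    refine ContinuousOn.mul (by fun_prop) ?_
    exact hs.contOn.comp (f := fun p : ℝ × ℝ × Euc N => (x0 + p.2.1 • p.2.2, p.1)) (by fun_prop)
      fun p hp => ⟨trivial, hc.trans_le hp.1.1, hp.1.2.trans_lt hd⟩
  have hF'c : ∀ c d, a < c → d < b →
      ContinuousOn (fun p : ℝ × ℝ × Euc N => F' p.1 p.2) (Set.Icc c d ×ˢ K) := by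
    intro c d hc hd
    refine ContinuousOn.mul (by fun_prop) ?_
    have h3 := (hs.deriv_contOn isOpen_Ioo).comp
      (f := fun p : ℝ × ℝ × Euc N => (x0 + p.2.1 • p.2.2, p.1)) (s := Set.Icc c d ×ˢ K)
      (by fun_prop) fun p hp => ⟨trivial, hc.trans_le hp.1.1, hp.1.2.trans_lt hd⟩
    refine h3.congr fun p hpp => ?_
    exact ((hp _ _ ⟨hc.trans_le hpp.1.1, hpp.1.2.trans_lt hd⟩).deriv).symm
  have hztm : Measurable fun q : ℝ × Euc N => zt q.2 :=
    (zt_contDiff.continuous.comp continuous_snd).measurable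
  have hder : ∀ t ∈ Set.Ioo a b, HasDerivAt Q (∫ q in K, zt q.2 * F' t q) t := by
    intro t ht
    obtain ⟨c, hc1, hc2⟩ := exists_between ht.1
    obtain ⟨d, hd1, hd2⟩ := exists_between ht.2
    refine hasDerivAt_setIntegral_compact volume hKc hztm (fun q => zt_abs_le q.2) ⟨hc2, hd1⟩
      (hFc c d hc1 hd2) (hF'c c d hc1 hd2) fun s hs' q _ => ?_
    exact (hp _ s ⟨hc1.trans hs'.1, hs'.2.trans hd2⟩).const_mul _
  have hQ' : ∀ t ∈ Set.Ioo a b, (∫ q in K, zt q.2 * F' t q)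
      = (∫ y, et y * v (x0 + r • y) t ^ m) - cE N * v x0 t ^ m := by
    intro t ht
    have hsm := hs.pow_slice isOpen_Ioo m ht (fun x => hpos x t ht)
    rw [mean_value hsm x0 r, intervalIntegral.integral_of_le hr.le,
      ← integral_Icc_eq_integral_Ioc]
    have hci : ContinuousOn (fun q : ℝ × Euc N => zt q.2 * F' t q) K := by
      refine ((zt_contDiff.continuous.comp continuous_snd).continuousOn).mul ?_
      refine ContinuousOn.mul (by fun_prop) ?_
      exact ((lapl_continuous hsm).comp (by fun_prop)).continuousOn
    rw [hK, Measure.volume_eq_prod, setIntegral_prod]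
    · refine setIntegral_congr_fun measurableSet_Icc fun ρ _ => ?_
      simp only [hF', ← integral_const_mul]
      refine integral_congr_ae (Eventually.of_forall fun y => ?_)
      simp only; ring
    · rw [← Measure.volume_eq_prod]
      exact hci.integrableOn_compact hKc
  have hM0 : 0 ≤ M := by
    have hmem : t₁ ∈ Set.Ioo a b := ⟨h1, h12.trans h2⟩
    exact (hpos x0 t₁ hmem).le.trans (hM x0 t₁ hmem)
  have hQb : ∀ t ∈ Set.Ioo a b, |Q t| ≤ M * (volume.real (UB N)) * r := by
    intro t ht
    have hvol : volume.real K = r * volume.real (UB N) := by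
      rw [hK, Measure.volume_eq_prod, measureReal_def, Measure.prod_prod, ENNReal.toReal_mul]
      simp [measureReal_def, hr.le]
    have := norm_setIntegral_le_of_norm_le_const (μ := volume) (s := K)
      (f := fun q => zt q.2 * F t q) (C := M) hKc.measure_lt_top fun q hq => by
        rw [Real.norm_eq_abs, abs_mul]
        have hv := hpos (x0 + q.1 • q.2) t ht
        have hq1 : |q.1| ≤ 1 := by
          rw [abs_of_nonneg hq.1.1]; exact hq.1.2.trans hr1
        have h3 : |F t q| ≤ M := by
          simp only [hF]
          rw [abs_mul, abs_of_pos hv]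
          calc |q.1| * v (x0 + q.1 • q.2) t ≤ 1 * M :=
                mul_le_mul hq1 (hM _ t ht) hv.le (by norm_num)
            _ = M := one_mul M
        calc |zt q.2| * |F t q| ≤ 1 * M := mul_le_mul (zt_abs_le _) h3 (abs_nonneg _) (by norm_num)
          _ = M := one_mul M
    rw [Real.norm_eq_abs, hvol] at this
    linarith
  have hmem : ∀ t ∈ Set.Icc t₁ t₂, t ∈ Set.Ioo a b :=
    fun t ht => ⟨h1.trans_le ht.1, ht.2.trans_lt h2⟩
  obtain ⟨t, ht, he⟩ := exists_hasDerivAt_eq_slope Q (fun t => ∫ q in K, zt q.2 * F' t q) h12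
    (fun t ht => (hder t (hmem t ht)).continuousAt.continuousWithinAt)
    (fun t ht => hder t (hmem t ⟨ht.1.le, ht.2.le⟩))
  refine ⟨t, ht, ?_⟩
  rw [← hQ' t (hmem t ⟨ht.1.le, ht.2.le⟩), he, abs_div, abs_of_pos (sub_pos.2 h12)]
  refine div_le_div_of_nonneg_right ?_ (sub_pos.2 h12).le
  have e1 := hQb t₁ (hmem _ ⟨le_rfl, h12.le⟩)
  have e2 := hQb t₂ (hmem _ ⟨h12.le, le_rfl⟩)
  calc |Q t₂ - Q t₁| ≤ |Q t₂| + |Q t₁| := abs_sub _ _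
    _ ≤ _ := by linarith

/-- For centres in the ball of radius `R` and scales `r ≤ 1`, the average is bounded by the integral
over the ball of radius `R + 1`. -/
lemma avg_L1 {N : ℕ} {g : Euc N → ℝ} (hg : Continuous g) (hg0 : ∀ x, 0 ≤ g x) {E r R : ℝ}
    (hE : ∀ y : Euc N, et y ≤ E) (hr : 0 < r) (hr1 : r ≤ 1) {x0 : Euc N} (hx : ‖x0‖ ≤ R) :
    ∫ y, et y * g (x0 + r • y)
      ≤ E * (r ^ N)⁻¹ * ∫ x in Metric.closedBall (0 : Euc N) (R + 1), g x := by
  set B := Metric.closedBall (0 : Euc N) (R + 1) with hB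
  have hE0 : 0 ≤ E := (et_nonneg 0).trans (hE 0)
  have hBm : MeasurableSet B := Metric.isClosed_closedBall.measurableSet
  have hgi : Integrable (B.indicator g) :=
    (integrable_indicator_iff hBm).2
      (hg.continuousOn.integrableOn_compact (isCompact_closedBall _ _))
  have hi2 : Integrable fun y : Euc N => B.indicator g (x0 + r • y) := by
    have := (hgi.comp_add_left x0).comp_smul hr.ne'
    exact this
  have e : ∫ y, B.indicator g (x0 + r • y) = (r ^ N)⁻¹ * ∫ x in B, g x := by
    have := Measure.integral_comp_smul (μ := (volume : Measure (Euc N)))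
      (fun z => B.indicator g (x0 + z)) r
    rw [this, integral_add_left_eq_self (μ := (volume : Measure (Euc N))) (B.indicator g) x0,
      integral_indicator hBm, finrank_euclideanSpace, Fintype.card_fin,
      abs_of_pos (by positivity), smul_eq_mul]
  calc ∫ y, et y * g (x0 + r • y) ≤ ∫ y, E * B.indicator g (x0 + r • y) := by
        refine integral_mono_of_nonneg
          (Eventually.of_forall fun y => mul_nonneg (et_nonneg y) (hg0 _)) (hi2.const_mul E)
          (Eventually.of_forall fun y => ?_)
        have h0 : 0 ≤ B.indicator g (x0 + r • y) := Set.indicator_nonneg (fun x _ => hg0 x) _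
        by_cases hy : 1 < ‖y‖
        · simp only [et_zero hy, zero_mul]
          exact mul_nonneg hE0 h0
        · have hmem : x0 + r • y ∈ B := by
            rw [hB, mem_closedBall_zero_iff]
            have : ‖r • y‖ ≤ 1 := by
              rw [norm_smul, Real.norm_eq_abs, abs_of_pos hr]
              nlinarith [norm_nonneg y]
            linarith [norm_add_le x0 (r • y)]
          simp only [Set.indicator_of_mem hmem]
          exact mul_le_mul_of_nonneg_right (hE y) (hg0 _)
    _ = _ := by rw [integral_const_mul, e, mul_assoc]

lemma exists_et_bound (N : ℕ) : ∃ E : ℝ, ∀ y : Euc N, et y ≤ E := by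
  obtain ⟨E, hE⟩ := et_support.exists_bound_of_continuous (et_continuous (N := N))
  exact ⟨E, fun y => (le_abs_self _).trans (hE y)⟩

/-- At the time found above, `v^m` at the centre is close to the reference value `W`. -/
lemma exists_time_close {N : ℕ} (hN : 0 < N) {m M a b t₁ t₂ E R ε₁ ε₂ : ℝ} {v w : Euc N → ℝ → ℝ}
    (hs : STSmooth v (Set.Ioo a b)) (hpos : ∀ x, ∀ t ∈ Set.Ioo a b, 0 < v x t)
    (hM : ∀ x, ∀ t ∈ Set.Ioo a b, v x t ≤ M)
    (hp : ∀ x, ∀ t ∈ Set.Ioo a b, HasDerivAt (fun s => v x s) (lapl (fun y => v y t ^ m) x) t)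
    (hw : ∀ t ∈ Set.Ioo a b, Continuous fun x => w x t)
    (h1 : a < t₁) (h12 : t₁ < t₂) (h2 : t₂ < b) {x0 : Euc N} (hx : ‖x0‖ ≤ R)
    {r : ℝ} (hr : 0 < r) (hr1 : r ≤ 1) (hE : ∀ y : Euc N, et y ≤ E)
    (hL : ∀ t ∈ Set.Ioo a b,
      ∫ x in Metric.closedBall (0 : Euc N) (R + 1), |v x t ^ m - w x t| ≤ ε₁) {W : ℝ}
    (hosc : ∀ y : Euc N, ‖y‖ ≤ 1 → ∀ t ∈ Set.Ioo t₁ t₂, |w (x0 + r • y) t - W| ≤ ε₂) :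
    ∃ t ∈ Set.Ioo t₁ t₂, |v x0 t ^ m - W|
      ≤ (2 * M * (volume.real (UB N)) * r / (t₂ - t₁) + E * (r ^ N)⁻¹ * ε₁) / cE N + ε₂ := by
  obtain ⟨t, ht, hm⟩ := exists_time_mean hs hpos hM hp h1 h12 h2 x0 hr hr1
  refine ⟨t, ht, ?_⟩
  have htI : t ∈ Set.Ioo a b := ⟨h1.trans ht.1, ht.2.trans h2⟩
  have hc := cE_pos hN
  have hE0 : 0 ≤ E := (et_nonneg 0).trans (hE 0)
  have cv : Continuous fun x => v x t ^ m :=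
    (hs.pow_slice isOpen_Ioo m htI (fun x => hpos x t htI)).continuous
  have cw := hw t htI
  have ci : ∀ g : Euc N → ℝ, Continuous g → Integrable fun y => et y * g (x0 + r • y) := by
    intro g hg
    exact (et_continuous.mul (hg.comp (by fun_prop))).integrable_of_hasCompactSupport
      (et_support.mul_right)
  have i1 := ci _ cv
  have i2 := ci _ cw
  have i3 := ci _ (cv.sub cw).abs
  have iE : Integrable fun y : Euc N => et y := et_continuous.integrable_of_hasCompactSupport et_support
  -- the average of `|v^m - w|`
  have a1 : |(∫ y, et y * v (x0 + r • y) t ^ m) - ∫ y, et y * w (x0 + r • y) t|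
      ≤ E * (r ^ N)⁻¹ * ε₁ := by
    rw [← integral_sub i1 i2]
    calc |∫ y, (et y * v (x0 + r • y) t ^ m - et y * w (x0 + r • y) t)|
        ≤ ∫ y, |et y * v (x0 + r • y) t ^ m - et y * w (x0 + r • y) t| := abs_integral_le_integral_abs
      _ = ∫ y, et y * |v (x0 + r • y) t ^ m - w (x0 + r • y) t| := by
          refine integral_congr_ae (Eventually.of_forall fun y => ?_)
          simp only
          rw [← mul_sub, abs_mul, abs_of_nonneg (et_nonneg y)]
      _ ≤ E * (r ^ N)⁻¹ * ∫ x in Metric.closedBall (0 : Euc N) (R + 1), |v x t ^ m - w x t| :=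
          avg_L1 (g := fun x => |v x t ^ m - w x t|) (cv.sub cw).abs (fun x => abs_nonneg _) hE hr
            hr1 hx
      _ ≤ _ := mul_le_mul_of_nonneg_left (hL t htI) (by positivity)
  -- the oscillation of `w`
  have a2 : |(∫ y, et y * w (x0 + r • y) t) - cE N * W| ≤ cE N * ε₂ := by
    have : cE N * W = ∫ y : Euc N, et y * W := by rw [integral_mul_const]; rfl
    rw [this, ← integral_sub i2 (iE.mul_const W)]
    calc |∫ y, (et y * w (x0 + r • y) t - et y * W)|
        ≤ ∫ y, |et y * w (x0 + r • y) t - et y * W| := abs_integral_le_integral_abs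
      _ ≤ ∫ y, et y * ε₂ := by
          refine integral_mono (i2.sub (iE.mul_const W)).abs (iE.mul_const _) fun y => ?_
          simp only
          rw [← mul_sub, abs_mul, abs_of_nonneg (et_nonneg y)]
          by_cases hy : 1 < ‖y‖
          · simp [et_zero hy]
          · exact mul_le_mul_of_nonneg_left (hosc y (not_lt.1 hy) t ht) (et_nonneg y)
      _ = _ := by rw [integral_mul_const]; rfl
  have a3 : cE N * |v x0 t ^ m - W|
      ≤ 2 * M * (volume.real (UB N)) * r / (t₂ - t₁) + E * (r ^ N)⁻¹ * ε₁ + cE N * ε₂ := by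
    rw [← abs_of_pos hc, ← abs_mul, abs_of_pos hc, mul_sub]
    rw [abs_le] at *
    constructor <;> linarith [hm.1, hm.2, a1.1, a1.2, a2.1, a2.2]
  rw [← sub_le_iff_le_add, le_div_iff₀ hc]
  linarith

/-! ### Pointwise closeness near a far away extinction time -/

section pointwise
variable {N : ℕ} {m T k₁ k₂ k₀ : ℝ} {u : Euc N → ℝ → ℝ}

lemma Bb_shift (k : ℝ) (x : Euc N) (t : ℝ) : Bb N m T k x (T + t) = Bb N m 0 k x t := by
  unfold Bb
  rw [show T - (T + t) = 0 - t by ring]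

/-- Radius, in self-similar variables, covering the ball of radius `R + 1` at remaining times up
to `2`. -/
def qρ (N : ℕ) (m R : ℝ) : ℝ := (R + 1) * 2 ^ bC N m

/-- Bound for the coefficient linking `u^m - B^m` to `u - B` on the ball of radius `R + 1` at
remaining times in `[1/2, 2]`. -/
def qA (N : ℕ) (m k₁ k₀ R : ℝ) : ℝ :=
  bC N m * ((1 - m) / 2) * (max k₁ k₀ * (1 / 2) ^ (-(2 * bC N m)) + (R + 1) ^ 2) / (1 / 2)

/-- The `L¹` bound near the (far away) extinction time `T`. -/
def qL (N : ℕ) (m k₁ k₂ k₀ R F T : ℝ) : ℝ :=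
  qA N m k₁ k₀ R * (Real.exp (Real.log (qM k₁ k₀ + qρ N m R ^ 2) ^ 2 / qB N m)
    * ((1 + Real.log (T / 2)) ^ (-qα N k₁ k₂ k₀) * F))

/-- Local `L¹` bound for `u^m - B^m` at remaining times between `1/2` and `2`. Time is counted from
the extinction time, so that the reference solution does not depend on `T`. -/
lemma Trapped.L1_pow (S : Trapped N m T k₁ k₂ u) (hk0 : 0 < k₀) {f : Euc N → ℝ}
    (hf : Integrable f) (hdec : ∀ x, u x 0 = Bb N m T k₀ x 0 + f x) {R F : ℝ} (hR : 0 ≤ R)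
    (hF : ∫ x, |f x| ≤ F) (hT : 4 ≤ T) {t : ℝ} (ht : t ∈ Set.Ioo (-2 : ℝ) (-1 / 2)) :
    ∫ x in Metric.closedBall (0 : Euc N) (R + 1), |u x (T + t) ^ m - Bb N m 0 k₀ x t ^ m|
      ≤ qL N m k₁ k₂ k₀ R F T := by
  have h := S.par
  have hb := h.b0
  have hm1 : 0 < 1 - m := by linarith [h.m1]
  have ht0 : 0 < T + t := by linarith [ht.1]
  have htT : T + t < T := by linarith [ht.2]
  have hs : T - (T + t) = -t := by ring
  have hst : 0 < -t := by linarith [ht.2]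
  have hα := S.qα_pos hk0
  have hk : 0 < max k₁ k₀ := lt_max_of_lt_right hk0
  have hA : 0 ≤ qA N m k₁ k₀ R := by unfold qA; positivity
  have cu : Continuous fun x => u x (T + t) := (S.smooth.slice isOpen_Ioo ⟨ht0, htT⟩).continuous
  have cB : Continuous fun x => Bb N m T k₀ x (T + t) :=
    ((Bb_smooth h hk0).slice isOpen_Iio htT).continuous
  have hcmp : ∀ x, ‖x‖ ≤ R + 1 → |u x (T + t) ^ m - Bb N m T k₀ x (T + t) ^ m|
      ≤ qA N m k₁ k₀ R * |u x (T + t) - Bb N m T k₀ x (T + t)| := by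
    intro x hx
    obtain ⟨κ, hκ1, hκ2, e⟩ := S.diff_pow hk0 x ⟨ht0.le, htT⟩
    have hκ : 0 < κ := (lt_min S.k2 hk0).trans_le hκ1
    rw [e, abs_mul]
    refine mul_le_mul_of_nonneg_right ?_ (abs_nonneg _)
    rw [hs]
    have h1 : (-t) ^ (-(2 * bC N m)) ≤ (1 / 2) ^ (-(2 * bC N m)) :=
      Real.rpow_le_rpow_of_nonpos (by norm_num) (by linarith [ht.2]) (by linarith)
    have h2 : 0 < (-t) ^ (-(2 * bC N m)) := Real.rpow_pos_of_pos hst _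
    have h3 : ‖x‖ ^ 2 ≤ (R + 1) ^ 2 := pow_le_pow_left₀ (norm_nonneg x) hx 2
    rw [abs_of_nonneg (by positivity)]
    unfold qA
    refine div_le_div₀ (by positivity) ?_ (by norm_num) (by linarith [ht.2])
    refine mul_le_mul_of_nonneg_left (add_le_add ?_ h3) (by positivity)
    exact mul_le_mul hκ2 h1 h2.le hk.le
  have hρ : R + 1 ≤ qρ N m R * (T - (T + t)) ^ (-bC N m) := by
    rw [hs]
    have h1 : (2 : ℝ) ^ (-bC N m) ≤ (-t) ^ (-bC N m) :=
      Real.rpow_le_rpow_of_nonpos hst (by linarith [ht.1]) (by linarith)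
    have h2 : (2 : ℝ) ^ bC N m * 2 ^ (-bC N m) = 1 := by
      rw [← Real.rpow_add (by norm_num)]; simp
    have h3 : (0 : ℝ) < 2 ^ bC N m := by positivity
    unfold qρ
    calc R + 1 = (R + 1) * (2 ^ bC N m * 2 ^ (-bC N m)) := by rw [h2, mul_one]
      _ ≤ (R + 1) * (2 ^ bC N m * (-t) ^ (-bC N m)) := by gcongr
      _ = _ := by ring
  have hdecay := S.decay hk0 hf hdec ht0 htT (qρ N m R)
  have hlog : (1 + Real.log (T / (T - (T + t)))) ^ (-qα N k₁ k₂ k₀)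
      ≤ (1 + Real.log (T / 2)) ^ (-qα N k₁ k₂ k₀) := by
    rw [hs]
    have h1 : 0 ≤ Real.log (T / 2) := Real.log_nonneg (by linarith)
    have h2 : Real.log (T / 2) ≤ Real.log (T / -t) := by
      refine Real.log_le_log (by linarith) ?_
      exact div_le_div_of_nonneg_left (by linarith) hst (by linarith [ht.1])
    exact Real.rpow_le_rpow_of_nonpos (by linarith) (by linarith) (by linarith)
  have h1 : 0 ≤ Real.log (T / 2) := Real.log_nonneg (by linarith)
  have hi : ∀ ρ, IntegrableOn (fun x => |u x (T + t) - Bb N m T k₀ x (T + t)|)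
      (Metric.closedBall (0 : Euc N) ρ) := fun ρ =>
    (cu.sub cB).abs.continuousOn.integrableOn_compact (isCompact_closedBall _ _)
  have cm : Continuous fun x => |u x (T + t) ^ m - Bb N m T k₀ x (T + t) ^ m| := by
    refine Continuous.abs (Continuous.sub ?_ ?_)
    · exact cu.rpow_const fun x => Or.inr h.hm0.le
    · exact cB.rpow_const fun x => Or.inr h.hm0.le
  simp only [← Bb_shift (T := T)]
  calc ∫ x in Metric.closedBall (0 : Euc N) (R + 1),
        |u x (T + t) ^ m - Bb N m T k₀ x (T + t) ^ m|
      ≤ ∫ x in Metric.closedBall (0 : Euc N) (R + 1),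
        qA N m k₁ k₀ R * |u x (T + t) - Bb N m T k₀ x (T + t)| := by
        refine setIntegral_mono_on
          (cm.continuousOn.integrableOn_compact (isCompact_closedBall _ _))
          ((hi _).const_mul _) Metric.isClosed_closedBall.measurableSet fun x hx => ?_
        exact hcmp x (mem_closedBall_zero_iff.1 hx)
    _ = qA N m k₁ k₀ R * ∫ x in Metric.closedBall (0 : Euc N) (R + 1),
        |u x (T + t) - Bb N m T k₀ x (T + t)| := integral_const_mul _ _
    _ ≤ qA N m k₁ k₀ R * ∫ x in Metric.closedBall (0 : Euc N)
          (qρ N m R * (T - (T + t)) ^ (-bC N m)), |u x (T + t) - Bb N m T k₀ x (T + t)| := by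
        refine mul_le_mul_of_nonneg_left ?_ hA
        exact setIntegral_mono_set (hi _) (Eventually.of_forall fun x => abs_nonneg _)
          (Metric.closedBall_subset_closedBall hρ).eventuallyLE
    _ ≤ _ := by
        unfold qL
        refine mul_le_mul_of_nonneg_left (hdecay.trans ?_) hA
        refine mul_le_mul_of_nonneg_left ?_ (Real.exp_pos _).le
        refine mul_le_mul hlog hF (integral_nonneg fun x => abs_nonneg _) (by positivity)

lemma qL_tendsto {R F : ℝ} (hα : 0 < qα N k₁ k₂ k₀) :
    Tendsto (qL N m k₁ k₂ k₀ R F) atTop (𝓝 0) := by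
  have h1 : Tendsto (fun T : ℝ => 1 + Real.log (T / 2)) atTop atTop :=
    tendsto_atTop_add_const_left _ _
      (Real.tendsto_log_atTop.comp (tendsto_id.atTop_div_const (by norm_num)))
  have h2 := (tendsto_rpow_neg_atTop hα).comp h1
  have h3 := ((h2.mul_const F).const_mul
    (Real.exp (Real.log (qM k₁ k₀ + qρ N m R ^ 2) ^ 2 / qB N m))).const_mul (qA N m k₁ k₀ R)
  simp only [zero_mul, mul_zero] at h3
  exact h3

lemma ratio_tendsto {n : ℝ} : Tendsto (fun T : ℝ => (T / (T - 2)) ^ n) atTop (𝓝 1) := by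
  have h0 : Tendsto (fun T : ℝ => T - 2) atTop atTop := tendsto_atTop_add_const_right _ _ tendsto_id
  have h1 : Tendsto (fun T : ℝ => 1 + 2 / (T - 2)) atTop (𝓝 (1 + 0)) :=
    (h0.const_div_atTop 2).const_add 1
  rw [add_zero] at h1
  have h2 : Tendsto (fun T : ℝ => T / (T - 2)) atTop (𝓝 1) := by
    refine h1.congr' ?_
    filter_upwards [eventually_gt_atTop 2] with T hT
    have : T - 2 ≠ 0 := by linarith
    field_simp; ring
  simpa using h2.rpow_const (p := n) (Or.inl one_ne_zero)

/-- Closeness of `u^m` to the Barenblatt value at unit distance from the extinction time, on a fixed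
ball, uniformly over all solutions with far away extinction time and `L¹` perturbation bounded by
`F`. The spatial mean value estimate and the almost monotonicity in time upgrade the local `L¹`
closeness to a pointwise one. -/
lemma close_on_ball (h : Par N m) (hk2 : 0 < k₂) (hk0 : 0 < k₀) {R F ε : ℝ} (hR : 0 ≤ R)
    (hε : 0 < ε) (hα : 0 < qα N k₁ k₂ k₀) :
    ∀ᶠ T in atTop, ∀ (u : Euc N → ℝ → ℝ) (f : Euc N → ℝ), Trapped N m T k₁ k₂ u → Integrable f →
      ∫ x, |f x| ≤ F → (∀ x, u x 0 = Bb N m T k₀ x 0 + f x) → ∀ x0 : Euc N, ‖x0‖ ≤ R →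
      |u x0 (T - 1) ^ m - Bb N m 0 k₀ x0 (-1) ^ m| ≤ ε := by
  have hm0 := h.hm0
  have hn0 := h.n0
  have hN : 0 < N := by have := h.hN; omega
  have hc := cE_pos hN
  obtain ⟨E, hE⟩ := exists_et_bound N
  have hE0 : 0 ≤ E := (et_nonneg 0).trans (hE 0)
  set n := 1 / (1 - m) with hn
  set V := volume.real (UB N) with hV
  have hV0 : 0 ≤ V := measureReal_nonneg
  set M := (Cst N m * 2 * 2 ^ (2 * bC N m) / k₂) ^ n with hMdef
  have hM0 : 0 ≤ M := by
    have := h.C0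
    rw [hMdef]; positivity
  -- modulus of continuity of the reference function
  set G : Euc N × ℝ → ℝ := fun p => Bb N m 0 k₀ p.1 p.2 ^ m with hG
  have hGc : ContinuousOn G (Metric.closedBall (0 : Euc N) (R + 1) ×ˢ Set.Icc (-2 : ℝ) (-1 / 2)) := by
    have h1 : ContinuousOn G (Set.univ ×ˢ Set.Iio 0) :=
      (Bb_smooth h hk0).contOn.rpow_const fun p _ => Or.inr hm0.le
    refine h1.mono fun p hp => ⟨trivial, ?_⟩
    have := hp.2.2
    show p.2 < 0
    linarith
  have hGu := ((isCompact_closedBall (0 : Euc N) (R + 1)).prod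
    isCompact_Icc).uniformContinuousOn_of_continuous hGc
  obtain ⟨δ', hδ', hosc⟩ := Metric.uniformContinuousOn_iff.1 hGu (ε / 4) (by positivity)
  set δ := min (δ' / 2) (1 / 4) with hδ
  have hδ0 : 0 < δ := lt_min (by positivity) (by norm_num)
  have hδ1 : δ ≤ δ' / 2 := min_le_left _ _
  have hδ2 : δ ≤ 1 / 4 := min_le_right _ _
  set r := min δ (ε * δ * cE N / (8 * (M * V + 1))) with hr
  have hMV : 0 ≤ M * V := mul_nonneg hM0 hV0
  have hr0 : 0 < r := lt_min hδ0 (by positivity)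
  have hrδ : r ≤ δ := min_le_left _ _
  have hr2 : 2 * M * V * r / δ ≤ ε / 4 * cE N := by
    rw [div_le_iff₀ hδ0]
    have h1 : r ≤ ε * δ * cE N / (8 * (M * V + 1)) := min_le_right _ _
    rw [le_div_iff₀ (by positivity)] at h1
    nlinarith
  have hrN : 0 < r ^ N := pow_pos hr0 N
  have ev1 : ∀ᶠ T in atTop, E * (r ^ N)⁻¹ * qL N m k₁ k₂ k₀ R F T < ε / 4 * cE N := by
    have h1 := (qL_tendsto (m := m) (R := R) (F := F) hα).const_mul (E * (r ^ N)⁻¹)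
    rw [mul_zero] at h1
    exact h1.eventually_lt_const (by positivity)
  have ev2 : ∀ᶠ T : ℝ in atTop, ((T / (T - 2)) ^ (n * m) - 1) * M ^ m < ε / 4 := by
    have h1 := ((ratio_tendsto (n := n * m)).sub_const 1).mul_const (M ^ m)
    rw [sub_self, zero_mul] at h1
    exact h1.eventually_lt_const (by positivity)
  filter_upwards [ev1, ev2, eventually_ge_atTop 4] with T h1 h2 hT u f S hf hF hdec x0 hx0
  set v : Euc N → ℝ → ℝ := fun x t => u x (T + t) with hv
  have hmem : ∀ t ∈ Set.Ioo (-2 : ℝ) (-1 / 2), T + t ∈ Set.Ioo 0 T := fun t ht =>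
    ⟨by linarith [ht.1], by linarith [ht.2]⟩
  have hs : STSmooth v (Set.Ioo (-2) (-1 / 2)) := by
    refine ContDiffOn.comp (f := fun p : Euc N × ℝ => (p.1, T + p.2)) S.smooth
      (contDiff_fst.prodMk (contDiff_const.add contDiff_snd)).contDiffOn ?_
    exact fun p hp => ⟨trivial, hmem p.2 hp.2⟩
  have hpos : ∀ x, ∀ t ∈ Set.Ioo (-2 : ℝ) (-1 / 2), 0 < v x t := fun x t ht =>
    S.pos x ⟨(hmem t ht).1.le, (hmem t ht).2⟩
  have hMb : ∀ x, ∀ t ∈ Set.Ioo (-2 : ℝ) (-1 / 2), v x t ≤ M := fun x t ht => by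
    refine (S.hi x _ ⟨(hmem t ht).1.le, (hmem t ht).2⟩).trans ?_
    rw [Bb_shift, ← Bb_shift (T := 2)]
    exact Bb_le h hk2 (by linarith [ht.1]) (by linarith [ht.2]) x
  have hp : ∀ x, ∀ t ∈ Set.Ioo (-2 : ℝ) (-1 / 2),
      HasDerivAt (fun s => v x s) (lapl (fun y => v y t ^ m) x) t := fun x t ht =>
    (S.pde x _ (hmem t ht)).comp_const_add T t
  have hw : ∀ t ∈ Set.Ioo (-2 : ℝ) (-1 / 2), Continuous fun x : Euc N => Bb N m 0 k₀ x t ^ m := by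
    intro t ht
    have : t < 0 := by linarith [ht.2]
    exact ((Bb_smooth h hk0).slice isOpen_Iio this).continuous.rpow_const fun x => Or.inr hm0.le
  have hL : ∀ t ∈ Set.Ioo (-2 : ℝ) (-1 / 2), ∫ x in Metric.closedBall (0 : Euc N) (R + 1),
      |v x t ^ m - Bb N m 0 k₀ x t ^ m| ≤ qL N m k₁ k₂ k₀ R F T := fun t ht =>
    S.L1_pow hk0 hf hdec hR hF hT ht
  set W := Bb N m 0 k₀ x0 (-1) ^ m with hW
  have hosc' : ∀ y : Euc N, ‖y‖ ≤ 1 → ∀ t, |t + 1| ≤ δ →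
      |Bb N m 0 k₀ (x0 + r • y) t ^ m - W| ≤ ε / 4 := by
    intro y hy t ht
    have hry : ‖r • y‖ ≤ r := by
      rw [norm_smul, Real.norm_eq_abs, abs_of_pos hr0]
      nlinarith
    have ht' := abs_le.1 ht
    have := hosc (x0 + r • y, t) ⟨?_, ?_, ?_⟩ (x0, -1) ⟨?_, ?_, ?_⟩ ?_
    · rw [Real.dist_eq] at this
      exact this.le
    · rw [mem_closedBall_zero_iff]
      linarith [norm_add_le x0 (r • y)]
    · linarith [ht'.1]
    · show t ≤ -1 / 2
      linarith [ht'.2]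
    · rw [mem_closedBall_zero_iff]; linarith
    · norm_num
    · norm_num
    · rw [Prod.dist_eq, max_lt_iff]
      constructor
      · rw [dist_eq_norm]
        simp only [add_sub_cancel_left]
        linarith
      · rw [Real.dist_eq]
        simp only [sub_neg_eq_add]
        linarith
  have hr1 : r ≤ 1 := by linarith
  have he : (2 * M * V * r / δ + E * (r ^ N)⁻¹ * qL N m k₁ k₂ k₀ R F T) / cE N + ε / 4
      ≤ 3 * ε / 4 := by
    have : (2 * M * V * r / δ + E * (r ^ N)⁻¹ * qL N m k₁ k₂ k₀ R F T) / cE N ≤ ε / 2 := by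
      rw [div_le_iff₀ hc]; linarith
    linarith
  have hΛ : ∀ t t', t ∈ Set.Ioo (-2 : ℝ) (-1 / 2) → t' ∈ Set.Ioo (-2 : ℝ) (-1 / 2) → t ≤ t' →
      v x0 t' ^ m ≤ v x0 t ^ m + ε / 4 := by
    intro t t' ht ht' htt
    have hT2 : 0 < T - 2 := by linarith
    have e1 := S.mono (hmem t ht).1 (by linarith : T + t ≤ T + t') (hmem t' ht').2 x0
    have e2 : (T + t') / (T + t) ≤ T / (T - 2) :=
      div_le_div₀ (by linarith) (hmem t' ht').2.le hT2 (by linarith [ht.1])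
    have hq : 0 ≤ (T + t') / (T + t) := div_nonneg (hmem t' ht').1.le (hmem t ht).1.le
    have e3 : ((T + t') / (T + t)) ^ n ≤ (T / (T - 2)) ^ n := Real.rpow_le_rpow hq e2 hn0.le
    have hL0 : 0 ≤ (T / (T - 2)) ^ n := (Real.rpow_nonneg hq n).trans e3
    have hvt := hpos x0 t ht
    have e4 : v x0 t' ≤ (T / (T - 2)) ^ n * v x0 t :=
      e1.trans (mul_le_mul_of_nonneg_right e3 hvt.le)
    have e5 : v x0 t' ^ m ≤ (T / (T - 2)) ^ (n * m) * v x0 t ^ m := by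
      have := Real.rpow_le_rpow (hpos x0 t' ht').le e4 hm0.le
      rwa [Real.mul_rpow hL0 hvt.le, ← Real.rpow_mul (by positivity)] at this
    have e6 : v x0 t ^ m ≤ M ^ m := Real.rpow_le_rpow hvt.le (hMb x0 t ht) hm0.le
    have e7 : 1 ≤ (T / (T - 2)) ^ (n * m) :=
      Real.one_le_rpow (by rw [le_div_iff₀ hT2]; linarith) (by positivity)
    have e8 := mul_le_mul_of_nonneg_left e6 (sub_nonneg.2 e7)
    linarith
  have hone : (-1 : ℝ) ∈ Set.Ioo (-2 : ℝ) (-1 / 2) := ⟨by norm_num, by norm_num⟩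
  obtain ⟨t, ht, b1⟩ := exists_time_close hN hs hpos hMb hp hw (t₁ := -1 - δ) (t₂ := -1)
    (by linarith) (by linarith) (by norm_num) hx0 hr0 hr1 hE hL (W := W) (ε₂ := ε / 4)
    (fun y hy t ht => hosc' y hy t (by rw [abs_le]; constructor <;> linarith [ht.1, ht.2]))
  obtain ⟨t', ht', b2⟩ := exists_time_close hN hs hpos hMb hp hw (t₁ := -1) (t₂ := -1 + δ)
    (by norm_num) (by linarith) (by linarith) hx0 hr0 hr1 hE hL (W := W) (ε₂ := ε / 4)
    (fun y hy t ht => hosc' y hy t (by rw [abs_le]; constructor <;> linarith [ht.1, ht.2]))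
  rw [show (-1 : ℝ) - (-1 - δ) = δ by ring] at b1
  rw [show (-1 : ℝ) + δ - -1 = δ by ring] at b2
  have b1' := abs_le.1 (b1.trans he)
  have b2' := abs_le.1 (b2.trans he)
  have c1 := hΛ t (-1) ⟨by linarith [ht.1], by linarith [ht.2]⟩ hone ht.2.le
  have c2 := hΛ (-1) t' hone ⟨by linarith [ht'.1], by linarith [ht'.2]⟩ ht'.1.le
  show |v x0 (-1) ^ m - W| ≤ ε
  rw [abs_le]
  constructor <;> linarith [b1'.1, b1'.2, b2'.1, b2'.2]

end pointwise

/-! ### Scaling and uniform convergence -/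

section scaling
variable {N : ℕ} {m T k₁ k₂ k₀ : ℝ} {u : Euc N → ℝ → ℝ}

/-- The self-similar rescaling with factor `l`, which maps solutions with extinction time `T` to
solutions with extinction time `T / l`. -/
def scl (N : ℕ) (m l : ℝ) (u : Euc N → ℝ → ℝ) (x : Euc N) (t : ℝ) : ℝ :=
  l ^ (-(N * bC N m)) * u (l ^ (-bC N m) • x) (l * t)

lemma scl_Bb (h : Par N m) {k : ℝ} (hk : 0 < k) {l : ℝ} (hl : 0 < l) (x : Euc N) {t : ℝ}
    (ht : t < T / l) : scl N m l (Bb N m T k) x t = Bb N m (T / l) k x t := by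
  have hs : 0 < T / l - t := by linarith
  have e : T - l * t = l * (T / l - t) := by field_simp
  have hm1 : (1 - m) ≠ 0 := by linarith [h.m1]
  have hbase := Bb_base_pos h hk ht x
  unfold scl Bb
  have hl2 : (l ^ (-bC N m)) ^ 2 = l ^ (2 * gammaC N m) := by
    rw [h.gamma, ← Real.rpow_natCast, ← Real.rpow_mul hl.le]
    congr 1; push_cast; ring
  have hl3 : l = l ^ (N * bC N m * (1 - m)) * l ^ (2 * gammaC N m) := by
    rw [← Real.rpow_add hl, h.gamma]
    have := h.b_D
    rw [show (N : ℝ) * bC N m * (1 - m) + 2 * -bC N m = bC N m * (N - 2 - N * m) by ring, this,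
      Real.rpow_one]
  have hg := Real.rpow_pos_of_pos hl (2 * gammaC N m)
  have hsg := Real.rpow_pos_of_pos hs (2 * gammaC N m)
  have key : Cst N m * (T - l * t) / (k * (T - l * t) ^ (2 * gammaC N m) + ‖l ^ (-bC N m) • x‖ ^ 2)
      = l ^ (N * bC N m * (1 - m))
        * (Cst N m * (T / l - t) / (k * (T / l - t) ^ (2 * gammaC N m) + ‖x‖ ^ 2)) := by
    rw [e, norm_smul, Real.norm_eq_abs, abs_of_pos (Real.rpow_pos_of_pos hl _), mul_pow, hl2,
      Real.mul_rpow hl.le hs.le]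
    nth_rewrite 1 [hl3]
    have : k * (T / l - t) ^ (2 * gammaC N m) + ‖x‖ ^ 2 ≠ 0 := by positivity
    rw [show k * (l ^ (2 * gammaC N m) * (T / l - t) ^ (2 * gammaC N m))
      + l ^ (2 * gammaC N m) * ‖x‖ ^ 2
      = l ^ (2 * gammaC N m) * (k * (T / l - t) ^ (2 * gammaC N m) + ‖x‖ ^ 2) by ring]
    generalize k * (T / l - t) ^ (2 * gammaC N m) + ‖x‖ ^ 2 = D at this ⊢
    field_simp
  rw [key, Real.mul_rpow (by positivity) hbase.le, ← Real.rpow_mul hl.le, ← mul_assoc,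
    ← Real.rpow_add hl]
  rw [show -((N : ℝ) * bC N m) + N * bC N m * (1 - m) * (1 / (1 - m)) = 0 by field_simp; ring,
    Real.rpow_zero, one_mul]

/-- The self-similar scaling divides the extinction time by `l` and keeps both Barenblatt bounds. -/
lemma Trapped.scale (S : Trapped N m T k₁ k₂ u) {l : ℝ} (hl : 0 < l) :
    Trapped N m (T / l) k₁ k₂ (scl N m l u) := by
  have h := S.par
  have hA := Real.rpow_pos_of_pos hl (-(N * bC N m))
  have hlT : ∀ t, t < T / l → l * t < T := fun t ht => by
    rw [lt_div_iff₀ hl] at ht; linarith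
  have hmap : Continuous fun p : Euc N × ℝ => (l ^ (-bC N m) • p.1, l * p.2) := by fun_prop
  refine ⟨h, div_pos S.T0 hl, S.k1, S.k2, ?_, ?_, ?_, ?_, ?_⟩
  · refine contDiffOn_const.mul ?_
    refine ContDiffOn.comp (f := fun p : Euc N × ℝ => (l ^ (-bC N m) • p.1, l * p.2)) S.smooth
      ((contDiff_fst.const_smul _).prodMk (contDiff_const.mul contDiff_snd)).contDiffOn ?_
    exact fun p hp => ⟨trivial, mul_pos hl hp.2.1, hlT _ hp.2.2⟩
  · refine continuousOn_const.mul ?_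
    exact S.cont.comp hmap.continuousOn fun p hp =>
      ⟨trivial, mul_nonneg hl.le hp.2.1, hlT _ hp.2.2⟩
  · intro x t ht
    have ht' : l * t ∈ Set.Ioo 0 T := ⟨mul_pos hl ht.1, hlT _ ht.2⟩
    have h1 : HasDerivAt (fun s : ℝ => l * s) l t := by
      simpa using (hasDerivAt_id t).const_mul l
    have h2 := ((S.pde (l ^ (-bC N m) • x) _ ht').comp t h1).const_mul (l ^ (-(N * bC N m)))
    have hsm := S.smooth.pow_slice isOpen_Ioo m ht' fun x => S.pos x ⟨ht'.1.le, ht'.2⟩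
    have e1 : (fun y => scl N m l u y t ^ m)
        = fun y => (l ^ (-(N * bC N m))) ^ m * u (l ^ (-bC N m) • y) (l * t) ^ m := by
      funext y
      exact Real.mul_rpow hA.le (S.pos _ ⟨ht'.1.le, ht'.2⟩).le
    have e2 := lapl_comp_affine (f := fun y => u y (l * t) ^ m) hsm 0 (l ^ (-bC N m)) x
    simp only [zero_add] at e2
    have e3 : (l ^ (-(N * bC N m))) ^ m * (l ^ (-bC N m)) ^ 2 = l ^ (-(N * bC N m)) * l := by
      rw [← Real.rpow_natCast, ← Real.rpow_mul hl.le, ← Real.rpow_mul hl.le, ← Real.rpow_add hl]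
      nth_rewrite 3 [← Real.rpow_one l]
      rw [← Real.rpow_add hl]
      congr 1
      have := h.b_D
      push_cast
      linear_combination this
    have e4 : lapl (fun y => scl N m l u y t ^ m) x
        = l ^ (-(N * bC N m)) * (lapl (fun y => u y (l * t) ^ m) (l ^ (-bC N m) • x) * l) := by
      rw [e1, lapl_const_mul (f := fun y => u (l ^ (-bC N m) • y) (l * t) ^ m)
        (hsm.comp (contDiff_id.const_smul (l ^ (-bC N m)))), e2, ← mul_assoc, e3]
      ring
    rw [e4]
    exact h2
  · intro x t ht
    rw [← scl_Bb h S.k1 hl x ht.2]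
    exact mul_le_mul_of_nonneg_left (S.lo _ _ ⟨mul_nonneg hl.le ht.1, hlT _ ht.2⟩) hA.le
  · intro x t ht
    rw [← scl_Bb h S.k2 hl x ht.2]
    exact mul_le_mul_of_nonneg_left (S.hi _ _ ⟨mul_nonneg hl.le ht.1, hlT _ ht.2⟩) hA.le

/-- The scaling of the initial perturbation preserves the `L¹` norm. -/
lemma scl_L1 (f : Euc N → ℝ) {l : ℝ} (hl : 0 < l) :
    ∫ x, |l ^ (-(N * bC N m)) * f (l ^ (-bC N m) • x)| = ∫ x, |f x| := by
  have hA := Real.rpow_pos_of_pos hl (-(N * bC N m))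
  have hc := Real.rpow_pos_of_pos hl (-bC N m)
  simp only [abs_mul, abs_of_pos hA]
  rw [integral_const_mul, Measure.integral_comp_smul (μ := (volume : Measure (Euc N)))
    (fun x => |f x|), finrank_euclideanSpace, Fintype.card_fin, abs_of_pos (by positivity),
    smul_eq_mul, ← mul_assoc]
  have : ((l ^ (-bC N m)) ^ N) = l ^ (-(N * bC N m)) := by
    rw [← Real.rpow_natCast, ← Real.rpow_mul hl.le]; congr 1; ring
  rw [this, mul_inv_cancel₀ hA.ne', one_mul]

lemma rescaleSol_eq (h : Par N m) (x : Euc N) (τ : ℝ) :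
    rescaleSol N m T u x τ = scl N m (Real.exp (-τ)) u x (T / Real.exp (-τ) - 1) := by
  have hl := Real.exp_pos (-τ)
  unfold rescaleSol scl
  rw [h.beta, h.gamma, ← Real.exp_mul, ← Real.exp_mul]
  congr 2
  · ring_nf
  · congr 2; ring_nf
  · field_simp

lemma BbTil_eq (k : ℝ) (x : Euc N) : BbTil N m k x = Bb N m 0 k x (-1) := by
  unfold BbTil Bb
  norm_num

lemma BbTil_tail (h : Par N m) (k : ℝ) {ε : ℝ} (hε : 0 < ε) :
    ∃ R, 0 ≤ R ∧ ∀ x : Euc N, R ≤ ‖x‖ → BbTil N m k x < ε := by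
  have h1 : Tendsto (fun R : ℝ => (Cst N m / (k + R ^ 2)) ^ (1 / (1 - m))) atTop (𝓝 0) := by
    have h2 : Tendsto (fun R : ℝ => k + R ^ 2) atTop atTop :=
      tendsto_atTop_add_const_left _ _ (tendsto_pow_atTop (by norm_num))
    have := (h2.const_div_atTop (Cst N m)).rpow_const (p := 1 / (1 - m)) (Or.inr h.n0.le)
    rwa [Real.zero_rpow h.n0.ne'] at this
  obtain ⟨R, hR⟩ := eventually_atTop.1 (h1.eventually_lt_const hε)
  refine ⟨max R 0, le_max_right _ _, fun x hx => hR _ ((le_max_left _ _).trans hx)⟩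

theorem Trapped.tendsto (S : Trapped N m T k₁ k₂ u) (hk0 : 0 < k₀) {f : Euc N → ℝ}
    (hf : Integrable f) (hdec : ∀ x, u x 0 = Bb N m T k₀ x 0 + f x) :
    TendstoUniformly (fun τ (x : Euc N) => rescaleSol N m T u x τ) (BbTil N m k₀) atTop := by
  have h := S.par
  have hkm : 0 < min k₂ k₀ := lt_min S.k2 hk0
  rw [Metric.tendstoUniformly_iff]
  intro ε hε
  obtain ⟨R, hR0, hR⟩ := BbTil_tail (N := N) h (min k₂ k₀) hε
  have hm1 : 0 < 1 - m := by linarith [h.m1]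
  have hb := h.b0
  set c := bC N m * ((1 - m) / 2) * min k₂ k₀ with hc
  have hc0 : 0 < c := by positivity
  have hev := close_on_ball (F := ∫ x, |f x|) h S.k2 hk0 hR0
    (show 0 < c * (ε / 2) by positivity) (S.qα_pos hk0)
  have hT : Tendsto (fun τ : ℝ => T / Real.exp (-τ)) atTop atTop := by
    have : (fun τ : ℝ => T / Real.exp (-τ)) = fun τ => T * Real.exp τ := by
      funext τ; rw [Real.exp_neg, div_inv_eq_mul]
    rw [this]
    exact Real.tendsto_exp_atTop.const_mul_atTop S.T0
  filter_upwards [hT.eventually hev, hT.eventually (eventually_gt_atTop 1)] with τ hτ hτ1 x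
  set l := Real.exp (-τ) with hl
  have hl0 : 0 < l := Real.exp_pos _
  have S' := S.scale hl0
  have hmem : T / l - 1 ∈ Set.Ico 0 (T / l) := ⟨by linarith, by linarith⟩
  have hB : ∀ k, Bb N m (T / l) k x (T / l - 1) = BbTil N m k x := fun k => by
    rw [BbTil_eq, sub_eq_add_neg, Bb_shift]
  rw [rescaleSol_eq h, ← hl]
  rcases le_total R ‖x‖ with hx | hx
  · -- both functions lie between zero and a small tail
    have e1 := S'.pos x hmem
    have e2 := (S'.hi x _ hmem).trans (Bb_anti h hkm (min_le_left k₂ k₀) hmem.2 x)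
    have e3 := Bb_pos h hk0 hmem.2 x
    have e4 := Bb_anti h hkm (min_le_right k₂ k₀) hmem.2 x
    have e5 := hR x hx
    rw [hB] at e2 e3 e4
    rw [hB] at e4
    rw [Real.dist_eq, abs_lt]
    constructor <;> linarith
  · have hf' : Integrable fun x => l ^ (-(N * bC N m)) * f (l ^ (-bC N m) • x) :=
      (hf.comp_smul (Real.rpow_pos_of_pos hl0 _).ne').const_mul _
    have hdec' : ∀ x, scl N m l u x 0
        = Bb N m (T / l) k₀ x 0 + l ^ (-(N * bC N m)) * f (l ^ (-bC N m) • x) := by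
      intro x
      rw [← scl_Bb h hk0 hl0 x S'.T0]
      unfold scl
      rw [mul_zero, hdec, mul_add]
    have e1 := hτ _ _ S' hf' (scl_L1 f hl0).le hdec' x hx
    obtain ⟨κ, hκ1, -, e2⟩ := S'.diff_pow hk0 x hmem
    rw [← BbTil_eq, ← hB, e2, abs_mul, sub_sub_cancel, Real.one_rpow, mul_one, div_one] at e1
    have hκ : 0 < κ := hkm.trans_le hκ1
    have e3 : c ≤ |bC N m * ((1 - m) / 2) * (κ + ‖x‖ ^ 2)| := by
      rw [abs_of_pos (by positivity), hc]
      refine mul_le_mul_of_nonneg_left ?_ (by positivity)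
      linarith [sq_nonneg ‖x‖]
    have e4 : c * |scl N m l u x (T / l - 1) - Bb N m (T / l) k₀ x (T / l - 1)| ≤ c * (ε / 2) :=
      (mul_le_mul_of_nonneg_right e3 (abs_nonneg _)).trans e1
    have e5 := le_of_mul_le_mul_left e4 hc0
    rw [hB] at e5
    rw [dist_comm, Real.dist_eq]
    linarith

/-- The bounds extend to the initial time by continuity. -/
lemma Trapped.of_sol {u₀ : Euc N → ℝ} (hN : 4 < N) (hm0 : 0 < m)
    (hmu : m ≤ ((N : ℝ) - 4) / ((N : ℝ) - 2)) (hT : 0 < T) (hk1 : 0 < k₁) (hk2 : 0 < k₂)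
    (hsol : IsFDESol N m T u u₀)
    (htrap : ∀ x : Euc N, ∀ t ∈ Set.Ioo (0 : ℝ) T,
      Bb N m T k₁ x t ≤ u x t ∧ u x t ≤ Bb N m T k₂ x t) : Trapped N m T k₁ k₂ u := by
  have h : Par N m := ⟨hN, hm0, hmu⟩
  obtain ⟨-, hs, hc, -, hp⟩ := hsol
  have hs2 : STSmooth u (Set.Ioo 0 T) := contDiffOn_infty.1 hs 2
  have hcl : ∀ t ∈ Set.Ico (0 : ℝ) T, t ∈ closure (Set.Ioo 0 T) := fun t ht => by
    rw [closure_Ioo hT.ne]; exact ⟨ht.1, ht.2.le⟩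
  have cu : ∀ x, ∀ t ∈ Set.Ico (0 : ℝ) T, ContinuousWithinAt (fun s => u x s) (Set.Ioo 0 T) t := by
    intro x t ht
    have : ContinuousOn (fun s => u x s) (Set.Ico 0 T) :=
      hc.comp (f := fun s : ℝ => (x, s)) (by fun_prop) fun s hs => ⟨trivial, hs⟩
    exact (this t ht).mono Set.Ioo_subset_Ico_self
  have cB : ∀ k, 0 < k → ∀ x, ∀ t ∈ Set.Ico (0 : ℝ) T,
      ContinuousWithinAt (fun s => Bb N m T k x s) (Set.Ioo 0 T) t := fun k hk x t ht =>
    ((Bb_smooth h hk).hasDeriv isOpen_Iio x ht.2).continuousAt.continuousWithinAt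
  refine ⟨h, hT, hk1, hk2, hs2, hc, fun x t ht => ?_, fun x t ht => ?_, fun x t ht => ?_⟩
  · rw [← hp x t ht]
    exact hs2.hasDeriv isOpen_Ioo x ht
  · exact (cB k₁ hk1 x t ht).closure_le (hcl t ht) (cu x t ht) fun s hs' => (htrap x s hs').1
  · exact (cu x t ht).closure_le (hcl t ht) (cB k₂ hk2 x t ht) fun s hs' => (htrap x s hs').2

end scaling

/-- In the non-integrable range 0 < m ≤ (N-4)/(N-2), N > 4, a solution trapped
between two Barenblatt solutions whose initial value differs from B_{k₀}(·,0) by an L¹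
function converges after rescaling, uniformly on ℝ^N, to B̃_{k₀}. -/
theorem extinction_profile_nonintegrable_case (N : ℕ) (hN : 4 < N) (m T k₁ k₂ k₀ : ℝ)
    (hm0 : 0 < m) (hmu : m ≤ ((N : ℝ) - 4) / ((N : ℝ) - 2))
    (hT : 0 < T) (hk2 : 0 < k₂) (hk12 : k₂ < k₁) (hk0 : 0 < k₀)
    (u : Euc N → ℝ → ℝ) (u₀ : Euc N → ℝ) (f : Euc N → ℝ)
    (hsol : IsFDESol N m T u u₀)
    (htrap0 : ∀ x : Euc N,
      (Cst N m * T / (k₁ + ‖x‖ ^ 2)) ^ (1 / (1 - m)) ≤ u₀ x ∧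
        u₀ x ≤ (Cst N m * T / (k₂ + ‖x‖ ^ 2)) ^ (1 / (1 - m)))
    (htrap : ∀ x : Euc N, ∀ t ∈ Set.Ioo (0:ℝ) T,
      Bb N m T k₁ x t ≤ u x t ∧ u x t ≤ Bb N m T k₂ x t)
    (hf : Integrable f volume)
    (hdecomp : ∀ x, u₀ x = Bb N m T k₀ x 0 + f x) :
    TendstoUniformly (fun τ (x : Euc N) => rescaleSol N m T u x τ)
      (BbTil N m k₀) atTop := by
  have S : Trapped N m T k₁ k₂ u :=
    Trapped.of_sol hN hm0 hmu hT (hk2.trans hk12) hk2 hsol htrap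
  exact S.tendsto hk0 hf fun x => by rw [hsol.2.2.2.1 x, hdecomp x]
end
end

section
/- Let N > 4 and 0 < m ≤ (N-4)/(N-2). For any k, k' > 0, the difference of rescaled Barenblatt profiles B̃_k - B̃_{k'} belongs to L¹(ℝ^N) if and only if k = k'. -/
/-!
Put `p = 1 / (1 - m)`. The bound on `m` says exactly that `1 < p ≤ (N - 2) / 2`. For `k < k'`,
Bernoulli's inequality applied to the ratio
`(k' + r²) / (k + r²) = 1 + (k' - k) / (k + r²)` bounds the difference of the two profiles at
radius `r` from below by `(C* / (k' + r²)) ^ p * (k' - k) / (k + r²)`, which for `r ≥ 1` is at least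
a positive constant times `r ^ (-2p - 2)`, hence times `r ^ (-N)`
(`profile_sub_lower_bound`). In polar coordinates the radial integrand `r ^ (N - 1) * (difference)`
is therefore at least a multiple of `1 / r` near infinity, which is not integrable
(`not_integrable_of_lt`).
-/

open MeasureTheory Real Filter Topology RealInnerProductSpace

noncomputable section

/-- The quantitative tail bound: if `p ≤ (N - 2) / 2`, two profiles differ by at least a constant
multiple of the borderline non-integrable power `r ^ (-N)`. -/
lemma profile_sub_lower_bound {N : ℕ} {p C k k' r : ℝ} (hC : 0 < C) (hk : 0 < k) (hkk : k < k')
    (hp1 : 1 ≤ p) (hpN : 2 * p + 2 ≤ N) (hr : 1 < r) :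
    (C / (1 + k')) ^ p * ((k' - k) / (1 + k')) / r ^ N ≤
      (C / (k + r ^ 2)) ^ p - (C / (k' + r ^ 2)) ^ p := by
  have hr0 : 0 < r := by linarith
  have hr2 : 1 < r ^ 2 := by nlinarith
  have hk' : 0 < k' := by linarith
  have hd : 0 < k' - k := by linarith
  set s := (k' - k) / (k + r ^ 2) with hs
  have hs0 : 0 < s := by positivity
  have hratio : C / (k + r ^ 2) = C / (k' + r ^ 2) * (1 + s) := by
    rw [hs]; field_simp; ring
  have hbern : 1 + s ≤ (1 + s) ^ p := by
    have := one_add_mul_self_le_rpow_one_add (s := s) (by linarith) hp1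
    nlinarith
  rw [hratio, mul_rpow (by positivity) (by positivity)]
  have hu : 0 < (C / (k' + r ^ 2)) ^ p := by positivity
  have h1 : (C / (1 + k')) ^ p / (r ^ 2) ^ p ≤ (C / (k' + r ^ 2)) ^ p := by
    rw [← div_rpow (by positivity) (by positivity)]
    apply rpow_le_rpow (by positivity) _ (by linarith)
    rw [div_div]
    apply div_le_div_of_nonneg_left hC.le (by positivity)
    nlinarith
  have h2 : (k' - k) / (1 + k') / r ^ 2 ≤ s := by
    rw [hs, div_div]
    apply div_le_div_of_nonneg_left hd.le (by positivity)
    nlinarith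
  have h3 : (r ^ 2) ^ p * r ^ 2 ≤ r ^ N := by
    have e : (r ^ 2) ^ p * r ^ 2 = r ^ (2 * p + 2) := by
      rw [rpow_add hr0, rpow_mul hr0.le, rpow_two]
    rw [e, ← rpow_natCast]
    exact rpow_le_rpow_of_exponent_le hr.le hpN
  calc (C / (1 + k')) ^ p * ((k' - k) / (1 + k')) / r ^ N
      ≤ (C / (1 + k')) ^ p * ((k' - k) / (1 + k')) / ((r ^ 2) ^ p * r ^ 2) :=
        div_le_div_of_nonneg_left (by positivity) (by positivity) h3
    _ = ((C / (1 + k')) ^ p / (r ^ 2) ^ p) * ((k' - k) / (1 + k') / r ^ 2) := by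
        rw [mul_div_mul_comm]
    _ ≤ (C / (k' + r ^ 2)) ^ p * s := mul_le_mul h1 h2 (by positivity) hu.le
    _ ≤ _ := by nlinarith

lemma not_integrable_of_lt {N : ℕ} (hN : 4 < N) {m : ℝ}
    (hm0 : 0 < m) (hmu : m ≤ ((N : ℝ) - 4) / ((N : ℝ) - 2))
    {k k' : ℝ} (hk : 0 < k) (hkk : k < k') :
    ¬ Integrable (fun x : Euc N => BbTil N m k x - BbTil N m k' x) volume := by
  intro hint
  have hN' : (4 : ℝ) < N := by exact_mod_cast hN
  have : Nonempty (Fin N) := ⟨⟨0, by omega⟩⟩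
  have hmul : m * (N - 2) ≤ N - 4 := by rwa [le_div_iff₀ (by linarith)] at hmu
  have hm1 : 0 < 1 - m := by nlinarith
  have hC : 0 < Cst N m := by
    unfold Cst
    have : 0 < (N : ℝ) - 2 - m * N := by nlinarith
    positivity
  have hp1 : 1 ≤ 1 / (1 - m) := by rw [le_div_iff₀ hm1]; linarith
  have hpN : 2 * (1 / (1 - m)) + 2 ≤ N := by
    have : 1 / (1 - m) ≤ ((N : ℝ) - 2) / 2 := by
      rw [div_le_iff₀ hm1]; nlinarith
    linarith
  have hk' : 0 < k' := hk.trans hkk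
  set p := 1 / (1 - m) with hp
  set C := Cst N m with hCdef
  set A := (C / (1 + k')) ^ p * ((k' - k) / (1 + k')) with hA
  have hA0 : 0 < A := by
    have : 0 < k' - k := by linarith
    positivity
  have hrad := (integrable_fun_norm_addHaar (volume : Measure (Euc N))
    (f := fun r : ℝ => (C / (k + r ^ 2)) ^ p - (C / (k' + r ^ 2)) ^ p)).1 hint
  rw [finrank_euclideanSpace, Fintype.card_fin] at hrad
  have htail := hrad.mono_set (Set.Ioi_subset_Ioi (zero_le_one (α := ℝ)))
  have hdom : IntegrableOn (fun r : ℝ => A * r ^ (-1 : ℝ)) (Set.Ioi 1) := by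
    refine Integrable.mono' htail (by fun_prop) ?_
    filter_upwards [ae_restrict_mem measurableSet_Ioi] with r hr
    have hr1 : 1 < r := hr
    have hr0 : 0 < r := by linarith
    have hb := profile_sub_lower_bound hC hk hkk hp1 hpN hr1
    have hpow : r ^ N = r ^ (N - 1) * r := by
      rw [← pow_succ, Nat.sub_add_cancel (by omega)]
    rw [Real.norm_of_nonneg (by positivity), smul_eq_mul, rpow_neg_one]
    calc A * r⁻¹ = r ^ (N - 1) * (A / r ^ N) := by rw [hpow]; field_simp
      _ ≤ _ := mul_le_mul_of_nonneg_left hb (by positivity)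
  have hinv : IntegrableOn (fun r : ℝ => r ^ (-1 : ℝ)) (Set.Ioi 1) := by
    have := hdom.const_mul A⁻¹
    simpa [IntegrableOn, ← mul_assoc, inv_mul_cancel₀ hA0.ne'] using this
  exact lt_irrefl _ ((integrableOn_Ioi_rpow_iff one_pos).1 hinv)

/-- For N > 4 and 0 < m ≤ (N-4)/(N-2), the difference of two rescaled
Barenblatt profiles B̃_k - B̃_{k'} is in L¹(ℝ^N) if and only if k = k'. -/
theorem barenblatt_difference_integrable_iff (N : ℕ) (hN : 4 < N) (m : ℝ)
    (hm0 : 0 < m) (hmu : m ≤ ((N : ℝ) - 4) / ((N : ℝ) - 2))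
    (k k' : ℝ) (hk : 0 < k) (hk' : 0 < k') :
    Integrable (fun x : Euc N => BbTil N m k x - BbTil N m k' x) volume ↔ k = k' := by
  constructor
  · intro h
    rcases lt_trichotomy k k' with hlt | heq | hgt
    · exact absurd h (not_integrable_of_lt hN hm0 hmu hk hlt)
    · exact heq
    · refine absurd ?_ (not_integrable_of_lt hN hm0 hmu hk' hgt)
      simpa [Pi.neg_def] using h.neg
  · rintro rfl
    simp
end
end
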